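/- Let D be a non-trivial, non-symmetric 2-(v,k,3) design with 3 dividing r, admitting a flag-transitive, point-primitive automorphism group G that is almost simple with socle X = PSL(2,q), where X acts point-primitively on D with point stabilizer X_α maximal in X. Then X_α is not a dihedral subgroup D_{2(q+1)/gcd(2,q−1)} of order 2(q+1)/gcd(2,q−1); that is, the case v = q(q−1)/2 with X_α the normalizer of a maximal nonsplit torus does not occur. -/

import Mathlib

/-!
The argument uses no classification of subgroups: all information comes from the involutions of the
socle `X`, their fixed points, and the fact that a `G_α`-invariant set of points avoiding `α` meets
all blocks through `α` in the same number of points, so that `r / 3` divides its size. Put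
`n = (q + 1) / gcd (2, q - 1)`, so that the point stabilizers in `X` are dihedral of order `2 * n`.

* `q ≡ 1 (mod 4)`. Each involution fixes several points, and the points sharing a fixing involution
  with `α` form an invariant set, whose size shows that `r / 3` divides `n`. This forces `k = q - 1`
  and `r = 3 * n`, so that `2 * b = 3 * q * n` would be odd.

* `q ≡ 3 (mod 4)`. The points correspond to the involutions of `X`. The three sets of points at
  distance one, two, and at least three from `α` in the commuting graph of the involutions are
  invariant; again `k = q - 1` and `r = 3 * n`, the intersection numbers of a block with these sets
  are known, and the involution of `α` fixes every block through `α`. Hence a block containing the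
  points of the antidiagonal involutions with upper right entries `1` and a primitive root contains
  the points of all antidiagonal involutions. Apart from that of entry `1` these are exactly its
  points at distance at least three from the point of entry `1`, so the involution of its one point
  at distance one permutes them, which a matrix computation excludes.

* `q = 2 ^ f`. Let `x` be an involution fixing a flag `(α, B)`, let `c` be the number of blocks
  through `α` fixed by `x`, and `t` the number of involutions of `X_{αB}`. Then
  `r * t = (q + 1) * c` and `c * (k - 1) = 3 * (q / 2 - 1) * t`, and `c ≤ f` because `G` induces at
  most `f` field automorphisms. As `k ∣ v * r`, it follows that
  `k ∣ c * (6 * t - 2 * c) * (3 * t - 2 * c) * (9 * t - 2 * c)`, which bounds `f` unless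
  `c = 3 * t`. If `c = 3 * t`, then all the fixed blocks through `α` equal `Fix x`, which is absurd.
  Otherwise a finite search leaves `(q, k) = (32, 10)` and `(128, 28)`, where the fixed blocks of
  `x` induce on `Fix x` a `2`-design violating Fisher's inequality.
-/

open scoped Pointwise
open Matrix

namespace FT

variable {Pt : Type*}

/-- `IsDesign 𝓑 k lam` says that the family `𝓑` of subsets of the point set `Pt` is the
block set of a `2-(v, k, lam)` design: every block has `k` points and any two distinct
points lie on exactly `lam` common blocks. -/
structure IsDesign (𝓑 : Set (Set Pt)) (k lam : ℕ) : Prop where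
  block_card : ∀ B ∈ 𝓑, Nat.card B = k
  pair_count : ∀ x y : Pt, x ≠ y → Nat.card {B : Set Pt | B ∈ 𝓑 ∧ x ∈ B ∧ y ∈ B} = lam

/-- The group `G` acts on the design with point set `Pt` and block set `𝓑` as a group of
automorphisms. -/
def ActsOn (G : Type*) [Group G] [MulAction G Pt] (𝓑 : Set (Set Pt)) : Prop :=
  ∀ (g : G), ∀ B ∈ 𝓑, g • B ∈ 𝓑

/-- The group `G` is transitive on the flags (incident point-block pairs) of the design. -/
def FlagTransitive (G : Type*) [Group G] [MulAction G Pt] (𝓑 : Set (Set Pt)) : Prop :=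
  ∀ B ∈ 𝓑, ∀ C ∈ 𝓑, ∀ x ∈ B, ∀ y ∈ C, ∃ g : G, g • B = C ∧ g • x = y

/-- The action of `G` on `Pt` is primitive: it is transitive and every block of
imprimitivity is trivial. -/
def PointPrimitive (G : Type*) [Group G] (Pt : Type*) [MulAction G Pt] : Prop :=
  MulAction.IsPretransitive G Pt ∧
    ∀ s : Set Pt, MulAction.IsBlock G s → s.Subsingleton ∨ s = Set.univ

/-- The number of blocks of `𝓑` through the point `x` (the replication number, for a
flag-transitive design). -/
noncomputable def repNum (𝓑 : Set (Set Pt)) (x : Pt) : ℕ :=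
  Nat.card {B : Set Pt | B ∈ 𝓑 ∧ x ∈ B}

/-- The projective general linear group `PGL(2,K)`, as the quotient of `GL(2,K)` by its
center. -/
abbrev PGL2 (K : Type*) [Field K] :=
  GL (Fin 2) K ⧸ Subgroup.center (GL (Fin 2) K)

/-- The projective special linear group `PSL(2,K)`. -/
abbrev PSL2 (K : Type*) [Field K] := Matrix.ProjectiveSpecialLinearGroup (Fin 2) K

end FT

open FT

open scoped MatrixGroups

namespace PSL2Design

/-! ### The group `SL(2, F)` -/

section SL2

variable {F : Type*} [Field F]

/-- The element of `SL(2, F)` with the given entries, listed row by row. -/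
def ofEntries (a b c d : F) (h : a * d - b * c = 1) : SL(2, F) :=
  ⟨!![a, b; c, d], by rwa [det_fin_two_of]⟩

section Entries

variable (a b c d : F) (h : a * d - b * c = 1)

@[simp] lemma ofEntries_zero_zero : ofEntries a b c d h 0 0 = a := rfl
@[simp] lemma ofEntries_zero_one : ofEntries a b c d h 0 1 = b := rfl
@[simp] lemma ofEntries_one_zero : ofEntries a b c d h 1 0 = c := rfl
@[simp] lemma ofEntries_one_one : ofEntries a b c d h 1 1 = d := rfl

end Entries

lemma entries_ext_iff {A B : SL(2, F)} :
    A = B ↔ A 0 0 = B 0 0 ∧ A 0 1 = B 0 1 ∧ A 1 0 = B 1 0 ∧ A 1 1 = B 1 1 := by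
  simp only [Matrix.SpecialLinearGroup.ext_iff, Fin.forall_fin_two, and_assoc]

lemma entries_det (A : SL(2, F)) : A 0 0 * A 1 1 - A 0 1 * A 1 0 = 1 := by
  rw [← det_fin_two, A.det_coe]

@[simp] lemma mul_entry (A B : SL(2, F)) (i j : Fin 2) :
    (A * B) i j = A i 0 * B 0 j + A i 1 * B 1 j := by
  rw [Matrix.SpecialLinearGroup.coe_mul, mul_apply, Fin.sum_univ_two]

@[simp] lemma neg_entry (A : SL(2, F)) (i j : Fin 2) : (-A) i j = -A i j := rfl

lemma neg_eq_self_of_two_eq_zero (h2 : (2 : F) = 0) (A : SL(2, F)) : -A = A := by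
  ext i j
  rw [neg_entry]
  linear_combination -A i j * h2

lemma neg_ne_self_of_two_ne_zero (h2 : (2 : F) ≠ 0) (A : SL(2, F)) : -A ≠ A := by
  intro h
  have hzero (j : Fin 2) : A 0 j = 0 := by
    have hj : -A 0 j = A 0 j := congrArg (fun B : SL(2, F) => B 0 j) h
    exact (mul_eq_zero.1 (by linear_combination -hj : 2 * A 0 j = 0)).resolve_left h2
  simpa [hzero 0, hzero 1] using entries_det A

lemma eq_one_or_eq_neg_one_of_eq_smul_one {A : SL(2, F)} {c : F} (h : A.1 = c • 1) :
    A = 1 ∨ A = -1 := by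
  have hc : c = 1 ∨ c = -1 := by
    rw [← sq_eq_one_iff]
    simpa [h] using A.det_coe
  rcases hc with rfl | rfl
  · exact .inl (Subtype.ext (by simpa using h))
  · exact .inr (Subtype.ext (by simpa using h))

/-- A non-scalar `2 × 2` matrix is cyclic, so its commutant consists of the polynomials in it. -/
lemma exists_eq_add_smul_of_commute {A B : Matrix (Fin 2) (Fin 2) F} (hA : ∀ c : F, A ≠ c • 1)
    (hAB : Commute A B) : ∃ x y : F, B = x • 1 + y • A := by
  have hentry := fun i j => congrFun (congrFun hAB.eq i) j
  simp only [mul_apply, Fin.sum_univ_two, Fin.forall_fin_two] at hentry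
  obtain ⟨⟨h00, h01⟩, h10, -⟩ := hentry
  suffices h : ∃ y, B 0 1 = y * A 0 1 ∧ B 1 0 = y * A 1 0 ∧
      B 0 0 - B 1 1 = y * (A 0 0 - A 1 1) by
    obtain ⟨y, hy01, hy10, hyd⟩ := h
    refine ⟨B 0 0 - y * A 0 0, y, ?_⟩
    ext i j
    fin_cases i <;> fin_cases j <;>
      simp [hy01, hy10]; linear_combination -hyd
  by_cases ha : A 0 1 = 0
  · by_cases hb : A 1 0 = 0
    · have hd : A 0 0 - A 1 1 ≠ 0 := fun hd => hA (A 0 0) <| by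
        ext i j
        fin_cases i <;> fin_cases j <;> simp [ha, hb, (sub_eq_zero.1 hd).symm]
      refine ⟨(B 0 0 - B 1 1) / (A 0 0 - A 1 1), ?_, ?_, by field_simp⟩ <;> grind
    · refine ⟨B 1 0 / A 1 0, ?_, by field_simp, ?_⟩ <;> field_simp <;> grind
  · refine ⟨B 0 1 / A 0 1, by field_simp, ?_, ?_⟩ <;> field_simp <;> grind

lemma commute_of_commute_left {A B C : SL(2, F)} (hA1 : A ≠ 1) (hA2 : A ≠ -1)
    (hAB : Commute A B) (hAC : Commute A C) : Commute B C := by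
  have hA (c : F) : A.1 ≠ c • 1 := fun h =>
    (eq_one_or_eq_neg_one_of_eq_smul_one h).elim hA1 hA2
  obtain ⟨x, y, hB⟩ := exists_eq_add_smul_of_commute hA (congrArg Subtype.val hAB.eq)
  obtain ⟨z, w, hC⟩ := exists_eq_add_smul_of_commute hA (congrArg Subtype.val hAC.eq)
  have hBC : Commute B.1 C.1 := by
    rw [hB, hC]
    exact (((Commute.one_left _).smul_left x).add_left
      (((Commute.one_right _).smul_right z).add_right
        (((Commute.refl _).smul_right w)) |>.smul_left y))
  exact Subtype.ext hBC.eq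

lemma mul_self_eq_trace_smul_sub_one (A : SL(2, F)) : A.1 * A.1 = A.1.trace • A.1 - 1 := by
  have h := aeval_self_charpoly A.1
  simp only [charpoly_fin_two, A.det_coe, map_add, map_sub, map_mul, map_pow, Polynomial.aeval_X,
    Polynomial.aeval_C, Algebra.algebraMap_eq_smul_one, smul_one_mul, one_smul] at h
  rw [← sq, ← sub_eq_zero, ← h]
  abel

lemma mul_self_eq_neg_one_iff_trace_eq_zero {A : SL(2, F)} : A * A = -1 ↔ A.1.trace = 0 := by
  have hne : A.1 ≠ 0 := fun h => by simpa [h] using A.det_coe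
  have hcoe : A * A = -1 ↔ A.1 * A.1 = -1 := ⟨congrArg Subtype.val, fun h => Subtype.ext h⟩
  rw [hcoe, mul_self_eq_trace_smul_sub_one, sub_eq_neg_self, smul_eq_zero, or_iff_left hne]

lemma eq_one_or_eq_neg_one_or_trace_eq_zero_of_mul_self_eq_one {A : SL(2, F)} (h : A * A = 1) :
    A = 1 ∨ A = -1 ∨ A.1.trace = 0 := by
  by_cases ht : A.1.trace = 0
  · exact .inr (.inr ht)
  have hscalar : A.1.trace • A.1 = (2 : F) • 1 := by
    have hsq : A.1 * A.1 = 1 := congrArg Subtype.val h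
    rw [two_smul, ← sub_eq_iff_eq_add, ← mul_self_eq_trace_smul_sub_one, hsq]
  rw [← or_assoc]
  refine .inl (eq_one_or_eq_neg_one_of_eq_smul_one (c := A.1.trace⁻¹ * 2) ?_)
  rw [mul_smul, ← hscalar, inv_smul_smul₀ ht]

lemma trace_eq_zero_of_mul_eq_neg_mul {A B : SL(2, F)} (h2 : (2 : F) ≠ 0)
    (h : A * B = -(B * A)) : A.1.trace = 0 := by
  have hconj : A = -(B * A * B⁻¹) := by rw [← neg_mul, ← h, mul_inv_cancel_right]
  have htrace : A.1.trace = -A.1.trace := by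
    conv_lhs => rw [hconj]
    rw [Matrix.SpecialLinearGroup.coe_neg, trace_neg, Matrix.SpecialLinearGroup.coe_mul,
      trace_mul_comm, ← Matrix.SpecialLinearGroup.coe_mul, inv_mul_cancel_left]
  exact (mul_eq_zero.1 (by linear_combination htrace : 2 * A.1.trace = 0)).resolve_left h2

/-- The Weyl element of `SL(2, F)`, a representative of the elements of trace zero. -/
def weyl : SL(2, F) := ofEntries 0 (-1) 1 0 (by ring)

lemma exists_sq_add_sq_eq [Finite F] (c : F) : ∃ s t : F, s ^ 2 + t ^ 2 = c := by
  cases nonempty_fintype F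
  by_cases hchar : ringChar F = 2
  · obtain ⟨s, rfl⟩ := FiniteField.isSquare_of_char_two hchar c
    exact ⟨s, 0, by ring⟩
  · obtain ⟨s, t, hst⟩ := FiniteField.exists_root_sum_quadratic
      (f := (Polynomial.X ^ 2 : Polynomial F)) (g := Polynomial.X ^ 2 - Polynomial.C c)
      (Polynomial.degree_X_pow 2) (Polynomial.degree_X_pow_sub_C two_pos _)
      (FiniteField.odd_card_of_char_ne_two hchar)
    simp only [Polynomial.eval_pow, Polynomial.eval_X, Polynomial.eval_sub,
      Polynomial.eval_C] at hst
    exact ⟨s, t, by linear_combination hst⟩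

/-- A cyclic vector of `A`: the form `(x, y) ↦ det (v | A v)`, `v = (x, y)`, is nonzero. -/
lemma exists_cyclic_form_ne_zero {A : SL(2, F)} (hA1 : A ≠ 1) (hA2 : A ≠ -1) :
    ∃ x y : F, x * (A 1 0 * x + A 1 1 * y) - (A 0 0 * x + A 0 1 * y) * y ≠ 0 := by
  by_contra! h
  have h10 : A 1 0 = 0 := by linear_combination h 1 0
  have h01 : A 0 1 = 0 := by linear_combination -h 0 1
  have hd : A 1 1 = A 0 0 := by linear_combination h 1 1 - h10 + h01
  have hscalar : A.1 = A 0 0 • 1 := by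
    ext i j
    fin_cases i <;> fin_cases j <;> simp [h10, h01, hd]
  exact (eq_one_or_eq_neg_one_of_eq_smul_one hscalar).elim hA1 hA2

/-- A basis `(v | A v)` conjugates `A` to `weyl`; multiplying it by an element `s + t • weyl` of the
centralizer of `weyl`, of determinant `s ^ 2 + t ^ 2`, brings its determinant to `1`. -/
lemma exists_mul_eq_mul_weyl [Finite F] {A : SL(2, F)} (hA1 : A ≠ 1) (hA2 : A ≠ -1)
    (ht : A.1.trace = 0) : ∃ P : SL(2, F), A * P = P * weyl := by
  obtain ⟨x, y, hxy⟩ := exists_cyclic_form_ne_zero hA1 hA2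
  set z := A 0 0 * x + A 0 1 * y with hz
  set w := A 1 0 * x + A 1 1 * y with hw
  obtain ⟨s, t, hst⟩ := exists_sq_add_sq_eq (x * w - z * y)⁻¹
  have hdet := entries_det A
  have htr : A 0 0 + A 1 1 = 0 := by rwa [← trace_fin_two]
  have hAz : A 0 0 * z + A 0 1 * w = -x := by
    linear_combination z * htr - x * hdet + (-A 1 1) * hz + A 0 1 * hw
  have hAw : A 1 0 * z + A 1 1 * w = -y := by
    linear_combination w * htr - y * hdet + A 1 0 * hz + (-A 0 0) * hw
  refine ⟨ofEntries (s * x + t * z) (s * z - t * x) (s * y + t * w) (s * w - t * y) ?_, ?_⟩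
  · calc (s * x + t * z) * (s * w - t * y) - (s * z - t * x) * (s * y + t * w)
        = (x * w - z * y) * (s ^ 2 + t ^ 2) := by ring
      _ = 1 := by rw [hst, mul_inv_cancel₀ hxy]
  · rw [entries_ext_iff]
    simp only [mul_entry, ofEntries_zero_zero, ofEntries_zero_one, ofEntries_one_zero,
      ofEntries_one_one, weyl]
    refine ⟨?_, ?_, ?_, ?_⟩
    · linear_combination t * hAz - s * hz
    · linear_combination s * hAz + t * hz
    · linear_combination t * hAw - s * hw
    · linear_combination s * hAw + t * hw

section Counting

variable [Fintype F]

lemma card_SL2 :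
    Nat.card SL(2, F) = Fintype.card F * (Fintype.card F - 1) * (Fintype.card F + 1) := by
  classical
  let f : (Fˣ × F × F) ⊕ (Fˣ × F) → SL(2, F) := Sum.elim
    (fun p => ofEntries p.1 p.2.1 p.2.2 ((1 + p.2.1 * p.2.2) * (p.1 : F)⁻¹) (by
      have := p.1.ne_zero; field_simp; ring))
    (fun p => ofEntries 0 (-(p.1 : F)⁻¹) p.1 p.2 (by have := p.1.ne_zero; field_simp; ring))
  have hinj : f.Injective := by
    rintro (⟨a, b, c⟩ | ⟨c, d⟩) (⟨a', b', c'⟩ | ⟨c', d'⟩) h <;>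
      simp only [f, entries_ext_iff, Sum.elim_inl, Sum.elim_inr, ofEntries_zero_zero,
        ofEntries_zero_one, ofEntries_one_zero, ofEntries_one_one] at h
    · simp [Units.ext_iff, h.1, h.2.1, h.2.2.1]
    · exact absurd h.1 a.ne_zero
    · exact absurd h.1.symm a'.ne_zero
    · simp [Units.ext_iff, h.2.2.1, h.2.2.2]
  have hsurj : f.Surjective := by
    intro A
    have hdet := entries_det A
    by_cases h : A 0 0 = 0
    · have hc : A 1 0 ≠ 0 := fun hc => by simp [h, hc] at hdet
      refine ⟨.inr (.mk0 _ hc, A 1 1), entries_ext_iff.2 ⟨h.symm, ?_, rfl, rfl⟩⟩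
      change -(A 1 0)⁻¹ = A 0 1
      field_simp
      linear_combination hdet - A 1 1 * h
    · refine ⟨.inl (.mk0 _ h, A 0 1, A 1 0), entries_ext_iff.2 ⟨rfl, rfl, rfl, ?_⟩⟩
      change (1 + A 0 1 * A 1 0) * (A 0 0)⁻¹ = A 1 1
      field_simp
      linear_combination -hdet
  rw [← Nat.card_eq_of_bijective f ⟨hinj, hsurj⟩, Nat.card_eq_fintype_card]
  simp only [Fintype.card_sum, Fintype.card_prod, Fintype.card_units]
  ring

lemma card_trace_eq_zero : Nat.card {A : SL(2, F) // A.1.trace = 0} =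
    Fintype.card F * (Fintype.card F - 1) + Nat.card {a : F // a ^ 2 = -1} * Fintype.card F := by
  classical
  let f : (F × Fˣ) ⊕ ({a : F // a ^ 2 = -1} × F) → {A : SL(2, F) // A.1.trace = 0} := Sum.elim
    (fun p => ⟨ofEntries p.1 p.2 (-(1 + p.1 ^ 2) * (p.2 : F)⁻¹) (-p.1) (by
      have := p.2.ne_zero; field_simp; ring), by simp [trace_fin_two]⟩)
    (fun p => ⟨ofEntries p.1 0 p.2 (-p.1) (by linear_combination -p.1.2),
      by simp [trace_fin_two]⟩)
  have hinj : f.Injective := by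
    rintro (⟨a, b⟩ | ⟨a, c⟩) (⟨a', b'⟩ | ⟨a', c'⟩) h <;>
      simp only [f, Subtype.mk.injEq, entries_ext_iff, Sum.elim_inl, Sum.elim_inr,
        ofEntries_zero_zero, ofEntries_zero_one, ofEntries_one_zero] at h
    · simp [Units.ext_iff, h.1, h.2.1]
    · exact absurd h.2.1 b.ne_zero
    · exact absurd h.2.1.symm b'.ne_zero
    · simp [Subtype.ext_iff, h.1, h.2.2.1]
  have hsurj : f.Surjective := by
    rintro ⟨A, ht⟩
    have hdet := entries_det A
    have hdiag : -A 0 0 = A 1 1 := by linear_combination -(trace_fin_two A.1).symm.trans ht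
    rw [← hdiag] at hdet
    by_cases h : A 0 1 = 0
    · refine ⟨.inr (⟨A 0 0, by linear_combination -hdet - A 1 0 * h⟩, A 1 0), Subtype.ext ?_⟩
      exact entries_ext_iff.2 ⟨rfl, h.symm, rfl, hdiag⟩
    · refine ⟨.inl (A 0 0, .mk0 _ h), Subtype.ext (entries_ext_iff.2 ⟨rfl, rfl, ?_, hdiag⟩)⟩
      change -(1 + A 0 0 ^ 2) * (A 0 1)⁻¹ = A 1 0
      field_simp
      linear_combination hdet
  rw [← Nat.card_eq_of_bijective f ⟨hinj, hsurj⟩]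
  simp only [Nat.card_eq_fintype_card, Fintype.card_sum, Fintype.card_prod, Fintype.card_units]

end Counting

end SL2

/-! ### Simple groups with dihedral point stabilizers -/

section DoubleCounting

variable {α β : Type*} (R : α → β → Prop) {s : Set α} {t : Set β} {a b : ℕ}

lemma ncard_mul_le_ncard_mul (hs : s.Finite) (ht : t.Finite)
    (ha : ∀ x ∈ s, a ≤ {y ∈ t | R x y}.ncard) (hb : ∀ y ∈ t, {x ∈ s | R x y}.ncard ≤ b) :
    s.ncard * a ≤ t.ncard * b := by
  classical
  lift s to Finset α using hs
  lift t to Finset β using ht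
  simp only [Finset.mem_coe, ← Finset.coe_filter, Set.ncard_coe_finset] at ha hb ⊢
  exact Finset.card_mul_le_card_mul R ha hb

lemma ncard_mul_eq_ncard_mul (hs : s.Finite) (ht : t.Finite)
    (ha : ∀ x ∈ s, {y ∈ t | R x y}.ncard = a) (hb : ∀ y ∈ t, {x ∈ s | R x y}.ncard = b) :
    s.ncard * a = t.ncard * b :=
  (ncard_mul_le_ncard_mul R hs ht (fun x hx => (ha x hx).ge) fun y hy => (hb y hy).le).antisymm
    (ncard_mul_le_ncard_mul (fun y x => R x y) ht hs (fun y hy => (hb y hy).ge)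
      fun x hx => (ha x hx).le)

end DoubleCounting

section Group

variable {G : Type*} [Group G]

lemma mem_normalizer_centralizer_of_conj {x g : G}
    (h : g * x * g⁻¹ = x ∨ g * x * g⁻¹ = x⁻¹) :
    g ∈ Subgroup.normalizer (Subgroup.centralizer {x} : Set G) := by
  refine Subgroup.mem_normalizer_iff.2 fun y => ?_
  simp only [Subgroup.mem_centralizer_singleton_iff]
  change Commute y x ↔ Commute (g * y * g⁻¹) x
  rw [← Commute.conj_iff (h := g)]
  rcases h with h | h <;> rw [h]
  exact Commute.inv_right_iff

/-- The involutions of `G` lying in the subgroup `X`. -/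
def involutions (X : Subgroup G) : Set G := {x | x ∈ X ∧ x * x = 1 ∧ x ≠ 1}

lemma inv_eq_self_of_mem_involutions {X : Subgroup G} {x : G} (hx : x ∈ involutions X) :
    x⁻¹ = x :=
  inv_eq_of_mul_eq_one_left hx.2.1

lemma mul_mem_involutions {X : Subgroup G} {x y : G} (hx : x ∈ involutions X)
    (hy : y ∈ involutions X) (hne : x ≠ y) (hxy : Commute x y) : x * y ∈ involutions X := by
  refine ⟨mul_mem hx.1 hy.1, ?_, fun hc => hne ?_⟩
  · rw [hxy.symm.mul_mul_mul_comm, hx.2.1, hy.2.1, one_mul]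
  · rw [eq_inv_of_mul_eq_one_left hc, inv_eq_self_of_mem_involutions hy]

lemma conj_mem_involutions {X : Subgroup G} {x g : G} (hg : g ∈ Subgroup.normalizer (X : Set G))
    (hx : x ∈ involutions X) : g * x * g⁻¹ ∈ involutions X :=
  ⟨(Subgroup.mem_normalizer_iff.1 hg x).1 hx.1, by rw [conj_mul, hx.2.1, mul_one, mul_inv_cancel],
    fun h => hx.2.2 (conj_eq_one_iff.1 h)⟩

variable {Pt : Type*} [MulAction G Pt]

/-- The stabilizer of the point `β` in the subgroup `X` of `G`, as a subgroup of `G`. -/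
def stabIn (X : Subgroup G) (β : Pt) : Subgroup G := X ⊓ MulAction.stabilizer G β

lemma mem_stabIn {X : Subgroup G} {x : G} {β : Pt} : x ∈ stabIn X β ↔ x ∈ X ∧ x • β = β := Iff.rfl

lemma mem_involutions_stabIn {X : Subgroup G} {x : G} {β : Pt} :
    x ∈ involutions (stabIn X β) ↔ x ∈ involutions X ∧ x • β = β := by
  simp only [involutions, Set.mem_ofPred_eq, mem_stabIn]
  tauto

lemma conj_mem_stabIn {X : Subgroup G} {x g : G} {β : Pt}
    (hg : g ∈ Subgroup.normalizer (X : Set G)) (hx : x ∈ stabIn X β) :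
    g * x * g⁻¹ ∈ stabIn X (g • β) := by
  refine mem_stabIn.2 ⟨(Subgroup.mem_normalizer_iff.1 hg x).1 hx.1, ?_⟩
  rw [mul_smul, mul_smul, inv_smul_smul, (mem_stabIn.1 hx).2]

lemma card_orbit_mul_card_stabIn (X : Subgroup G) (β : Pt) :
    (MulAction.orbit X β).ncard * Nat.card (stabIn X β) = Nat.card X := by
  have hstab : Nat.card (stabIn X β) = Nat.card (MulAction.stabilizer X β) :=
    Nat.card_congr ⟨fun g => ⟨⟨g.1, g.2.1⟩, g.2.2⟩, fun g => ⟨g.1.1, g.1.2, g.2⟩,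
      fun _ => rfl, fun _ => rfl⟩
  rw [hstab, ← Nat.card_coe_set_eq, ← Nat.card_prod]
  exact Nat.card_congr (MulAction.orbitProdStabilizerEquivGroup X β)

lemma ncard_fixedBy_conj (g x : G) :
    (MulAction.fixedBy Pt (g * x * g⁻¹)).ncard = (MulAction.fixedBy Pt x).ncard := by
  rw [← MulAction.smul_fixedBy, Set.ncard_smul_set]

end Group

/-- The subgroup `X` of `G` is a non-commutative simple group acting transitively on `Pt`, with
maximal point stabilizers which are dihedral of order `2 * n`. -/
structure IsDihedralAction {G : Type*} [Group G] (X : Subgroup G) (Pt : Type*) [MulAction G Pt]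
    (n : ℕ) : Prop where
  three_le : 3 ≤ n
  transitive : ∀ β γ : Pt, ∃ g ∈ X, g • β = γ
  dihedral : ∀ β : Pt, ∃ e : DihedralGroup n →* G, Function.Injective e ∧ e.range = stabIn X β
  covBy : ∀ β : Pt, stabIn X β ⋖ X
  simple : ∀ H ≤ X, X ≤ Subgroup.normalizer (H : Set G) → H = ⊥ ∨ H = X

namespace IsDihedralAction

variable {G Pt : Type*} [Group G] [MulAction G Pt] {X : Subgroup G} {n : ℕ}

section Stabilizers

lemma exists_not_commute (h : IsDihedralAction X Pt n) (β : Pt) :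
    ∃ x ∈ stabIn X β, ∃ y ∈ stabIn X β, ¬Commute x y := by
  obtain ⟨e, he, her⟩ := h.dihedral β
  refine ⟨e (.r 1), her ▸ ⟨_, rfl⟩, e (.sr 0), her ▸ ⟨_, rfl⟩, fun hc => ?_⟩
  have hsr : (0 - 1 : ZMod n) = 0 + 1 := by
    simpa only [DihedralGroup.r_mul_sr, DihedralGroup.sr_mul_r, DihedralGroup.sr.injEq]
      using he (by rw [map_mul, map_mul, hc.eq] : e (.r 1 * .sr 0) = e (.sr 0 * .r 1))
  have htwo : ((2 : ℕ) : ZMod n) = 0 := by push_cast; linear_combination -hsr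
  have := Nat.le_of_dvd two_pos ((ZMod.natCast_eq_zero_iff 2 n).1 htwo)
  have := h.three_le
  omega

lemma not_le_normalizer_stabIn (h : IsDihedralAction X Pt n) (β : Pt) :
    ¬X ≤ Subgroup.normalizer (stabIn X β : Set G) := by
  intro hX
  rcases h.simple _ (h.covBy β).le hX with hbot | htop
  · obtain ⟨x, hx, y, -, hxy⟩ := h.exists_not_commute β
    rw [hbot, Subgroup.mem_bot] at hx
    exact hxy (hx ▸ Commute.one_left y)
  · exact (h.covBy β).ne htop

lemma stabIn_injective (h : IsDihedralAction X Pt n) :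
    Function.Injective (stabIn X : Pt → Subgroup G) := by
  intro β γ hβγ
  obtain ⟨g, hgX, rfl⟩ := h.transitive β γ
  have hgN : g ∈ X ⊓ Subgroup.normalizer (stabIn X β : Set G) := by
    refine ⟨hgX, Subgroup.mem_normalizer_iff.2 fun x => ⟨fun hx => ?_, fun hx => ?_⟩⟩
    · rw [hβγ]
      exact conj_mem_stabIn (Subgroup.le_normalizer hgX) hx
    · rw [hβγ] at hx
      simpa [mul_assoc] using conj_mem_stabIn (Subgroup.le_normalizer (inv_mem hgX)) hx
  rcases (h.covBy β).eq_or_eq (le_inf inf_le_left Subgroup.le_normalizer) inf_le_left with hN | hN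
  · rw [hN] at hgN
    exact hgN.2.symm
  · exact absurd (inf_eq_left.1 hN) (h.not_le_normalizer_stabIn β)

lemma conj_eq_or_eq_inv (h : IsDihedralAction X Pt n) {β : Pt} {x g : G} (hx : x ∈ stabIn X β)
    (hxx : x * x ≠ 1) (hg : g ∈ stabIn X β) : g * x * g⁻¹ = x ∨ g * x * g⁻¹ = x⁻¹ := by
  obtain ⟨e, he, her⟩ := h.dihedral β
  rw [← her] at hx hg
  obtain ⟨d, rfl⟩ := hx
  obtain ⟨c, rfl⟩ := hg
  simp only [← map_inv, ← map_mul, he.eq_iff]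
  cases d with
  | sr i => exact absurd (by rw [← map_mul, DihedralGroup.sr_mul_self, map_one]) hxx
  | r i =>
    cases c with
    | r j => exact .inl (by simp [DihedralGroup.inv_r])
    | sr j => exact .inr (by simp [DihedralGroup.inv_r, DihedralGroup.inv_sr])

/-- Otherwise `x` is a rotation in both stabilizers, hence inverted or centralized by both, so that
they normalize its centralizer; being maximal and distinct, they generate `X`, which would
normalize a proper nontrivial subgroup. -/
lemma mul_self_eq_one_of_smul_eq (h : IsDihedralAction X Pt n) {β γ : Pt} (hne : β ≠ γ) {x : G}
    (hcomm : ∀ y ∈ X, ∀ z ∈ X, x * x ≠ 1 → Commute x y → Commute x z → Commute y z)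
    (hxX : x ∈ X) (hβ : x • β = β) (hγ : x • γ = γ) : x * x = 1 := by
  by_contra hxx
  set N := X ⊓ Subgroup.normalizer (Subgroup.centralizer {x} : Set G)
  have hle (δ : Pt) (hδ : x • δ = δ) : stabIn X δ ≤ N := fun g hg =>
    ⟨hg.1, mem_normalizer_centralizer_of_conj (h.conj_eq_or_eq_inv ⟨hxX, hδ⟩ hxx hg)⟩
  have hN : N = X := by
    refine ((h.covBy β).eq_or_eq (hle β hβ) inf_le_left).resolve_left fun hNβ => ?_
    rcases (h.covBy γ).eq_or_eq (hle γ hγ) inf_le_left with hNγ | hNX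
    · exact hne (h.stabIn_injective (hNβ.symm.trans hNγ))
    · exact (h.covBy β).ne (hNβ.symm.trans hNX)
  have hXC : X ≤ Subgroup.normalizer (X ⊓ Subgroup.centralizer {x} : Subgroup G) :=
    (le_inf Subgroup.le_normalizer (inf_eq_left.1 hN)).trans
      (Subgroup.inf_normalizer_le_normalizer_inf)
  rcases h.simple _ inf_le_left hXC with hbot | htop
  · have hx : x ∈ X ⊓ Subgroup.centralizer {x} :=
      ⟨hxX, Subgroup.mem_centralizer_singleton_iff.2 rfl⟩
    rw [hbot, Subgroup.mem_bot] at hx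
    exact hxx (by rw [hx, one_mul])
  · have hxcomm (y : G) (hy : y ∈ X) : Commute x y :=
      (Subgroup.mem_centralizer_singleton_iff.1 (inf_eq_left.1 htop hy)).symm
    obtain ⟨y, hy, z, hz, hyz⟩ := h.exists_not_commute β
    exact hyz (hcomm y hy.1 z hz.1 hxx (hxcomm y hy.1) (hxcomm z hz.1))

lemma card_stabIn (h : IsDihedralAction X Pt n) (β : Pt) : Nat.card (stabIn X β) = 2 * n := by
  obtain ⟨e, he, her⟩ := h.dihedral β
  rw [← her, ← DihedralGroup.nat_card (n := n)]
  exact (Nat.card_congr (e.ofInjective he).toEquiv).symm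

lemma card_points_mul (h : IsDihedralAction X Pt n) [Nonempty Pt] :
    Nat.card Pt * (2 * n) = Nat.card X := by
  obtain ⟨β⟩ := ‹Nonempty Pt›
  have horbit : MulAction.orbit X β = Set.univ := Set.eq_univ_of_forall fun γ => by
    obtain ⟨g, hg, hgβ⟩ := h.transitive β γ
    exact ⟨⟨g, hg⟩, hgβ⟩
  rw [← card_orbit_mul_card_stabIn X β, horbit, Set.ncard_univ, h.card_stabIn]

end Stabilizers

section OddOrder

lemma mem_involutions_stabIn_iff (hn : Odd n) {β : Pt} {e : DihedralGroup n →* G}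
    (he : Function.Injective e) (her : e.range = stabIn X β) (x : G) :
    x ∈ involutions (stabIn X β) ↔ ∃ i, e (.sr i) = x := by
  constructor
  · rintro ⟨hx, hxx, hx1⟩
    rw [← her] at hx
    obtain ⟨d, rfl⟩ := hx
    cases d with
    | sr i => exact ⟨i, rfl⟩
    | r i =>
      rw [← map_mul, ← map_one e, he.eq_iff, DihedralGroup.r_mul_r, DihedralGroup.one_def,
        DihedralGroup.r.injEq] at hxx
      rw [(ZMod.add_self_eq_zero_iff_eq_zero hn).1 hxx] at hx1
      exact absurd (map_one e) hx1
  · rintro ⟨i, rfl⟩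
    refine ⟨her ▸ ⟨_, rfl⟩, by rw [← map_mul, DihedralGroup.sr_mul_self, map_one], ?_⟩
    rw [← map_one e, he.ne_iff, DihedralGroup.one_def]
    exact nofun

lemma ncard_involutions_stabIn (h : IsDihedralAction X Pt n) (hn : Odd n) (β : Pt) :
    (involutions (stabIn X β)).ncard = n := by
  obtain ⟨e, he, her⟩ := h.dihedral β
  have hrange : involutions (stabIn X β) = Set.range fun i => e (.sr i) :=
    Set.ext (mem_involutions_stabIn_iff hn he her)
  have hinj : Function.Injective fun i : ZMod n => e (.sr i) := fun i j hij => by simpa using he hij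
  rw [hrange, Set.ncard_range_of_injective hinj, Nat.card_zmod]

/-- The product of two involutions of a dihedral stabilizer is a rotation; if it has order at most
two then it is trivial. -/
lemma involutions_eq_of_smul_eq (h : IsDihedralAction X Pt n) (hn : Odd n)
    (hsq : ∀ x ∈ X, ∀ β γ : Pt, β ≠ γ → x • β = β → x • γ = γ → x * x = 1) {β γ : Pt}
    (hne : β ≠ γ) {x y : G} (hxβ : x ∈ involutions (stabIn X β)) (hxγ : x • γ = γ)
    (hyβ : y ∈ involutions (stabIn X β)) (hyγ : y • γ = γ) : x = y := by
  obtain ⟨e, he, her⟩ := h.dihedral β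
  have hmul : x * y ∈ stabIn X β := mul_mem hxβ.1 hyβ.1
  have hxy := hsq _ hmul.1 _ _ hne hmul.2 (by rw [mul_smul, hyγ, hxγ])
  obtain ⟨i, rfl⟩ := (mem_involutions_stabIn_iff hn he her x).1 hxβ
  obtain ⟨j, rfl⟩ := (mem_involutions_stabIn_iff hn he her y).1 hyβ
  rw [← map_mul, ← map_mul, ← map_one e, he.eq_iff, DihedralGroup.sr_mul_sr,
    DihedralGroup.r_mul_r, DihedralGroup.one_def, DihedralGroup.r.injEq] at hxy
  rw [sub_eq_zero.1 ((ZMod.add_self_eq_zero_iff_eq_zero hn).1 hxy)]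

end OddOrder

end IsDihedralAction

/-! ### Actions of `PSL(2, q)` -/

section PSL2Action

variable {F : Type*} [Field F] {G Pt : Type*} [Group G] [MulAction G Pt] {π : SL(2, F) →* G} {n : ℕ}

lemma two_eq_zero_iff_card_mod_two [Fintype F] : (2 : F) = 0 ↔ Fintype.card F % 2 = 0 := by
  rw [← FiniteField.even_card_iff_char_two]
  refine ⟨fun h => not_not.1 fun hchar => Ring.two_ne_zero hchar h, fun h => ?_⟩
  have := CharP.cast_eq_zero F (ringChar F)
  rwa [h, Nat.cast_two] at this

lemma card_sqrt_neg_one_of_two_eq_zero (h2 : (2 : F) = 0) : Nat.card {a : F // a ^ 2 = -1} = 1 := by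
  refine Nat.card_eq_one_iff_unique.2 ⟨⟨fun ⟨a, ha⟩ ⟨b, hb⟩ => Subtype.ext ?_⟩,
    ⟨1, by linear_combination h2⟩⟩
  have hab : (a - b) ^ 2 = 0 := by linear_combination ha + hb - (1 + a * b) * h2
  exact sub_eq_zero.1 (pow_eq_zero_iff two_ne_zero |>.1 hab)

lemma card_sqrt_neg_one_of_isSquare (h2 : (2 : F) ≠ 0) (hsq : IsSquare (-1 : F)) :
    Nat.card {a : F // a ^ 2 = -1} = 2 := by
  obtain ⟨i, hi⟩ := hsq
  have hi0 : i ≠ 0 := by rintro rfl; simp at hi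
  have hroots : {a : F | a ^ 2 = -1} = {i, -i} := by
    ext a
    simp only [Set.mem_ofPred_eq, Set.mem_insert_iff, Set.mem_singleton_iff, hi, ← pow_two,
      sq_eq_sq_iff_eq_or_eq_neg]
  have hne : i ≠ -i := fun h =>
    hi0 ((mul_eq_zero.1 (by linear_combination h : 2 * i = 0)).resolve_left h2)
  exact (congrArg Set.ncard hroots).trans (Set.ncard_pair hne)

lemma finite_involutions [Finite F] : (involutions π.range).Finite :=
  (Set.finite_range π).subset fun _ hx => hx.1

/-- The group theory of the problem: the socle `X` of `G` is the image of `π : SL(2, F) → G`, whose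
kernel is `{1, -1}`; it is normal with trivial centralizer, and acts on `Pt` with dihedral
stabilizers of order `2 * n`, where `n = (q + 1) / gcd (2, q - 1)`. -/
structure IsPSL2Action [Fintype F] (π : SL(2, F) →* G) (Pt : Type*) [MulAction G Pt] (n : ℕ) : Prop
    extends IsDihedralAction π.range Pt n where
  four_le : 4 ≤ Fintype.card F
  n_eq : n = (Fintype.card F + 1) / Nat.gcd 2 (Fintype.card F - 1)
  eq_iff : ∀ A B, π A = π B ↔ A = B ∨ A = -B
  normal : π.range.Normal
  centralizer_eq_bot : Subgroup.centralizer (π.range : Set G) = ⊥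

namespace IsPSL2Action

variable [Fintype F]

lemma map_neg (h : IsPSL2Action π Pt n) (A : SL(2, F)) : π (-A) = π A :=
  (h.eq_iff _ _).2 (.inr rfl)

lemma map_eq_one_iff (h : IsPSL2Action π Pt n) {A : SL(2, F)} : π A = 1 ↔ A = 1 ∨ A = -1 := by
  rw [← map_one π, h.eq_iff]

lemma mem_normalizer (h : IsPSL2Action π Pt n) (g : G) :
    g ∈ Subgroup.normalizer (π.range : Set G) := by
  have := h.normal
  rw [Subgroup.normalizer_eq_top]
  trivial

section Order

lemma n_eq_of_even (h : IsPSL2Action π Pt n) (hq : Fintype.card F % 2 = 0) :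
    n = Fintype.card F + 1 := by
  have h4 := h.four_le
  have hgcd : Nat.gcd 2 (Fintype.card F - 1) = 1 :=
    Nat.coprime_two_left.2 (Nat.odd_iff.2 (by omega))
  rw [h.n_eq, hgcd, Nat.div_one]

lemma two_mul_n_of_odd (h : IsPSL2Action π Pt n) (hq : Fintype.card F % 2 = 1) :
    2 * n = Fintype.card F + 1 := by
  have hgcd : Nat.gcd 2 (Fintype.card F - 1) = 2 := Nat.gcd_eq_left (by omega)
  rw [h.n_eq, hgcd, Nat.mul_div_cancel' (by omega)]

lemma coe_ker (h : IsPSL2Action π Pt n) : (π.ker : Set SL(2, F)) = {1, -1} := by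
  ext A
  rw [SetLike.mem_coe, MonoidHom.mem_ker, h.map_eq_one_iff]
  rfl

lemma injective (h : IsPSL2Action π Pt n) (h2 : (2 : F) = 0) : Function.Injective π := by
  intro A B hAB
  simpa only [neg_eq_self_of_two_eq_zero h2, or_self] using (h.eq_iff A B).1 hAB

lemma n_mul_card_ker (h : IsPSL2Action π Pt n) : n * Nat.card π.ker = Fintype.card F + 1 := by
  rw [← SetLike.coe_sort_coe, h.coe_ker, Nat.card_coe_set_eq]
  rcases Nat.mod_two_eq_zero_or_one (Fintype.card F) with hq | hq
  · rw [neg_eq_self_of_two_eq_zero (two_eq_zero_iff_card_mod_two.2 hq), Set.pair_eq_singleton,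
      Set.ncard_singleton, mul_one, h.n_eq_of_even hq]
  · have h2 : (2 : F) ≠ 0 := fun h2 => by
      have := two_eq_zero_iff_card_mod_two.1 h2
      omega
    rw [Set.ncard_pair (neg_ne_self_of_two_ne_zero h2 1).symm, mul_comm, h.two_mul_n_of_odd hq]

lemma two_mul_card_points (h : IsPSL2Action π Pt n) [Nonempty Pt] :
    2 * Nat.card Pt = Fintype.card F * (Fintype.card F - 1) := by
  have hcard : Nat.card π.ker * Nat.card π.range = Nat.card SL(2, F) := by
    rw [← Subgroup.index_ker, Subgroup.card_mul_index]
  rw [card_SL2, ← h.card_points_mul] at hcard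
  refine Nat.eq_of_mul_eq_mul_right (Nat.succ_pos (Fintype.card F)) ?_
  rw [← hcard, Nat.succ_eq_add_one, ← h.n_mul_card_ker]
  ring

end Order

section Involutions

lemma mul_self_eq_one_iff (h : IsPSL2Action π Pt n) {A : SL(2, F)} :
    π A * π A = 1 ↔ π A = 1 ∨ A.1.trace = 0 := by
  rw [← map_mul, h.map_eq_one_iff, mul_self_eq_neg_one_iff_trace_eq_zero, h.map_eq_one_iff]
  constructor
  · rintro (hA | hA)
    · rw [or_assoc]
      exact eq_one_or_eq_neg_one_or_trace_eq_zero_of_mul_self_eq_one hA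
    · exact .inr hA
  · rintro ((rfl | rfl) | hA)
    · exact .inl (one_mul 1)
    · exact .inl (by rw [neg_mul_neg, one_mul])
    · exact .inr hA

lemma map_mem_involutions_iff (h : IsPSL2Action π Pt n) {A : SL(2, F)} :
    π A ∈ involutions π.range ↔ A.1.trace = 0 ∧ π A ≠ 1 := by
  have hA : π A ∈ π.range := ⟨A, rfl⟩
  have hiff := h.mul_self_eq_one_iff (A := A)
  simp only [involutions, Set.mem_ofPred_eq]
  tauto

lemma commute_of_map_commute (h : IsPSL2Action π Pt n) {A B : SL(2, F)}
    (hA : (2 : F) = 0 ∨ π A * π A ≠ 1) (hAB : Commute (π A) (π B)) : Commute A B := by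
  have hAB : π (A * B) = π (B * A) := by rw [map_mul, map_mul, hAB.eq]
  rcases (h.eq_iff _ _).1 hAB with hAB | hAB
  · exact hAB
  by_cases h2 : (2 : F) = 0
  · rwa [neg_eq_self_of_two_eq_zero h2] at hAB
  · exact absurd (h.mul_self_eq_one_iff.2 (.inr (trace_eq_zero_of_mul_eq_neg_mul h2 hAB)))
      (hA.resolve_left h2)

lemma commute_trans (h : IsPSL2Action π Pt n) {x y z : G} (hx : x ∈ π.range) (hy : y ∈ π.range)
    (hz : z ∈ π.range) (hx1 : (2 : F) = 0 ∧ x ≠ 1 ∨ x * x ≠ 1) (hxy : Commute x y)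
    (hxz : Commute x z) : Commute y z := by
  obtain ⟨A, rfl⟩ := hx
  obtain ⟨B, rfl⟩ := hy
  obtain ⟨C, rfl⟩ := hz
  have hA : π A ≠ 1 := hx1.elim And.right fun hsq h1 => hsq (by rw [h1, one_mul])
  rw [Ne, h.map_eq_one_iff, not_or] at hA
  have hA2 := hx1.imp_left And.left
  exact (commute_of_commute_left hA.1 hA.2 (h.commute_of_map_commute hA2 hxy)
    (h.commute_of_map_commute hA2 hxz)).map π

lemma mul_self_eq_one_of_smul_eq (h : IsPSL2Action π Pt n) {x : G} (hx : x ∈ π.range) {β γ : Pt}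
    (hne : β ≠ γ) (hβ : x • β = β) (hγ : x • γ = γ) : x * x = 1 :=
  h.toIsDihedralAction.mul_self_eq_one_of_smul_eq hne
    (fun _ hy _ hz hxx => h.commute_trans hx hy hz (.inr hxx)) hx hβ hγ

lemma exists_conj_eq (h : IsPSL2Action π Pt n) {x y : G} (hx : x ∈ involutions π.range)
    (hy : y ∈ involutions π.range) : ∃ g ∈ π.range, g * x * g⁻¹ = y := by
  have key (z : G) (hz : z ∈ involutions π.range) : ∃ g ∈ π.range, z = g * π weyl * g⁻¹ := by
    obtain ⟨A, rfl⟩ := hz.1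
    obtain ⟨htrace, hA1⟩ := h.map_mem_involutions_iff.1 hz
    rw [Ne, h.map_eq_one_iff, not_or] at hA1
    obtain ⟨P, hP⟩ := exists_mul_eq_mul_weyl hA1.1 hA1.2 htrace
    exact ⟨π P, ⟨P, rfl⟩, by rw [← map_mul, ← hP, map_mul, mul_inv_cancel_right]⟩
  obtain ⟨a, ha, rfl⟩ := key x hx
  obtain ⟨b, hb, rfl⟩ := key y hy
  exact ⟨b * a⁻¹, mul_mem hb (inv_mem ha), by group⟩

lemma ncard_involutions_add_one (h : IsPSL2Action π Pt n) (h2 : (2 : F) = 0) :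
    (involutions π.range).ncard + 1 = Fintype.card F ^ 2 := by
  have himage : insert 1 (involutions π.range) = π '' {A | A.1.trace = 0} := by
    ext x
    constructor
    · rintro (rfl | hx)
      · exact ⟨1, by simp [trace_fin_two, one_add_one_eq_two, h2], map_one π⟩
      · obtain ⟨A, rfl⟩ := hx.1
        exact ⟨A, (h.map_mem_involutions_iff.1 hx).1, rfl⟩
    · rintro ⟨A, hA, rfl⟩
      exact (eq_or_ne (π A) 1).imp id fun h1 => h.map_mem_involutions_iff.2 ⟨hA, h1⟩
  rw [← Set.ncard_insert_of_notMem (fun h1 => h1.2.2 rfl) finite_involutions, himage,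
    Set.ncard_image_of_injective _ (h.injective h2)]
  refine card_trace_eq_zero.trans ?_
  obtain ⟨m, hm⟩ := Nat.exists_eq_add_of_lt (zero_lt_four.trans_le h.four_le)
  rw [card_sqrt_neg_one_of_two_eq_zero h2, hm, Nat.add_sub_cancel]
  ring

lemma two_mul_ncard_involutions_eq_card_trace_eq_zero (h : IsPSL2Action π Pt n)
    (h2 : (2 : F) ≠ 0) :
    2 * (involutions π.range).ncard = Nat.card {A : SL(2, F) // A.1.trace = 0} := by
  rw [mul_comm]
  refine (ncard_mul_eq_ncard_mul (fun x A => π A = x) (t := {A : SL(2, F) | A.1.trace = 0})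
    (b := 1) finite_involutions (Set.toFinite _) (fun x hx => ?_) fun A hA => ?_).trans (mul_one _)
  · obtain ⟨A, rfl⟩ := hx.1
    have htrace := (h.map_mem_involutions_iff.1 hx).1
    have hfiber : {B ∈ {A : SL(2, F) | A.1.trace = 0} | π B = π A} = {A, -A} := by
      ext B
      simp only [Set.mem_ofPred_eq, Set.mem_insert_iff, Set.mem_singleton_iff, h.eq_iff,
        and_iff_right_iff_imp]
      rintro (rfl | rfl)
      · exact htrace
      · rw [Matrix.SpecialLinearGroup.coe_neg, trace_neg, htrace, neg_zero]
    rw [hfiber, Set.ncard_pair (neg_ne_self_of_two_ne_zero h2 A).symm]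
  · have htrace : A.1.trace = 0 := hA
    have hA1 : π A ≠ 1 := by
      rw [Ne, h.map_eq_one_iff]
      rintro (rfl | rfl) <;> simp [h2] at htrace
    refine Set.ncard_eq_one.2 ⟨π A, Set.ext fun x => ⟨fun hx => hx.2.symm, ?_⟩⟩
    rintro rfl
    exact ⟨h.map_mem_involutions_iff.2 ⟨htrace, hA1⟩, rfl⟩

lemma two_mul_ncard_involutions (h : IsPSL2Action π Pt n) (hq : Fintype.card F % 4 = 1) :
    2 * (involutions π.range).ncard = Fintype.card F * (Fintype.card F + 1) := by
  have h2 : (2 : F) ≠ 0 := fun h2 => by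
    have := two_eq_zero_iff_card_mod_two.1 h2
    omega
  rw [h.two_mul_ncard_involutions_eq_card_trace_eq_zero h2, card_trace_eq_zero,
    card_sqrt_neg_one_of_isSquare h2 (FiniteField.isSquare_neg_one_iff.2 (by omega))]
  obtain ⟨m, hm⟩ := Nat.exists_eq_add_of_lt (zero_lt_four.trans_le h.four_le)
  rw [hm, Nat.add_sub_cancel]
  ring

lemma involutions_eq_of_smul_eq (h : IsPSL2Action π Pt n) (hn : Odd n) {β γ : Pt} (hne : β ≠ γ)
    {x y : G} (hxβ : x ∈ involutions (stabIn π.range β)) (hxγ : x • γ = γ)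
    (hyβ : y ∈ involutions (stabIn π.range β)) (hyγ : y • γ = γ) : x = y :=
  h.toIsDihedralAction.involutions_eq_of_smul_eq hn
    (fun _ hx _ _ => h.mul_self_eq_one_of_smul_eq hx) hne hxβ hxγ hyβ hyγ

lemma ncard_fixedBy_eq (h : IsPSL2Action π Pt n) {x y : G} (hx : x ∈ involutions π.range)
    (hy : y ∈ involutions π.range) :
    (MulAction.fixedBy Pt x).ncard = (MulAction.fixedBy Pt y).ncard := by
  obtain ⟨g, -, rfl⟩ := h.exists_conj_eq hx hy
  rw [ncard_fixedBy_conj]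

lemma ncard_involutions_mul_ncard_fixedBy [Finite Pt] (h : IsPSL2Action π Pt n) (hn : Odd n)
    {x : G} (hx : x ∈ involutions π.range) :
    (involutions π.range).ncard * (MulAction.fixedBy Pt x).ncard = Nat.card Pt * n := by
  rw [← Set.ncard_univ Pt]
  refine ncard_mul_eq_ncard_mul (fun y β => y • β = β) finite_involutions Set.finite_univ
    (fun y hy => ?_) fun β _ => ?_
  · rw [h.ncard_fixedBy_eq hx hy]
    congr 1
    ext
    simp
  · rw [← h.ncard_involutions_stabIn hn β]
    congr 1
    ext
    rw [mem_involutions_stabIn]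
    rfl

lemma ncard_setOf_common_involution [Finite Pt] (h : IsPSL2Action π Pt n) (hn : Odd n) {x : G}
    (hx : x ∈ involutions π.range) (α : Pt) :
    {β | β ≠ α ∧ ∃ y ∈ involutions (stabIn π.range α), y • β = β}.ncard =
      n * ((MulAction.fixedBy Pt x).ncard - 1) := by
  rw [← h.ncard_involutions_stabIn hn α, ← mul_one (Set.ncard _)]
  refine (ncard_mul_eq_ncard_mul (fun y β => y • β = β)
    (finite_involutions.subset fun y hy => (mem_involutions_stabIn.1 hy).1) (Set.toFinite _)
    (fun y hy => ?_) ?_).symm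
  · obtain ⟨hyX, hyα⟩ := mem_involutions_stabIn.1 hy
    rw [h.ncard_fixedBy_eq hx hyX,
      ← Set.ncard_sdiff_singleton_of_mem (show α ∈ MulAction.fixedBy Pt y from hyα)]
    congr 1
    ext β
    exact ⟨fun hβ => ⟨hβ.2, hβ.1.1⟩, fun hβ => ⟨⟨hβ.2, y, hy, hβ.1⟩, hβ.1⟩⟩
  · rintro β ⟨hβ, y, hy, hyβ⟩
    refine Set.ncard_eq_one.2 ⟨y, Set.ext fun z => ⟨fun hz => ?_, ?_⟩⟩
    · exact h.involutions_eq_of_smul_eq hn hβ.symm hz.1 hz.2 hy hyβ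
    · rintro rfl
      exact ⟨hy, hyβ⟩

end Involutions

end IsPSL2Action

end PSL2Action

/-! ### Flag-transitive designs -/

section Fisher

variable {α β : Type*} {R : α → β → Prop} {s : Set α} {t : Set β} {k r lam : ℕ}

-- With `N` the incidence matrix, `N * Nᵀ` is the sum of a diagonal matrix with positive entries and
-- `lam` times the all-ones matrix, hence positive definite, so `N` has rank `s.ncard`.
lemma ncard_le_ncard_of_pairwise_eq (hs : s.Finite) (ht : t.Finite)
    (hr : ∀ x ∈ s, lam < {B ∈ t | R x B}.ncard)
    (hlam : ∀ x ∈ s, ∀ y ∈ s, x ≠ y → {B ∈ t | R x B ∧ R y B}.ncard = lam) :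
    s.ncard ≤ t.ncard := by
  classical
  lift s to Finset α using hs
  lift t to Finset β using ht
  simp only [Finset.mem_coe, ← Finset.coe_filter, Set.ncard_coe_finset] at hr hlam ⊢
  let N : Matrix s t ℚ := .of fun x B => if R x B then 1 else 0
  have hNN (x y : s) : (N * Nᵀ) x y = ((t.filter fun B => R x B ∧ R y B).card : ℚ) := by
    simp only [N, mul_apply, of_apply, transpose_apply, ← ite_and, mul_ite, mul_one, mul_zero,
      Finset.card_filter, Nat.cast_sum, Nat.cast_ite, Nat.cast_one, Nat.cast_zero,
      ← Finset.sum_coe_sort t, and_comm]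
  have hsum : N * Nᵀ = diagonal (fun x : s => ((t.filter (R x)).card : ℚ) - lam) +
      (lam : ℚ) • vecMulVec 1 (star 1) := by
    ext x y
    rw [hNN]
    obtain rfl | hxy := eq_or_ne x y
    · simp
    · simp [hxy, hlam x x.2 y y.2 (Subtype.coe_ne_coe.2 hxy)]
  have hpos : (N * Nᵀ).PosDef := by
    rw [hsum]
    exact (posDef_diagonal_iff.2 fun x : s => sub_pos.2 (Nat.cast_lt.2 (hr x x.2))).add_posSemidef
      ((posSemidef_vecMulVec_self_star 1).smul (Nat.cast_nonneg lam))
  calc s.card = (N * Nᵀ).rank := by rw [rank_of_isUnit _ hpos.isUnit, Fintype.card_coe]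
    _ ≤ N.rank := rank_mul_le_left _ _
    _ ≤ t.card := N.rank_le_card_width.trans_eq (Fintype.card_coe t)

lemma le_of_pairwise_eq (hs : s.Finite) (ht : t.Finite) (hs0 : s.Nonempty)
    (hk : ∀ B ∈ t, {x ∈ s | R x B}.ncard = k) (hr : ∀ x ∈ s, {B ∈ t | R x B}.ncard = r)
    (hlam : ∀ x ∈ s, ∀ y ∈ s, x ≠ y → {B ∈ t | R x B ∧ R y B}.ncard = lam) (hlt : lam < r) :
    k ≤ r := by
  have hle := ncard_le_ncard_of_pairwise_eq hs ht (fun x hx => hlt.trans_eq (hr x hx).symm) hlam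
  refine Nat.le_of_mul_le_mul_left ?_ ((Set.ncard_pos hs).2 hs0)
  calc s.ncard * k ≤ t.ncard * k := Nat.mul_le_mul_right k hle
    _ = s.ncard * r := (ncard_mul_eq_ncard_mul R hs ht hr hk).symm

end Fisher

/-- A flag-transitive, non-trivial, non-symmetric `2-(v, k, lam)` design with point set `Pt`, block
set `𝓑` and replication number `r`. -/
structure IsFlagTransitiveDesign (G : Type*) {Pt : Type*} [Group G] [MulAction G Pt]
    (𝓑 : Set (Set Pt)) (k lam r : ℕ) : Prop extends IsDesign 𝓑 k lam where
  repNum_eq : ∀ x, repNum 𝓑 x = r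
  actsOn : ActsOn G 𝓑
  flagTransitive : FlagTransitive G 𝓑
  two_lt : 2 < k
  lt_card : k + 1 < Nat.card Pt
  ncard_ne : 𝓑.ncard ≠ Nat.card Pt
  lam_pos : 0 < lam

namespace IsFlagTransitiveDesign

variable {G Pt : Type*} [Group G] [MulAction G Pt] {𝓑 : Set (Set Pt)} {k lam r : ℕ}

lemma ncard_block (d : IsFlagTransitiveDesign G 𝓑 k lam r) {B : Set Pt} (hB : B ∈ 𝓑) :
    B.ncard = k :=
  d.block_card B hB

lemma ncard_blocks_mem (d : IsFlagTransitiveDesign G 𝓑 k lam r) (β : Pt) :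
    {B ∈ 𝓑 | β ∈ B}.ncard = r :=
  d.repNum_eq β

lemma ncard_blocks_mem_mem (d : IsFlagTransitiveDesign G 𝓑 k lam r) {β γ : Pt} (hne : β ≠ γ) :
    {B ∈ 𝓑 | β ∈ B ∧ γ ∈ B}.ncard = lam :=
  d.pair_count β γ hne

lemma exists_block_mem_mem (d : IsFlagTransitiveDesign G 𝓑 k lam r) {β γ : Pt} (hne : β ≠ γ) :
    ∃ B ∈ 𝓑, β ∈ B ∧ γ ∈ B :=
  Set.nonempty_of_ncard_ne_zero ((d.ncard_blocks_mem_mem hne).trans_ne d.lam_pos.ne')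

variable [Finite Pt]

lemma exists_block_mem (d : IsFlagTransitiveDesign G 𝓑 k lam r) (β : Pt) : ∃ B ∈ 𝓑, β ∈ B := by
  have : Nontrivial Pt := Finite.one_lt_card_iff_nontrivial.1 (by have := d.lt_card; omega)
  obtain ⟨γ, hγ⟩ := exists_ne β
  obtain ⟨B, hB, hβ, -⟩ := d.exists_block_mem_mem hγ.symm
  exact ⟨B, hB, hβ⟩

lemma mul_ncard_inter_eq (d : IsFlagTransitiveDesign G 𝓑 k lam r) {α : Pt} {Δ : Set Pt}
    (hα : α ∉ Δ) (hΔ : ∀ g : G, g • α = α → ∀ β ∈ Δ, g • β ∈ Δ) {B : Set Pt} (hB : B ∈ 𝓑)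
    (hαB : α ∈ B) : r * (B ∩ Δ).ncard = lam * Δ.ncard := by
  have hle {C D : Set Pt} (hC : C ∈ 𝓑 ∧ α ∈ C) (hD : D ∈ 𝓑 ∧ α ∈ D) :
      (C ∩ Δ).ncard ≤ (D ∩ Δ).ncard := by
    obtain ⟨g, rfl, hgα⟩ := d.flagTransitive C hC.1 D hD.1 α hC.2 α hD.2
    rw [← Set.ncard_smul_set g (C ∩ Δ)]
    refine Set.ncard_le_ncard ?_ (Set.toFinite _)
    rintro _ ⟨β, ⟨hβC, hβ⟩, rfl⟩
    exact ⟨Set.smul_mem_smul_set hβC, hΔ g hgα β hβ⟩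
  rw [← d.ncard_blocks_mem α, mul_comm lam]
  refine ncard_mul_eq_ncard_mul (fun C β => β ∈ C) (Set.toFinite _) (Set.toFinite _)
    (fun C hC => ?_) fun β hβ => ?_
  · rw [Set.sep_mem_eq, Set.inter_comm]
    exact (hle hC ⟨hB, hαB⟩).antisymm (hle ⟨hB, hαB⟩ hC)
  · rw [← d.ncard_blocks_mem_mem (ne_of_mem_of_not_mem hβ hα).symm]
    simp only [Set.mem_ofPred_eq, and_assoc]

lemma rep_mul_pred (d : IsFlagTransitiveDesign G 𝓑 k lam r) [Nonempty Pt] :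
    r * (k - 1) = lam * (Nat.card Pt - 1) := by
  obtain ⟨α⟩ := ‹Nonempty Pt›
  obtain ⟨B, hB, hαB⟩ := d.exists_block_mem α
  have hcount := d.mul_ncard_inter_eq (Δ := {α}ᶜ) (by simp)
    (fun g hg β hβ hc => hβ (MulAction.injective g (hc.trans hg.symm))) hB hαB
  rwa [← Set.sdiff_eq, Set.ncard_sdiff_singleton_of_mem hαB, d.ncard_block hB, Set.ncard_compl,
    Set.ncard_singleton] at hcount

lemma ncard_blocks_mul (d : IsFlagTransitiveDesign G 𝓑 k lam r) :
    𝓑.ncard * k = Nat.card Pt * r := by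
  rw [← Set.ncard_univ]
  refine ncard_mul_eq_ncard_mul (fun B β => β ∈ B) (Set.toFinite _) (Set.toFinite _)
    (fun B hB => ?_) fun β _ => d.ncard_blocks_mem β
  rw [Set.sep_mem_eq, Set.univ_inter, d.ncard_block hB]

lemma lam_lt_rep (d : IsFlagTransitiveDesign G 𝓑 k lam r) [Nonempty Pt] : lam < r := by
  have hmul := d.rep_mul_pred
  have hk := d.two_lt
  have hv := d.lt_card
  refine lt_of_not_ge fun hle => hmul.not_lt ?_
  calc r * (k - 1) ≤ lam * (k - 1) := Nat.mul_le_mul_right _ hle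
    _ < lam * (Nat.card Pt - 1) := Nat.mul_lt_mul_of_pos_left (by omega) d.lam_pos

lemma block_size_lt_rep (d : IsFlagTransitiveDesign G 𝓑 k lam r) [Nonempty Pt] : k < r := by
  have hle : k ≤ r := le_of_pairwise_eq (R := fun β B => β ∈ B) Set.finite_univ 𝓑.toFinite
    Set.univ_nonempty (fun B hB => by rw [Set.sep_mem_eq, Set.univ_inter, d.ncard_block hB])
    (fun β _ => d.ncard_blocks_mem β) (fun β _ γ _ => d.ncard_blocks_mem_mem) d.lam_lt_rep
  refine hle.lt_of_ne fun heq => d.ncard_ne ?_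
  have hmul := d.ncard_blocks_mul
  rw [← heq] at hmul
  exact Nat.eq_of_mul_eq_mul_right (zero_lt_two.trans d.two_lt) hmul

end IsFlagTransitiveDesign

/-! ### The case `q ≡ 1 (mod 4)` -/

section OneModFour

variable {F : Type*} [Field F] [Fintype F] {G Pt : Type*} [Group G] [MulAction G Pt]
  {π : SL(2, F) →* G} {n k r : ℕ} {𝓑 : Set (Set Pt)}

namespace IsPSL2Action

lemma card_points_of_odd [Nonempty Pt] (h : IsPSL2Action π Pt n) (hq : Fintype.card F % 2 = 1) :
    Nat.card Pt = (2 * n - 1) * (n - 1) := by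
  refine Nat.eq_of_mul_eq_mul_left two_pos ?_
  rw [h.two_mul_card_points, show Fintype.card F = 2 * n - 1 by rw [h.two_mul_n_of_odd hq]; omega,
    show 2 * n - 1 - 1 = 2 * (n - 1) by omega]
  ring

lemma card_points_sub_one_of_odd [Nonempty Pt] (h : IsPSL2Action π Pt n)
    (hq : Fintype.card F % 2 = 1) : Nat.card Pt - 1 = n * (2 * n - 3) := by
  obtain ⟨m, rfl⟩ := Nat.exists_eq_add_of_le h.three_le
  rw [h.card_points_of_odd hq, show 2 * (3 + m) - 1 = 2 * m + 5 by omega,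
    show 3 + m - 1 = m + 2 by omega, show 2 * (3 + m) - 3 = 2 * m + 3 by omega,
    show (2 * m + 5) * (m + 2) = (3 + m) * (2 * m + 3) + 1 by ring, Nat.add_sub_cancel]

lemma exists_involution_of_one_mod_four (h : IsPSL2Action π Pt n) (hq : Fintype.card F % 4 = 1) :
    (involutions π.range).Nonempty := by
  refine Set.nonempty_of_ncard_ne_zero fun hinv => ?_
  have hmul := h.two_mul_ncard_involutions hq
  rw [hinv, mul_zero, eq_comm, mul_eq_zero] at hmul
  omega

variable [Finite Pt] [Nonempty Pt]

lemma block_size_eq_of_dvd (h : IsPSL2Action π Pt n)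
    (d : IsFlagTransitiveDesign G 𝓑 k 3 (3 * r)) (hq : Fintype.card F % 2 = 1) (hdvd : r ∣ n) :
    k = 2 * n - 2 ∧ r = n := by
  obtain ⟨m, rfl⟩ := hdvd
  have h3 := h.three_le
  have hr : 0 < r := Nat.pos_of_mul_pos_right (by omega : 0 < r * m)
  have hk : k - 1 = m * (2 * (r * m) - 3) := by
    refine Nat.eq_of_mul_eq_mul_left (by omega : 0 < 3 * r) ?_
    rw [d.rep_mul_pred, h.card_points_sub_one_of_odd hq]
    ring
  have hlt := d.block_size_lt_rep
  have hk2 := d.two_lt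
  have hm : m = 1 := by
    have hm0 : 0 < m := Nat.pos_of_mul_pos_left (by omega : 0 < r * m)
    by_contra hne
    have hrm : r * 2 ≤ r * m := Nat.mul_le_mul_left r (by omega)
    have hkm : 2 * (2 * (r * m) - 3) ≤ k - 1 := hk ▸ Nat.mul_le_mul_right _ (by omega)
    omega
  subst hm
  rw [mul_one] at hk ⊢
  exact ⟨by omega, rfl⟩

lemma ncard_fixedBy_of_one_mod_four (h : IsPSL2Action π Pt n) (hq : Fintype.card F % 4 = 1)
    {x : G} (hx : x ∈ involutions π.range) : (MulAction.fixedBy Pt x).ncard = n - 1 := by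
  have hq2 : Fintype.card F % 2 = 1 := by omega
  have h2n := h.two_mul_n_of_odd hq2
  have hmul := h.ncard_involutions_mul_ncard_fixedBy (Nat.odd_iff.2 (by omega)) hx
  have hinv : (involutions π.range).ncard = (2 * n - 1) * n := by
    refine Nat.eq_of_mul_eq_mul_left two_pos ?_
    rw [h.two_mul_ncard_involutions hq, ← h2n, show Fintype.card F = 2 * n - 1 by omega]
    ring
  have hpos : 0 < (2 * n - 1) * n := Nat.mul_pos (by omega) (by omega)
  refine Nat.eq_of_mul_eq_mul_left hpos ?_
  rw [← hinv, hmul, h.card_points_of_odd hq2, hinv]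
  ring

-- The points sharing an involution with `α` form a `G_α`-invariant set of size `n * (n - 2)`, while
-- `v - 1 = 2 * (n * (n - 2)) + n`.
lemma dvd_of_one_mod_four (h : IsPSL2Action π Pt n)
    (d : IsFlagTransitiveDesign G 𝓑 k 3 (3 * r)) (hq : Fintype.card F % 4 = 1) : r ∣ n := by
  have hq2 : Fintype.card F % 2 = 1 := by omega
  have h2n := h.two_mul_n_of_odd hq2
  have h3 := h.three_le
  obtain ⟨α⟩ := ‹Nonempty Pt›
  obtain ⟨x, hx⟩ := h.exists_involution_of_one_mod_four hq
  obtain ⟨B, hB, hαB⟩ := d.exists_block_mem α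
  have hcount := d.mul_ncard_inter_eq
    (Δ := {β | β ≠ α ∧ ∃ y ∈ involutions (stabIn π.range α), y • β = β}) (fun hα => hα.1 rfl)
    (fun g hg β ⟨hβ, y, hy, hyβ⟩ => ⟨fun hc => hβ (MulAction.injective g (hc.trans hg.symm)),
      g * y * g⁻¹, ?_, by rw [mul_smul, mul_smul, inv_smul_smul, hyβ]⟩) hB hαB
  · rw [h.ncard_setOf_common_involution (Nat.odd_iff.2 (by omega)) hx,
      h.ncard_fixedBy_of_one_mod_four hq hx, mul_assoc] at hcount
    have hdvd : r ∣ n * (n - 1 - 1) := ⟨_, (Nat.eq_of_mul_eq_mul_left three_pos hcount).symm⟩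
    have hdvd' : r ∣ n * (2 * n - 3) := by
      have hmul := d.rep_mul_pred
      rw [mul_assoc, h.card_points_sub_one_of_odd hq2] at hmul
      exact ⟨_, (Nat.eq_of_mul_eq_mul_left three_pos hmul).symm⟩
    have hsum : n * (2 * n - 3) = 2 * (n * (n - 1 - 1)) + n := by
      rw [show 2 * n - 3 = 2 * (n - 1 - 1) + 1 by omega]
      ring
    rw [hsum] at hdvd'
    exact (Nat.dvd_add_right (hdvd.mul_left 2)).1 hdvd'
  · obtain ⟨hyX, hyα⟩ := mem_involutions_stabIn.1 hy
    refine mem_involutions_stabIn.2 ⟨conj_mem_involutions (h.mem_normalizer g) hyX, ?_⟩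
    nth_rw 1 [← hg]
    rw [mul_smul, mul_smul, inv_smul_smul, hyα, hg]

theorem false_of_one_mod_four (h : IsPSL2Action π Pt n)
    (d : IsFlagTransitiveDesign G 𝓑 k 3 (3 * r)) (hq : Fintype.card F % 4 = 1) : False := by
  have hq2 : Fintype.card F % 2 = 1 := by omega
  have h2n := h.two_mul_n_of_odd hq2
  obtain ⟨rfl, rfl⟩ := h.block_size_eq_of_dvd d hq2 (h.dvd_of_one_mod_four d hq)
  have hn0 : 0 < r - 1 := by have := h.three_le; omega
  have hb : 𝓑.ncard * 2 = 3 * ((2 * r - 1) * r) := by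
    refine Nat.eq_of_mul_eq_mul_right hn0 ?_
    calc 𝓑.ncard * 2 * (r - 1) = 𝓑.ncard * (2 * r - 2) := by
          rw [mul_assoc, Nat.mul_sub, mul_one]
      _ = 3 * ((2 * r - 1) * r) * (r - 1) := by
          rw [d.ncard_blocks_mul, h.card_points_of_odd hq2]
          ring
  have hodd : Odd (3 * ((2 * r - 1) * r)) :=
    (by decide : Odd 3).mul (Odd.mul (Nat.odd_iff.2 (by omega)) (Nat.odd_iff.2 (by omega)))
  exact Nat.not_even_iff_odd.2 hodd (hb ▸ even_two.mul_left _)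

end IsPSL2Action

end OneModFour

/-! ### The case `q ≡ 3 (mod 4)` -/

lemma zmod_eq_of_add_self_eq_zero {n : ℕ} [NeZero n] {i j : ZMod n} (hi : i + i = 0)
    (hj : j + j = 0) (hi0 : i ≠ 0) (hj0 : j ≠ 0) : i = j := by
  have hival := ((ZMod.neg_eq_self_iff i).1 (neg_eq_of_add_eq_zero_left hi)).resolve_left hi0
  have hjval := ((ZMod.neg_eq_self_iff j).1 (neg_eq_of_add_eq_zero_left hj)).resolve_left hj0
  exact ZMod.val_injective n (by omega)

/-- The element `z β` is a central involution of the stabilizer of `β` in `X`. When `n` is even,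
this turns the points into the involutions of `X`, and the stabilizers into their centralizers. -/
structure IsCentralInvolution {G Pt : Type*} [Group G] [MulAction G Pt] (X : Subgroup G)
    (z : Pt → G) : Prop where
  mem : ∀ β, z β ∈ involutions (stabIn X β)
  commute : ∀ β, ∀ x ∈ stabIn X β, Commute x (z β)

namespace IsDihedralAction

variable {G Pt : Type*} [Group G] [MulAction G Pt] {X : Subgroup G} {n : ℕ} {z : Pt → G}

lemma exists_isCentralInvolution (h : IsDihedralAction X Pt n) (hn : Even n) :
    ∃ z : Pt → G, IsCentralInvolution X z := by
  have h3 := h.three_le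
  choose e he her using h.dihedral
  set m : ZMod n := ((n / 2 : ℕ) : ZMod n) with hm
  have hmm : m + m = 0 := by
    rw [hm, ← Nat.cast_add, ← two_mul, Nat.mul_div_cancel' hn.two_dvd, ZMod.natCast_self]
  have hm0 : m ≠ 0 := fun hc =>
    absurd (Nat.le_of_dvd (by omega) ((ZMod.natCast_eq_zero_iff _ _).1 hc)) (by omega)
  refine ⟨fun β => e β (.r m), fun β => ⟨her β ▸ ⟨_, rfl⟩, ?_, ?_⟩, fun β x hx => ?_⟩
  · rw [← map_mul, DihedralGroup.r_mul_r, hmm]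
    exact map_one _
  · rw [← map_one (e β), (he β).ne_iff, DihedralGroup.one_def, Ne, DihedralGroup.r.injEq]
    exact hm0
  · rw [← her] at hx
    obtain ⟨d, rfl⟩ := hx
    refine Commute.map (show d * .r m = .r m * d from ?_) (e β)
    cases d with
    | r i => rw [DihedralGroup.r_mul_r, DihedralGroup.r_mul_r, add_comm]
    | sr i =>
      rw [DihedralGroup.sr_mul_r, DihedralGroup.r_mul_sr, sub_eq_add_neg,
        neg_eq_of_add_eq_zero_left hmm]

lemma exists_r_eq (h : IsDihedralAction X Pt n) {β : Pt} {e : DihedralGroup n →* G}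
    (he : Function.Injective e) (her : e.range = stabIn X β) {x : G} (hx : x ∈ stabIn X β)
    (hcomm : ∀ y ∈ stabIn X β, Commute y x) : ∃ i, e (.r i) = x := by
  rw [← her] at hx
  obtain ⟨d, rfl⟩ := hx
  cases d with
  | r i => exact ⟨i, rfl⟩
  | sr i =>
    have hrot := (hcomm (e (.r 1)) (her ▸ ⟨_, rfl⟩)).eq
    rw [← map_mul, ← map_mul, he.eq_iff, DihedralGroup.sr_mul_r, DihedralGroup.r_mul_sr,
      DihedralGroup.sr.injEq] at hrot
    have htwo : ((2 : ℕ) : ZMod n) = 0 := by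
      push_cast
      linear_combination -hrot
    have h3 := h.three_le
    have := Nat.le_of_dvd two_pos ((ZMod.natCast_eq_zero_iff 2 n).1 htwo)
    omega

lemma eq_of_r_mem_involutions (h : IsDihedralAction X Pt n) {e : DihedralGroup n →* G}
    (he : Function.Injective e) {H : Subgroup G} {i j : ZMod n} (hi : e (.r i) ∈ involutions H)
    (hj : e (.r j) ∈ involutions H) : i = j := by
  have : NeZero n := ⟨by have := h.three_le; omega⟩
  have key (l : ZMod n) (hl : e (.r l) ∈ involutions H) : l + l = 0 ∧ l ≠ 0 := by
    refine ⟨?_, ?_⟩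
    · simpa only [← map_mul, ← map_one e, he.eq_iff, DihedralGroup.one_def,
        DihedralGroup.r_mul_r, DihedralGroup.r.injEq] using hl.2.1
    · rintro rfl
      exact hl.2.2 (map_one e)
  exact zmod_eq_of_add_self_eq_zero (key i hi).1 (key j hj).1 (key i hi).2 (key j hj).2

lemma eq_central_of_forall_commute (h : IsDihedralAction X Pt n) (hz : IsCentralInvolution X z)
    {β : Pt} {x : G} (hx : x ∈ involutions (stabIn X β))
    (hcomm : ∀ y ∈ stabIn X β, Commute y x) : x = z β := by
  obtain ⟨e, he, her⟩ := h.dihedral β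
  obtain ⟨i, rfl⟩ := h.exists_r_eq he her hx.1 hcomm
  obtain ⟨j, hj⟩ := h.exists_r_eq he her (hz.mem β).1 (hz.commute β)
  rw [← hj, h.eq_of_r_mem_involutions he hx (hj ▸ hz.mem β)]

lemma mem_involutions_ne_central_iff (h : IsDihedralAction X Pt n) (hz : IsCentralInvolution X z)
    {β : Pt} {e : DihedralGroup n →* G} (he : Function.Injective e) (her : e.range = stabIn X β)
    (x : G) : x ∈ involutions (stabIn X β) \ {z β} ↔ ∃ i, e (.sr i) = x := by
  obtain ⟨j, hj⟩ := h.exists_r_eq he her (hz.mem β).1 (hz.commute β)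
  rw [← hj]
  constructor
  · rintro ⟨hx, hne⟩
    obtain ⟨d, rfl⟩ : x ∈ e.range := her ▸ hx.1
    cases d with
    | sr i => exact ⟨i, rfl⟩
    | r i => exact absurd (by rw [h.eq_of_r_mem_involutions he hx (hj ▸ hz.mem β)]; rfl) hne
  · rintro ⟨i, rfl⟩
    refine ⟨⟨her ▸ ⟨_, rfl⟩, by rw [← map_mul, DihedralGroup.sr_mul_self, map_one], ?_⟩, ?_⟩
    · rw [← map_one e, he.ne_iff, DihedralGroup.one_def]
      exact nofun
    · rw [Set.mem_singleton_iff, he.eq_iff]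
      exact nofun

lemma ncard_involutions_ne_central (h : IsDihedralAction X Pt n) (hz : IsCentralInvolution X z)
    (β : Pt) : (involutions (stabIn X β) \ {z β}).ncard = n := by
  obtain ⟨e, he, her⟩ := h.dihedral β
  have hrange : involutions (stabIn X β) \ {z β} = Set.range fun i => e (.sr i) :=
    Set.ext (h.mem_involutions_ne_central_iff hz he her)
  have hinj : Function.Injective fun i : ZMod n => e (.sr i) := fun i j hij => by simpa using he hij
  rw [hrange, Set.ncard_range_of_injective hinj, Nat.card_zmod]

lemma mul_eq_central (h : IsDihedralAction X Pt n) (hz : IsCentralInvolution X z) {β : Pt} {x y : G}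
    (hx : x ∈ involutions (stabIn X β) \ {z β}) (hy : y ∈ involutions (stabIn X β) \ {z β})
    (hne : x ≠ y) (hsq : x * y * (x * y) = 1) : x * y = z β := by
  obtain ⟨e, he, her⟩ := h.dihedral β
  have hxy1 : x * y ≠ 1 := fun hc => hne <| by
    rw [eq_inv_of_mul_eq_one_left hc, inv_eq_self_of_mem_involutions hy.1]
  have hxy : x * y ∈ involutions (stabIn X β) := ⟨mul_mem hx.1.1 hy.1.1, hsq, hxy1⟩
  obtain ⟨i, rfl⟩ := (h.mem_involutions_ne_central_iff hz he her x).1 hx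
  obtain ⟨j, rfl⟩ := (h.mem_involutions_ne_central_iff hz he her y).1 hy
  obtain ⟨l, hl⟩ := h.exists_r_eq he her (hz.mem β).1 (hz.commute β)
  rw [← map_mul, DihedralGroup.sr_mul_sr] at hxy ⊢
  rw [← hl, h.eq_of_r_mem_involutions he hxy (hl ▸ hz.mem β)]

lemma conj_central (h : IsDihedralAction X Pt n) (hz : IsCentralInvolution X z) {g : G}
    (hg : g ∈ Subgroup.normalizer (X : Set G)) (β : Pt) : g * z β * g⁻¹ = z (g • β) := by
  obtain ⟨hzX, hzβ⟩ := mem_involutions_stabIn.1 (hz.mem β)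
  refine h.eq_central_of_forall_commute hz (mem_involutions_stabIn.2
    ⟨conj_mem_involutions hg hzX, by rw [mul_smul, mul_smul, inv_smul_smul, hzβ]⟩) fun y hy => ?_
  have hconj := conj_mem_stabIn (inv_mem hg) hy
  rw [inv_smul_smul] at hconj
  rw [← Commute.conj_iff (h := g⁻¹)]
  simpa [mul_assoc] using hz.commute β _ hconj

lemma smul_eq_iff_commute (h : IsDihedralAction X Pt n) (hz : IsCentralInvolution X z) {β : Pt}
    {x : G} (hx : x ∈ X) : x • β = β ↔ Commute x (z β) := by
  suffices hstab : X ⊓ Subgroup.centralizer {z β} = stabIn X β by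
    rw [← and_iff_right (a := x ∈ X) (b := x • β = β) hx, ← mem_stabIn, ← hstab, Subgroup.mem_inf,
      and_iff_right hx, Subgroup.mem_centralizer_singleton_iff]
    rfl
  have hle : stabIn X β ≤ X ⊓ Subgroup.centralizer {z β} := fun y hy =>
    ⟨hy.1, Subgroup.mem_centralizer_singleton_iff.2 (hz.commute β y hy)⟩
  refine ((h.covBy β).eq_or_eq hle inf_le_left).resolve_right fun htop => ?_
  have hcentral (g : G) (hg : g ∈ X) : Commute g (z β) :=
    Subgroup.mem_centralizer_singleton_iff.1 (inf_eq_left.1 htop hg)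
  have hnormal : X ≤ Subgroup.normalizer (Subgroup.zpowers (z β) : Set G) := by
    refine le_trans (fun g hg => Subgroup.mem_centralizer_iff.2 ?_)
      (Subgroup.centralizer_le_normalizer _)
    rintro _ ⟨i, rfl⟩
    exact ((hcentral g hg).zpow_right i).symm
  rcases h.simple _ (Subgroup.zpowers_le.2 (hz.mem β).1.1) hnormal with hbot | hX
  · exact (hz.mem β).2.2 (Subgroup.zpowers_eq_bot.1 hbot)
  · obtain ⟨x, hx, y, hy, hxy⟩ := h.exists_not_commute β
    obtain ⟨i, rfl⟩ : x ∈ Subgroup.zpowers (z β) := hX ▸ hx.1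
    exact hxy ((hcentral y hy.1).zpow_right i).symm

lemma central_injective (h : IsDihedralAction X Pt n) (hz : IsCentralInvolution X z) :
    Function.Injective z := fun β γ hβγ => h.stabIn_injective <| Subgroup.ext fun x => by
  simp only [mem_stabIn]
  refine and_congr_right fun hx => ?_
  rw [h.smul_eq_iff_commute hz hx, h.smul_eq_iff_commute hz hx, hβγ]

lemma commute_central_smul_iff (h : IsDihedralAction X Pt n) (hz : IsCentralInvolution X z) {g : G}
    (hg : g ∈ Subgroup.normalizer (X : Set G)) (β γ : Pt) :
    Commute (z (g • β)) (z (g • γ)) ↔ Commute (z β) (z γ) := by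
  rw [← h.conj_central hz hg, ← h.conj_central hz hg, Commute.conj_iff]

end IsDihedralAction

section CommutingGraph

variable {G Pt : Type*} [Group G] (z : Pt → G)

/-- The points adjacent to `α` in the commuting graph of the `z β`. -/
def neighbors (α : Pt) : Set Pt := {β | β ≠ α ∧ Commute (z α) (z β)}

/-- The points at distance two from `α` in the commuting graph of the `z β`. -/
def secondNeighbors (α : Pt) : Set Pt :=
  {β | ¬Commute (z α) (z β) ∧ ∃ γ, Commute (z α) (z γ) ∧ Commute (z γ) (z β)}

/-- The points at distance at least three from `α` in the commuting graph of the `z β`. -/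
def remotePoints (α : Pt) : Set Pt :=
  {β | ¬Commute (z α) (z β) ∧ ¬∃ γ, Commute (z α) (z γ) ∧ Commute (z γ) (z β)}

variable {z} {α β : Pt}

lemma mem_neighbors_comm : β ∈ neighbors z α ↔ α ∈ neighbors z β :=
  and_congr ne_comm (Commute.symm_iff ..)

lemma ncard_neighbors_add_ncard_remotePoints [Finite Pt] (α : Pt) :
    1 + (neighbors z α).ncard + (secondNeighbors z α).ncard + (remotePoints z α).ncard =
      Nat.card Pt := by
  have hneighbors : insert α (neighbors z α) = {β | Commute (z α) (z β)} := by
    ext β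
    by_cases hβ : β = α
    · simp [hβ]
    · simp [neighbors, hβ]
  have hothers : secondNeighbors z α ∪ remotePoints z α = {β | Commute (z α) (z β)}ᶜ := by
    ext β
    simp only [secondNeighbors, remotePoints, Set.mem_union, Set.mem_ofPred_eq, Set.mem_compl_iff,
      ← and_or_left, and_iff_left (em _)]
  have hdisj : Disjoint (secondNeighbors z α) (remotePoints z α) :=
    Set.disjoint_left.2 fun β hβ hβ' => hβ'.2 hβ.2
  rw [add_assoc, ← Set.ncard_union_eq hdisj, hothers,
    ← Set.ncard_add_ncard_compl {β | Commute (z α) (z β)}, ← hneighbors,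
    Set.ncard_insert_of_notMem fun hα => hα.1 rfl, add_comm 1]

end CommutingGraph

namespace IsPSL2Action

variable {F : Type*} [Field F] [Fintype F] {G Pt : Type*} [Group G] [MulAction G Pt]
  {π : SL(2, F) →* G} {n : ℕ} {z : Pt → G} {α β γ : Pt}

lemma smul_mem_neighbors (h : IsPSL2Action π Pt n) (hz : IsCentralInvolution π.range z) {g : G}
    (hg : g • α = α) (hβ : β ∈ neighbors z α) : g • β ∈ neighbors z α := by
  refine ⟨fun hc => hβ.1 (MulAction.injective g (hc.trans hg.symm)), ?_⟩
  nth_rw 1 [← hg]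
  exact (h.commute_central_smul_iff hz (h.mem_normalizer g) α β).2 hβ.2

lemma smul_mem_remotePoints (h : IsPSL2Action π Pt n) (hz : IsCentralInvolution π.range z) {g : G}
    (hg : g • α = α) (hβ : β ∈ remotePoints z α) : g • β ∈ remotePoints z α := by
  have hcomm := h.commute_central_smul_iff hz (h.mem_normalizer g)
  have hα (γ : Pt) : Commute (z α) (z (g • γ)) ↔ Commute (z α) (z γ) := by
    rw [← hcomm α γ, hg]
  refine ⟨fun hc => hβ.1 ((hα β).1 hc), fun ⟨γ, hαγ, hγβ⟩ => hβ.2 ⟨g⁻¹ • γ, ?_, ?_⟩⟩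
  · rwa [← hα, smul_inv_smul]
  · rwa [← hcomm, smul_inv_smul]

lemma exists_central_eq [Nonempty Pt] (h : IsPSL2Action π Pt n)
    (hz : IsCentralInvolution π.range z) {x : G} (hx : x ∈ involutions π.range) :
    ∃ β, z β = x := by
  obtain ⟨α⟩ := ‹Nonempty Pt›
  obtain ⟨g, -, rfl⟩ := h.exists_conj_eq (mem_involutions_stabIn.1 (hz.mem α)).1 hx
  exact ⟨g • α, (h.conj_central hz (h.mem_normalizer g) α).symm⟩

lemma central_mem_involutions_stabIn_iff (h : IsPSL2Action π Pt n)
    (hz : IsCentralInvolution π.range z) :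
    z β ∈ involutions (stabIn π.range α) ↔ Commute (z α) (z β) := by
  rw [mem_involutions_stabIn, and_iff_right (mem_involutions_stabIn.1 (hz.mem β)).1,
    h.smul_eq_iff_commute hz (hz.mem β).1.1, Commute.symm_iff]

lemma mem_neighbors_iff (h : IsPSL2Action π Pt n) (hz : IsCentralInvolution π.range z) :
    β ∈ neighbors z α ↔ z β ∈ involutions (stabIn π.range α) \ {z α} := by
  rw [Set.mem_sdiff, h.central_mem_involutions_stabIn_iff hz, Set.mem_singleton_iff,
    (h.central_injective hz).eq_iff, and_comm]
  rfl

lemma ncard_neighbors (h : IsPSL2Action π Pt n) (hz : IsCentralInvolution π.range z) (α : Pt) :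
    (neighbors z α).ncard = n := by
  have : Nonempty Pt := ⟨α⟩
  rw [← h.ncard_involutions_ne_central hz α,
    ← Set.ncard_image_of_injective _ (h.central_injective hz)]
  congr 1
  ext x
  constructor
  · rintro ⟨β, hβ, rfl⟩
    exact (h.mem_neighbors_iff hz).1 hβ
  · intro hx
    obtain ⟨β, rfl⟩ := h.exists_central_eq hz (mem_involutions_stabIn.1 hx.1).1
    exact ⟨β, (h.mem_neighbors_iff hz).2 hx, rfl⟩

lemma central_mul_central_eq (h : IsPSL2Action π Pt n) (hz : IsCentralInvolution π.range z)
    (hα : α ∈ neighbors z γ) (hβ : β ∈ neighbors z γ) (hne : α ≠ β) (hcomm : Commute (z α) (z β)) :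
    z α * z β = z γ := by
  have hα' := (h.mem_neighbors_iff hz).1 hα
  have hβ' := (h.mem_neighbors_iff hz).1 hβ
  have hzne : z α ≠ z β := (h.central_injective hz).ne hne
  exact h.mul_eq_central hz hα' hβ' hzne (mul_mem_involutions hα'.1 hβ'.1 hzne hcomm).2.1

lemma exists_setOf_mem_secondNeighbors_eq (h : IsPSL2Action π Pt n)
    (hz : IsCentralInvolution π.range z) (hγ : γ ∈ neighbors z α) :
    ∃ δ ∈ neighbors z γ, δ ≠ α ∧
      {β ∈ secondNeighbors z α | Commute (z γ) (z β)} = neighbors z γ \ {α, δ} := by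
  have : Nonempty Pt := ⟨α⟩
  have hzinj := h.central_injective hz
  have hinv (β : Pt) := (mem_involutions_stabIn.1 (hz.mem β)).1
  obtain ⟨δ, hδ⟩ := h.exists_central_eq hz
    (mul_mem_involutions (hinv α) (hinv γ) (hzinj.ne hγ.1.symm) hγ.2)
  have hδα : Commute (z α) (z δ) := hδ ▸ (Commute.refl _).mul_right hγ.2
  have hδγ : Commute (z γ) (z δ) := hδ ▸ hγ.2.symm.mul_right (Commute.refl _)
  refine ⟨δ, ⟨fun hc => (hz.mem α).2.2 ?_, hδγ⟩, fun hc => (hz.mem γ).2.2 ?_, ?_⟩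
  · rwa [hc, right_eq_mul] at hδ
  · rwa [hc, left_eq_mul] at hδ
  ext β
  constructor
  · rintro ⟨⟨hβ, -⟩, hγβ⟩
    refine ⟨⟨fun hc => hβ (hc ▸ hγ.2), hγβ⟩, ?_⟩
    rintro (rfl | rfl)
    exacts [hβ (Commute.refl _), hβ hδα]
  · rintro ⟨hβ, hβ'⟩
    refine ⟨⟨fun hαβ => hβ' ?_, γ, hγ.2, hβ.2⟩, hβ.2⟩
    by_contra hβαδ
    obtain ⟨hβα, hβδ⟩ := not_or.1 hβαδ
    refine hβδ (hzinj ?_)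
    rw [hδ, ← h.central_mul_central_eq hz (mem_neighbors_comm.1 hγ) hβ (Ne.symm hβα) hαβ,
      ← mul_assoc, (hz.mem α).2.1, one_mul]

lemma eq_of_commute_of_commute (h : IsPSL2Action π Pt n) (hz : IsCentralInvolution π.range z)
    (hαβ : ¬Commute (z α) (z β)) {γ γ' : Pt} (hγα : Commute (z α) (z γ))
    (hγβ : Commute (z γ) (z β)) (hγα' : Commute (z α) (z γ')) (hγβ' : Commute (z γ') (z β)) :
    γ = γ' := by
  by_contra hne
  have hzinj := h.central_injective hz
  have hneαβ : α ≠ β := fun hc => hαβ (hc ▸ Commute.refl _)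
  have hmem (δ : Pt) (hα : Commute (z α) (z δ)) (hβ : Commute (z δ) (z β)) :
      δ ∈ neighbors z α ∧ δ ∈ neighbors z β :=
    ⟨⟨fun hc => hαβ (hc ▸ hβ), hα⟩, ⟨fun hc => hαβ (hc ▸ hα), hβ.symm⟩⟩
  obtain ⟨hα, hβ⟩ := hmem γ hγα hγβ
  obtain ⟨hα', hβ'⟩ := hmem γ' hγα' hγβ'
  simp only [h.mem_neighbors_iff hz] at hα hβ hα' hβ'
  have hmulα := mul_mem hα.1.1 hα'.1.1
  have hsq := h.mul_self_eq_one_of_smul_eq hmulα.1 hneαβ hmulα.2 (mul_mem hβ.1.1 hβ'.1.1).2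
  exact hneαβ (hzinj ((h.mul_eq_central hz hα hα' (hzinj.ne hne) hsq).symm.trans
    (h.mul_eq_central hz hβ hβ' (hzinj.ne hne) hsq)))

variable [Finite Pt]

lemma ncard_secondNeighbors (h : IsPSL2Action π Pt n) (hz : IsCentralInvolution π.range z)
    (α : Pt) : (secondNeighbors z α).ncard = n * (n - 2) := by
  rw [← mul_one (Set.ncard _), ← h.ncard_neighbors hz α, eq_comm]
  refine ncard_mul_eq_ncard_mul (fun γ β => Commute (z γ) (z β)) (Set.toFinite _) (Set.toFinite _)
    (fun γ hγ => ?_) fun β ⟨hβ, γ, hγα, hγβ⟩ => Set.ncard_eq_one.2 ⟨γ, ?_⟩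
  · obtain ⟨δ, hδ, hδα, heq⟩ := h.exists_setOf_mem_secondNeighbors_eq hz hγ
    rw [heq, Set.ncard_sdiff (Set.pair_subset (mem_neighbors_comm.1 hγ) hδ),
      Set.ncard_pair hδα.symm, h.ncard_neighbors hz, h.ncard_neighbors hz]
  · refine Set.eq_singleton_iff_unique_mem.2 ⟨⟨⟨fun hc => hβ (hc ▸ hγβ), hγα⟩, hγβ⟩, ?_⟩
    rintro γ' ⟨hγ', hγβ'⟩
    exact h.eq_of_commute_of_commute hz hβ hγ'.2 hγβ' hγα hγβ

end IsPSL2Action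

namespace IsFlagTransitiveDesign

lemma exists_fixed_block_of_odd {G Pt : Type*} [Group G] [MulAction G Pt] [Finite Pt]
    {𝓑 : Set (Set Pt)} {k lam r : ℕ} (d : IsFlagTransitiveDesign G 𝓑 k lam r) (hlam : Odd lam)
    {x : G} (hx : x * x = 1) {α β : Pt} (hne : α ≠ β) (hα : x • α = α) (hβ : x • β = β) :
    ∃ B ∈ 𝓑, α ∈ B ∧ β ∈ B ∧ x • B = B := by
  classical
  have hmem (C : Set Pt) (hC : C ∈ {B ∈ 𝓑 | α ∈ B ∧ β ∈ B}) :
      x • C ∈ {B ∈ 𝓑 | α ∈ B ∧ β ∈ B} := by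
    refine ⟨d.actsOn x C hC.1, ?_, ?_⟩
    · simpa only [hα] using Set.smul_mem_smul_set (a := x) hC.2.1
    · simpa only [hβ] using Set.smul_mem_smul_set (a := x) hC.2.2
  let σ : {B ∈ 𝓑 | α ∈ B ∧ β ∈ B} → {B ∈ 𝓑 | α ∈ B ∧ β ∈ B} := fun C => ⟨x • C.1, hmem C.1 C.2⟩
  have hσ : Function.Involutive σ := fun C => Subtype.ext (by
    change x • x • C.1 = C.1
    rw [smul_smul, hx, one_smul])
  have := Fintype.ofFinite {B ∈ 𝓑 | α ∈ B ∧ β ∈ B}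
  have hodd : ¬2 ∣ Fintype.card {B ∈ 𝓑 | α ∈ B ∧ β ∈ B} := by
    rwa [← Nat.card_eq_fintype_card, Nat.card_coe_set_eq, d.ncard_blocks_mem_mem hne,
      ← even_iff_two_dvd, Nat.not_even_iff_odd]
  obtain ⟨⟨C, hC⟩, hfix⟩ := Equiv.Perm.exists_fixed_point_of_prime (p := 2) (n := 1) hodd
    (σ := hσ.toPerm) (Equiv.ext fun C => by simpa [sq] using hσ C)
  exact ⟨C, hC.1, hC.2.1, hC.2.2, congrArg Subtype.val hfix⟩

end IsFlagTransitiveDesign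

namespace IsPSL2Action

variable {F : Type*} [Field F] [Fintype F] {G Pt : Type*} [Group G] [MulAction G Pt] [Finite Pt]
  {π : SL(2, F) →* G} {n k r : ℕ} {z : Pt → G} {𝓑 : Set (Set Pt)} {α : Pt} {B : Set Pt}

lemma central_smul_block (h : IsPSL2Action π Pt n) (hz : IsCentralInvolution π.range z)
    (d : IsFlagTransitiveDesign G 𝓑 k 3 r) (hB : B ∈ 𝓑) (hα : α ∈ B) : z α • B = B := by
  have hne : (neighbors z α).Nonempty := Set.nonempty_of_ncard_ne_zero (by
    rw [h.ncard_neighbors hz]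
    have := h.three_le
    omega)
  obtain ⟨β, hβα, hβ⟩ := hne
  obtain ⟨C, hC, hαC, -, hzC⟩ := d.exists_fixed_block_of_odd (by decide) (hz.mem α).2.1 hβα.symm
    (hz.mem α).1.2 ((h.smul_eq_iff_commute hz (hz.mem α).1.1).2 hβ)
  obtain ⟨g, rfl, hgα⟩ := d.flagTransitive C hC B hB α hαC α hα
  have hconj := h.conj_central hz (h.mem_normalizer g) α
  rw [hgα] at hconj
  rw [smul_smul, ← hconj, inv_mul_cancel_right, mul_smul, hzC]

lemma ncard_remotePoints (h : IsPSL2Action π Pt n) (hz : IsCentralInvolution π.range z)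
    (hq : Fintype.card F % 2 = 1) (α : Pt) : (remotePoints z α).ncard = n * (n - 2) := by
  have : Nonempty Pt := ⟨α⟩
  have hsum := ncard_neighbors_add_ncard_remotePoints (z := z) α
  have hcard := h.card_points_sub_one_of_odd hq
  have h3 := h.three_le
  rw [h.ncard_neighbors hz, h.ncard_secondNeighbors hz] at hsum
  have hmul : n * (2 * n - 3) = n + 2 * (n * (n - 2)) := by
    rw [show 2 * n - 3 = 1 + 2 * (n - 2) by omega]
    ring
  omega

lemma ncard_block_inter (h : IsPSL2Action π Pt n) (hz : IsCentralInvolution π.range z)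
    (d : IsFlagTransitiveDesign G 𝓑 k 3 (3 * r)) (hq : Fintype.card F % 2 = 1) (hB : B ∈ 𝓑)
    (hα : α ∈ B) : (B ∩ neighbors z α).ncard = 1 ∧ (B ∩ remotePoints z α).ncard = n - 2 := by
  have : Nonempty Pt := ⟨α⟩
  have hneighbors := d.mul_ncard_inter_eq (fun hc => hc.1 rfl)
    (fun g hg β => h.smul_mem_neighbors hz hg) hB hα
  have hremote := d.mul_ncard_inter_eq (fun hc => hc.1 (Commute.refl _))
    (fun g hg β => h.smul_mem_remotePoints hz hg) hB hα
  rw [h.ncard_neighbors hz, mul_assoc] at hneighbors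
  rw [h.ncard_remotePoints hz hq, mul_assoc] at hremote
  have hn := Nat.eq_of_mul_eq_mul_left three_pos hneighbors
  obtain ⟨-, rfl⟩ := h.block_size_eq_of_dvd d hq ⟨_, hn.symm⟩
  have hpos : 0 < r := by have := h.three_le; omega
  exact ⟨Nat.eq_of_mul_eq_mul_left hpos (by rw [hn, mul_one]),
    Nat.eq_of_mul_eq_mul_left hpos (Nat.eq_of_mul_eq_mul_left three_pos hremote)⟩

end IsPSL2Action

section Antidiagonal

variable {F : Type*} [Field F]

/-- The antidiagonal matrix of determinant one with upper right entry `u`. -/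
def antidiag (u : Fˣ) : SL(2, F) :=
  ofEntries 0 (u : F) (-(u : F)⁻¹) 0 (by simp)

lemma antidiag_mul_antidiag (u w : Fˣ) :
    antidiag u * antidiag w = antidiag (u ^ 2 * w⁻¹) * antidiag u := by
  have := u.ne_zero
  have := w.ne_zero
  rw [entries_ext_iff]
  simp only [antidiag, mul_entry, ofEntries_zero_zero, ofEntries_zero_one, ofEntries_one_zero,
    ofEntries_one_one, Units.val_mul, Units.val_pow_eq_pow_val, Units.val_inv_eq_inv_val]
  refine ⟨?_, ?_, ?_, ?_⟩ <;> field_simp <;> ring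

lemma antidiag_neg (u : Fˣ) : antidiag (-u) = -antidiag u := by
  simp [entries_ext_iff, antidiag]

lemma antidiag_injective : Function.Injective (antidiag (F := F)) := fun u w huw =>
  Units.ext (by simpa [antidiag] using ((entries_ext_iff).1 huw).2.1)

lemma trace_antidiag (u : Fˣ) : (antidiag u).1.trace = 0 := by
  simp [antidiag, ofEntries, trace_fin_two]

lemma eq_or_eq_neg_antidiag_one_or_symm (h2 : (2 : F) ≠ 0) {A : SL(2, F)} (ht : A.1.trace = 0)
    (hc : A * antidiag 1 = antidiag 1 * A ∨ A * antidiag 1 = -(antidiag 1 * A)) :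
    (A = antidiag 1 ∨ A = -antidiag 1) ∨ A 0 1 = A 1 0 := by
  have hd := entries_det A
  rw [trace_fin_two] at ht
  simp only [entries_ext_iff, antidiag, mul_entry, neg_entry, ofEntries_zero_zero,
    ofEntries_zero_one, ofEntries_one_zero, ofEntries_one_one, Units.val_one, inv_one] at hc ⊢
  rcases hc with ⟨h₀₀, h₀₁, -⟩ | ⟨h₀₀, -⟩
  · have ha : A 0 0 = 0 := (mul_eq_zero.1 (show 2 * A 0 0 = 0 by
      linear_combination h₀₁ + ht)).resolve_left h2
    have hd₁ : A 1 1 = 0 := by linear_combination ht - ha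
    have hc : A 1 0 = -A 0 1 := by linear_combination -h₀₀
    have hb : A 0 1 * A 0 1 = 1 := by
      rw [ha, hc] at hd
      linear_combination hd
    left
    rcases mul_self_eq_one_iff.1 hb with hb | hb
    · exact Or.inl ⟨ha, hb, by rw [hc, hb], hd₁⟩
    · exact Or.inr ⟨by rw [ha, neg_zero], hb, by rw [hc, hb], by rw [hd₁, neg_zero]⟩
  · exact Or.inr (by linear_combination -h₀₀)

lemma sq_eq_one_of_symm_conj_antidiag (hsq : ¬IsSquare (-1 : F)) {A : SL(2, F)}
    (ht : A.1.trace = 0) (hsymm : A 0 1 = A 1 0) {u w : Fˣ}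
    (hc : A * antidiag u = antidiag w * A ∨ A * antidiag u = -(antidiag w * A)) : u ^ 2 = 1 := by
  have hdet := entries_det A
  have hu := u.ne_zero
  have hw := w.ne_zero
  rw [trace_fin_two] at ht
  have hd : A 1 1 = -A 0 0 := by linear_combination ht
  have hb : A 1 0 ≠ 0 := by
    intro hb
    rw [hb, hd] at hdet
    exact hsq ⟨A 0 0, by linear_combination hdet⟩
  have ha : A 0 0 ≠ 0 := by
    intro ha
    rw [hsymm, ha] at hdet
    exact hsq ⟨A 1 0, by linear_combination hdet⟩
  simp only [entries_ext_iff, antidiag, mul_entry, neg_entry, ofEntries_zero_zero,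
    ofEntries_zero_one, ofEntries_one_zero, ofEntries_one_one, hd, hsymm] at hc
  have huu : (u : F) ^ 2 = 1 := by
    rcases hc with ⟨h₀₀, h₀₁, -⟩ | ⟨h₀₀, h₀₁, -⟩
    · have hwu : (w : F) = -u := mul_left_cancel₀ ha (by linear_combination h₀₁)
      rw [hwu] at h₀₀
      field_simp at h₀₀
      exact mul_left_cancel₀ hb (by linear_combination h₀₀)
    · have hwu : (w : F) = u := mul_left_cancel₀ ha (by linear_combination -h₀₁)
      rw [hwu] at h₀₀
      field_simp at h₀₀
      exact mul_left_cancel₀ hb (by linear_combination h₀₀)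
  exact Units.ext (by rw [Units.val_pow_eq_pow_val, huu, Units.val_one])

end Antidiagonal

namespace IsPSL2Action

variable {F : Type*} [Field F] [Fintype F] {G Pt : Type*} [Group G] [MulAction G Pt]
  {π : SL(2, F) →* G} {n k r : ℕ} {z : Pt → G} {𝓑 : Set (Set Pt)} {B : Set Pt}

lemma map_mul_eq_map_mul_iff (h : IsPSL2Action π Pt n) {A B C D : SL(2, F)} :
    π A * π B = π C * π D ↔ A * B = C * D ∨ A * B = -(C * D) := by
  rw [← map_mul, ← map_mul, h.eq_iff]

lemma map_antidiag_mem_involutions (h : IsPSL2Action π Pt n) (u : Fˣ) :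
    π (antidiag u) ∈ involutions π.range := by
  refine h.map_mem_involutions_iff.2 ⟨trace_antidiag u, fun hc => ?_⟩
  rw [h.map_eq_one_iff, entries_ext_iff, entries_ext_iff] at hc
  simp [antidiag] at hc

section AntidiagonalPoints

variable {p : Fˣ → Pt}

lemma antidiag_point_eq_iff (h : IsPSL2Action π Pt n) (hz : IsCentralInvolution π.range z)
    (hp : ∀ u, z (p u) = π (antidiag u)) {u w : Fˣ} : p u = p w ↔ u = w ∨ u = -w := by
  rw [← (h.central_injective hz).eq_iff, hp, hp, h.eq_iff, ← antidiag_neg,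
    antidiag_injective.eq_iff, antidiag_injective.eq_iff]

lemma central_smul_antidiag_point (h : IsPSL2Action π Pt n) (hz : IsCentralInvolution π.range z)
    (hp : ∀ u, z (p u) = π (antidiag u)) (u w : Fˣ) :
    z (p u) • p w = p (u ^ 2 * w⁻¹) := by
  apply h.central_injective hz
  rw [← h.conj_central hz (h.mem_normalizer _), hp, hp, hp, mul_inv_eq_iff_eq_mul, ← map_mul,
    antidiag_mul_antidiag, map_mul]

lemma card_sub_one_le_two_mul_ncard_range (h : IsPSL2Action π Pt n)
    (hz : IsCentralInvolution π.range z) (hp : ∀ u, z (p u) = π (antidiag u)) :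
    Fintype.card F - 1 ≤ 2 * (Set.range p).ncard := by
  have hle := ncard_mul_le_ncard_mul (fun u β => p u = β) (s := Set.univ) (t := Set.range p)
    (a := 1) (b := 2) (Set.toFinite _) (Set.toFinite _)
    (fun u _ => Nat.one_le_iff_ne_zero.2 (Set.ncard_ne_zero_of_mem (a := p u) ⟨⟨u, rfl⟩, rfl⟩
      (Set.toFinite _))) (by
      rintro _ ⟨w, rfl⟩
      exact (Set.ncard_le_ncard (t := {w, -w}) fun u hu =>
        (h.antidiag_point_eq_iff hz hp).1 hu.2).trans (Set.ncard_insert_le _ _) |>.trans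
          (by rw [Set.ncard_singleton]))
  classical
  rw [Set.ncard_univ, Nat.card_eq_fintype_card, Fintype.card_units] at hle
  omega

lemma sq_eq_one_of_smul_antidiag_point_eq (h : IsPSL2Action π Pt n)
    (hz : IsCentralInvolution π.range z) (hq : Fintype.card F % 4 = 3)
    (hp : ∀ u, z (p u) = π (antidiag u)) {γ : Pt} (hγ : γ ∈ neighbors z (p 1)) {u w : Fˣ}
    (huw : z γ • p u = p w) : u ^ 2 = 1 := by
  have h2 : (2 : F) ≠ 0 := fun hc => by have := two_eq_zero_iff_card_mod_two.1 hc; omega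
  have hsq : ¬IsSquare (-1 : F) := fun hc => FiniteField.isSquare_neg_one_iff.1 hc hq
  have hγinv := (mem_involutions_stabIn.1 (hz.mem γ)).1
  obtain ⟨A, hA⟩ := hγinv.1
  have htrace := (h.map_mem_involutions_iff.1 (hA ▸ hγinv)).1
  have hcomm := hγ.2.symm.eq
  rw [← hA, hp, h.map_mul_eq_map_mul_iff] at hcomm
  have hconj := h.conj_central hz (h.mem_normalizer (z γ)) (p u)
  rw [huw, hp, hp, ← hA, mul_inv_eq_iff_eq_mul, h.map_mul_eq_map_mul_iff] at hconj
  refine sq_eq_one_of_symm_conj_antidiag hsq htrace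
    ((eq_or_eq_neg_antidiag_one_or_symm h2 htrace hcomm).resolve_left fun hA1 => hγ.1 ?_) hconj
  exact h.central_injective hz (by rw [← hA, hp, h.eq_iff]; exact hA1)

lemma antidiag_point_mem_remotePoints (h : IsPSL2Action π Pt n)
    (hz : IsCentralInvolution π.range z) (hq : Fintype.card F % 4 = 3)
    (hp : ∀ u, z (p u) = π (antidiag u)) {u : Fˣ} (hu : p u ≠ p 1) :
    p u ∈ remotePoints z (p 1) := by
  have husq : u ^ 2 ≠ 1 := fun hc =>
    hu ((h.antidiag_point_eq_iff hz hp).2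
      (Units.eq_or_eq_neg_of_sq_eq_sq _ _ (hc.trans (one_pow 2).symm)))
  have hne (γ : Pt) (hγ : γ ∈ neighbors z (p 1)) : ¬Commute (z γ) (z (p u)) := fun hc =>
    husq (h.sq_eq_one_of_smul_antidiag_point_eq hz hq hp hγ
      ((h.smul_eq_iff_commute hz (hz.mem γ).1.1).2 hc))
  have hu1 : ¬Commute (z (p 1)) (z (p u)) := fun hc => hne (p u) ⟨hu, hc⟩ (Commute.refl _)
  exact ⟨hu1, fun ⟨γ, hγ1, hγu⟩ => hne γ ⟨fun hc => hu1 (hc ▸ hγu), hγ1⟩ hγu⟩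

variable [Finite Pt]

/-- The reflection in `p (a ^ (i + 1))` maps `p (a ^ i)` to `p (a ^ (i + 2))`, so a block through
`p 1` and `p a` picks up all the points `p (a ^ i)` in turn. -/
lemma antidiag_point_pow_mem_block (h : IsPSL2Action π Pt n) (hz : IsCentralInvolution π.range z)
    (d : IsFlagTransitiveDesign G 𝓑 k 3 r) (hp : ∀ u, z (p u) = π (antidiag u)) (hB : B ∈ 𝓑)
    {a : Fˣ} (h1 : p 1 ∈ B) (ha : p a ∈ B) (i : ℕ) : p (a ^ i) ∈ B := by
  suffices hpow : p (a ^ i) ∈ B ∧ p (a ^ (i + 1)) ∈ B from hpow.1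
  induction i with
  | zero => simpa using ⟨h1, ha⟩
  | succ i ih =>
    refine ⟨ih.2, ?_⟩
    have hexp : a ^ (i + 1 + 1) = (a ^ (i + 1)) ^ 2 * (a ^ i)⁻¹ := by
      rw [eq_mul_inv_iff_mul_eq, ← pow_add, ← pow_mul]
      congr 1
      ring
    rw [hexp, ← h.central_smul_antidiag_point hz hp, ← h.central_smul_block hz d hB ih.2]
    exact Set.smul_mem_smul_set ih.1

lemma range_antidiag_point_eq (h : IsPSL2Action π Pt n) (hz : IsCentralInvolution π.range z)
    (d : IsFlagTransitiveDesign G 𝓑 k 3 (3 * r)) (hq : Fintype.card F % 4 = 3)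
    (hp : ∀ u, z (p u) = π (antidiag u)) (hB : B ∈ 𝓑) (hall : ∀ u, p u ∈ B) :
    Set.range p \ {p 1} = B ∩ remotePoints z (p 1) := by
  have : Nonempty Pt := ⟨p 1⟩
  refine Set.eq_of_subset_of_ncard_le ?_ ?_
  · rintro _ ⟨⟨u, rfl⟩, hu⟩
    exact ⟨hall u, h.antidiag_point_mem_remotePoints hz hq hp hu⟩
  · rw [Set.ncard_sdiff_singleton_of_mem (Set.mem_range_self 1),
      (h.ncard_block_inter hz d (by omega) hB (hall 1)).2]
    have := h.card_sub_one_le_two_mul_ncard_range hz hp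
    have := h.two_mul_n_of_odd (by omega)
    omega

end AntidiagonalPoints

theorem false_of_three_mod_four [Finite Pt] [Nonempty Pt] (h : IsPSL2Action π Pt n)
    (d : IsFlagTransitiveDesign G 𝓑 k 3 (3 * r)) (hq : Fintype.card F % 4 = 3) : False := by
  classical
  have hcard := h.four_le
  have h2n := h.two_mul_n_of_odd (by omega)
  obtain ⟨z, hz⟩ := h.exists_isCentralInvolution (by rw [Nat.even_iff]; omega)
  choose p hp using fun u => h.exists_central_eq hz (h.map_antidiag_mem_involutions u)
  obtain ⟨a, ha⟩ := IsCyclic.exists_monoid_generator (α := Fˣ)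
  have ha2 : a ^ 2 ≠ 1 := by
    intro hc
    have hle := Nat.le_of_dvd two_pos (orderOf_dvd_of_pow_eq_one hc)
    rw [orderOf_eq_card_of_forall_mem_powers ha, Nat.card_eq_fintype_card,
      Fintype.card_units] at hle
    omega
  have hpa : p a ≠ p 1 := by
    rw [Ne, h.antidiag_point_eq_iff hz hp]
    rintro (rfl | rfl) <;> simp at ha2
  obtain ⟨B, hB, haB, h1B⟩ := d.exists_block_mem_mem hpa
  have hall (u : Fˣ) : p u ∈ B := by
    obtain ⟨i, rfl⟩ := ha u
    exact h.antidiag_point_pow_mem_block hz d hp hB h1B haB i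
  have hrange := h.range_antidiag_point_eq hz d hq hp hB hall
  obtain ⟨β, hβ⟩ := Set.ncard_eq_one.1 (h.ncard_block_inter hz d (by omega) hB h1B).1
  obtain ⟨hβB, hβ1⟩ : β ∈ B ∩ neighbors z (p 1) := hβ ▸ Set.mem_singleton β
  have hfix : z β • p 1 = p 1 := (h.smul_eq_iff_commute hz (hz.mem β).1.1).2 hβ1.2.symm
  have hmem : z β • p a ∈ B ∩ remotePoints z (p 1) := by
    refine ⟨?_, h.smul_mem_remotePoints hz hfix
      (h.antidiag_point_mem_remotePoints hz hq hp hpa)⟩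
    rw [← h.central_smul_block hz d hB hβB]
    exact Set.smul_mem_smul_set haB
  rw [← hrange] at hmem
  obtain ⟨⟨w, hw⟩, -⟩ := hmem
  exact ha2 (h.sq_eq_one_of_smul_antidiag_point_eq hz hq hp hβ1 hw.symm)

end IsPSL2Action

/-! ### Automorphisms of `SL(2, F)` in characteristic two -/

lemma card_ringHom_le {F : Type*} [Field F] [Fintype F] {p f : ℕ} [Fact p.Prime]
    (hf : Fintype.card F = p ^ f) : Nat.card (F →+* F) ≤ f := by
  have := charP_of_card_eq_prime_pow hf
  let _ : Algebra (ZMod p) F := ZMod.algebra F p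
  have hfinrank : Module.finrank (ZMod p) F = f := by
    have hcard := Module.card_eq_pow_finrank (K := ZMod p) (V := F)
    rw [hf, ZMod.card] at hcard
    exact (Nat.pow_right_injective (Fact.out : p.Prime).two_le hcard).symm
  let toAlgHom (φ : F →+* F) : F →ₐ[ZMod p] F :=
    { φ with commutes' := RingHom.congr_fun (Subsingleton.elim (φ.comp (algebraMap (ZMod p) F)) _) }
  have hinj : Function.Injective toAlgHom := fun φ ψ hφψ =>
    RingHom.ext fun x => DFunLike.congr_fun hφψ x
  exact ((Nat.card_le_card_of_injective _ hinj).trans (card_algHom_le_finrank _ _ _)).trans_eq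
    hfinrank

section Generators

variable {F : Type*} [Field F]

/-- The upper unitriangular matrix with upper right entry `x`. -/
abbrev unipotent (x : F) : SL(2, F) :=
  Matrix.SpecialLinearGroup.transvection zero_ne_one x

/-- The diagonal matrix with entries `t` and `t⁻¹`, as a homomorphism from `Fˣ`. -/
noncomputable def torus : Fˣ →* SL(2, F) where
  toFun t := Matrix.SpecialLinearGroup.diag2 t t.ne_zero
  map_one' := by simp [entries_ext_iff, Matrix.SpecialLinearGroup.diag2_coe']
  map_mul' s t := by
    simp [entries_ext_iff, Matrix.SpecialLinearGroup.diag2_coe', mul_comm]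

@[simp]
lemma coe_unipotent (x : F) : (unipotent x).1 = !![1, x; 0, 1] := by
  ext i j
  fin_cases i <;> fin_cases j <;>
    simp [Matrix.SpecialLinearGroup.transvection_coe]

@[simp]
lemma coe_torus (t : Fˣ) : (torus t).1 = !![(t : F), 0; 0, (t : F)⁻¹] :=
  Matrix.SpecialLinearGroup.diag2_coe' t.ne_zero

lemma unipotent_add (x y : F) : unipotent (x + y) = unipotent x * unipotent y := by
  simp [entries_ext_iff, add_comm]

lemma unipotent_injective : Function.Injective (unipotent (F := F)) := fun x y hxy => by
  simpa using ((entries_ext_iff).1 hxy).2.1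

lemma commute_unipotent (x y : F) : Commute (unipotent x) (unipotent y) := by
  rw [Commute, SemiconjBy, ← unipotent_add, add_comm, unipotent_add]

lemma torus_mul_unipotent (t : Fˣ) (x : F) :
    torus t * unipotent x = unipotent ((t : F) ^ 2 * x) * torus t := by
  have := t.ne_zero
  simp only [entries_ext_iff, mul_entry, coe_torus, coe_unipotent, of_apply, cons_val',
    cons_val_zero, cons_val_fin_one, cons_val_one, mul_one, mul_zero, add_zero, one_mul, zero_add,
    zero_mul, and_self, and_true, true_and]
  field_simp

lemma weyl_mul_torus (t : Fˣ) : weyl * torus t = torus t⁻¹ * weyl := by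
  simp [entries_ext_iff, weyl]

lemma diag_eq_zero_of_mul_torus_eq {W : SL(2, F)} {a : Fˣ} (ha : a ^ 2 ≠ 1)
    (hW : W * torus a = torus a⁻¹ * W) : W 0 0 = 0 ∧ W 1 1 = 0 := by
  have ha0 := a.ne_zero
  have hsq : (a : F) ^ 2 - 1 ≠ 0 := fun hc =>
    ha (Units.ext (by rw [Units.val_pow_eq_pow_val, sub_eq_zero.1 hc, Units.val_one]))
  obtain ⟨h₀₀, -, -, h₁₁⟩ := (entries_ext_iff).1 hW
  simp only [mul_entry, coe_torus, of_apply, cons_val', cons_val_zero, cons_val_fin_one,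
    cons_val_one, mul_zero, add_zero, Units.val_inv_eq_inv_val, inv_inv, zero_mul,
    zero_add] at h₀₀ h₁₁
  field_simp at h₀₀ h₁₁
  exact ⟨(mul_eq_zero.1 (by linear_combination h₀₀)).resolve_left hsq,
    (mul_eq_zero.1 (by linear_combination -h₁₁)).resolve_left hsq⟩

lemma eq_one_of_apply_unipotent_of_apply_weyl {θ : MulAut SL(2, F)}
    (hunipotent : ∀ x, θ (unipotent x) = unipotent x) (hweyl : θ weyl = weyl) : θ = 1 := by
  refine MulEquiv.ext fun A => SL2.transvection_induction (fun A => θ A = A) ?_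
    (fun A B hA hB => by rw [map_mul, hA, hB]) A
  intro i j hij x
  fin_cases i <;> fin_cases j
  · exact absurd rfl hij
  · exact hunipotent x
  · have hconj : Matrix.SpecialLinearGroup.transvection hij x =
        weyl * unipotent (-x) * weyl⁻¹ := by
      rw [eq_mul_inv_iff_mul_eq]
      simp [entries_ext_iff, weyl, Matrix.SpecialLinearGroup.transvection_coe]
    rw [hconj, map_mul, map_mul, map_inv, hunipotent, hweyl]
  · exact absurd rfl hij

lemma eq_zero_of_mul_unipotent_one_eq {A : SL(2, F)} {y : F}
    (hA : A * unipotent 1 = unipotent y * A) : A 1 0 = 0 := by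
  simpa [entries_ext_iff] using ((entries_ext_iff).1 hA).2.2.2

lemma exists_unipotent_mul_eq_torus_mul {A : SL(2, F)} (hA : A 1 0 = 0) (hne : A 0 0 ≠ A 1 1) :
    ∃ s t, unipotent s * A = torus t * unipotent s := by
  have hdet := entries_det A
  rw [hA, mul_zero, sub_zero] at hdet
  have ha : A 0 0 ≠ 0 := left_ne_zero_of_mul_eq_one hdet
  have hd := eq_inv_of_mul_eq_one_right hdet
  have hs := div_mul_cancel₀ (A 0 1) (sub_ne_zero.2 hne)
  refine ⟨A 0 1 / (A 0 0 - A 1 1), Units.mk0 _ ha, ?_⟩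
  simp only [entries_ext_iff, mul_entry, coe_torus, coe_unipotent, hA, ← hd, Units.val_mk0,
    of_apply, cons_val', cons_val_zero, cons_val_fin_one, cons_val_one, one_mul, mul_zero, add_zero,
    mul_one, zero_mul, zero_add, and_self, and_true, true_and]
  linear_combination -hs

variable [CharP F 2]

lemma exists_eq_unipotent {A : SL(2, F)} (hA : Commute A (unipotent 1)) :
    ∃ x, A = unipotent x := by
  have hdet := entries_det A
  have hc := eq_zero_of_mul_unipotent_one_eq hA.eq
  have had : A 0 0 = A 1 1 := by
    have hupper : A 0 0 + A 0 1 = A 0 1 + A 1 1 := by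
      simpa using ((entries_ext_iff).1 hA.eq).2.1
    linear_combination hupper
  have hd : A 1 1 = 1 := by
    rw [hc, had, mul_zero, sub_zero, ← sq] at hdet
    exact CharTwo.sq_injective (hdet.trans (one_pow 2).symm)
  exact ⟨A 0 1, by simp [entries_ext_iff, hc, had, hd]⟩

end Generators

section Automorphisms

variable {F : Type*} [Field F] {θ θ' : MulAut SL(2, F)}

/-- The automorphisms of `SL(2, F)` which fix `unipotent 1` and preserve the torus. In
characteristic two they are the automorphisms induced by those of `F`. -/
def standardAutomorphisms (F : Type*) [Field F] : Set (MulAut SL(2, F)) :=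
  {θ | θ (unipotent 1) = unipotent 1 ∧ ∀ s, ∃ t, θ (torus s) = torus t}

lemma apply_unipotent_sq_mul {s t : Fˣ} (hst : θ (torus s) = torus t) {x y : F}
    (hxy : θ (unipotent x) = unipotent y) :
    θ (unipotent ((s : F) ^ 2 * x)) = unipotent ((t : F) ^ 2 * y) := by
  apply mul_right_cancel (b := torus t)
  rw [← torus_mul_unipotent, ← hst, ← hxy, ← map_mul, ← map_mul, ← torus_mul_unipotent]

variable [CharP F 2]

lemma exists_apply_unipotent_eq (h1 : θ (unipotent 1) = unipotent 1) (x : F) :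
    ∃ y, θ (unipotent x) = unipotent y := by
  have hcomm := (commute_unipotent x 1).map θ
  rw [h1] at hcomm
  exact exists_eq_unipotent hcomm

lemma exists_ringHom_apply_unipotent_eq [Finite F] (hθ : θ ∈ standardAutomorphisms F) :
    ∃ φ : F →+* F, ∀ x, θ (unipotent x) = unipotent (φ x) := by
  obtain ⟨h1, htorus⟩ := hθ
  choose ψ hψ using exists_apply_unipotent_eq h1
  have hadd (x y : F) : ψ (x + y) = ψ x + ψ y :=
    unipotent_injective (by rw [← hψ, unipotent_add, unipotent_add, map_mul, hψ, hψ])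
  have hzero : ψ 0 = 0 := by simpa using hadd 0 0
  have hone : ψ 1 = 1 := unipotent_injective (by rw [← hψ, h1])
  have hsq_mul {s t : Fˣ} (hst : θ (torus s) = torus t) (x : F) :
      ψ ((s : F) ^ 2 * x) = (t : F) ^ 2 * ψ x :=
    unipotent_injective (by rw [← hψ, apply_unipotent_sq_mul hst (hψ x)])
  have hmul (x y : F) : ψ (x * y) = ψ x * ψ y := by
    obtain ⟨s, rfl⟩ := FiniteField.isSquare_of_char_two (ringChar.eq_iff.2 ‹CharP F 2›) x
    obtain rfl | hs := eq_or_ne s 0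
    · simp only [zero_mul, hzero]
    lift s to Fˣ using hs.isUnit
    obtain ⟨t, ht⟩ := htorus s
    have hsq := hsq_mul ht 1
    rw [mul_one, hone, mul_one] at hsq
    rw [← sq, hsq_mul ht, hsq]
  exact ⟨⟨⟨⟨ψ, hone⟩, hmul⟩, hzero, hadd⟩, hψ⟩

lemma apply_torus_eq_of_apply_unipotent_eq (hθ : θ ∈ standardAutomorphisms F)
    (hθ' : θ' ∈ standardAutomorphisms F) (h : ∀ x, θ (unipotent x) = θ' (unipotent x)) (s : Fˣ) :
    θ (torus s) = θ' (torus s) := by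
  obtain ⟨t, ht⟩ := hθ.2 s
  obtain ⟨t', ht'⟩ := hθ'.2 s
  have hsq := h ((s : F) ^ 2 * 1)
  rw [apply_unipotent_sq_mul ht hθ.1, apply_unipotent_sq_mul ht' hθ'.1, mul_one, mul_one] at hsq
  rw [ht, ht', Units.ext (CharTwo.sq_injective (unipotent_injective hsq))]

lemma eq_weyl_of_pow_three {W : SL(2, F)} (ha : W 0 0 = 0) (hd : W 1 1 = 0)
    (hcube : (unipotent 1 * W) ^ 3 = 1) : W = weyl := by
  have hdet := entries_det W
  rw [ha, zero_mul, zero_sub] at hdet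
  have hc : W 1 0 ≠ 0 := fun hc => by simp [hc] at hdet
  have hlower : W 1 0 * W 1 0 * (W 1 0 + W 0 1) = 0 := by
    have hentry := ((entries_ext_iff).1 hcube).2.2.1
    simp only [pow_succ, pow_zero, one_mul, mul_entry, coe_unipotent, of_apply, cons_val',
      cons_val_zero, cons_val_fin_one, cons_val_one, ha, hd, mul_zero, zero_add, zero_mul, add_zero,
      Matrix.SpecialLinearGroup.coe_one, ne_eq, one_ne_zero, not_false_eq_true,
      one_apply_ne] at hentry
    linear_combination hentry
  have hbc : W 1 0 + W 0 1 = 0 := (mul_eq_zero.1 hlower).resolve_left (mul_ne_zero hc hc)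
  have hc1 : W 1 0 = 1 :=
    CharTwo.sq_injective (show W 1 0 ^ 2 = 1 ^ 2 by linear_combination hdet + W 1 0 * hbc)
  have hb1 : W 0 1 = -1 := by linear_combination hbc - hc1
  simp [entries_ext_iff, weyl, ha, hb1, hc1, hd]

/-- The image of `weyl` inverts the torus, so it is antidiagonal, and the relation
`(unipotent 1 * weyl) ^ 3 = 1` then pins it down. -/
lemma eq_one_of_apply_unipotent_of_apply_torus (hunipotent : ∀ x, θ (unipotent x) = unipotent x)
    (htorus : ∀ s, θ (torus s) = torus s) {a : Fˣ} (ha : a ≠ 1) : θ = 1 := by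
  refine eq_one_of_apply_unipotent_of_apply_weyl hunipotent ?_
  have hconj := congrArg θ (weyl_mul_torus a)
  rw [map_mul, map_mul, htorus, htorus] at hconj
  obtain ⟨hW₀₀, hW₁₁⟩ := diag_eq_zero_of_mul_torus_eq
    (fun hc => ha (Units.ext (CharTwo.sq_injective (by simpa using congrArg Units.val hc)))) hconj
  refine eq_weyl_of_pow_three hW₀₀ hW₁₁ ?_
  have hcube : (unipotent (1 : F) * weyl) ^ 3 = 1 := by
    rw [← neg_eq_self_of_two_eq_zero CharTwo.two_eq_zero 1]
    simp [entries_ext_iff, weyl, pow_succ]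
  rw [← hunipotent, ← map_mul, ← map_pow, hcube, map_one]

lemma standardAutomorphisms_ext {a : Fˣ} (ha : a ≠ 1) (hθ : θ ∈ standardAutomorphisms F)
    (hθ' : θ' ∈ standardAutomorphisms F) (h : ∀ x, θ (unipotent x) = θ' (unipotent x)) :
    θ = θ' := by
  rw [← inv_mul_eq_one]
  refine eq_one_of_apply_unipotent_of_apply_torus (fun x => ?_) (fun s => ?_) ha
  · rw [MulAut.mul_apply, ← h, MulAut.inv_apply_self]
  · rw [MulAut.mul_apply, ← apply_torus_eq_of_apply_unipotent_eq hθ hθ' h, MulAut.inv_apply_self]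

lemma ncard_standardAutomorphisms_le [Fintype F] {f : ℕ} (hf : Fintype.card F = 2 ^ f)
    {a : Fˣ} (ha : a ≠ 1) : (standardAutomorphisms F).ncard ≤ f := by
  choose φ hφ using fun θ : standardAutomorphisms F => exists_ringHom_apply_unipotent_eq θ.2
  have hinj : Function.Injective φ := fun θ θ' hθθ' => Subtype.ext
    (standardAutomorphisms_ext ha θ.2 θ'.2 fun x => by rw [hφ, hφ, hθθ'])
  have : Finite (F →+* F) := Finite.of_injective _ DFunLike.coe_injective
  exact (Nat.card_le_card_of_injective φ hinj).trans (card_ringHom_le hf)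

lemma exists_conj_eq_of_mul_self_eq_one [Finite F] {A B : SL(2, F)} (hA : A * A = 1) (hA1 : A ≠ 1)
    (hB : B * B = 1) (hB1 : B ≠ 1) : ∃ P, P * A * P⁻¹ = B := by
  have exists_weyl {C : SL(2, F)} (hC : C * C = 1) (hC1 : C ≠ 1) : ∃ P, C = P * weyl * P⁻¹ := by
    have hC2 : C ≠ -1 := by rwa [neg_eq_self_of_two_eq_zero CharTwo.two_eq_zero]
    obtain ⟨P, hP⟩ := exists_mul_eq_mul_weyl hC1 hC2
      (((eq_one_or_eq_neg_one_or_trace_eq_zero_of_mul_self_eq_one hC).resolve_left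
        hC1).resolve_left hC2)
    exact ⟨P, eq_mul_inv_of_mul_eq hP⟩
  obtain ⟨P, rfl⟩ := exists_weyl hA hA1
  obtain ⟨Q, rfl⟩ := exists_weyl hB hB1
  exact ⟨Q * P⁻¹, by group⟩

lemma exists_conj_mul_apply_unipotent_one [Finite F] (θ : MulAut SL(2, F)) :
    ∃ P : SL(2, F), (MulAut.conj P * θ) (unipotent (1 : F)) = unipotent 1 := by
  have hzero : unipotent (0 : F) = 1 := by simp
  have hsq : unipotent (1 : F) * unipotent 1 = 1 := by
    rw [← unipotent_add, CharTwo.add_self_eq_zero, hzero]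
  have hne : unipotent (1 : F) ≠ 1 := by
    rw [← hzero]
    exact unipotent_injective.ne one_ne_zero
  have himage_sq : θ (unipotent 1) * θ (unipotent 1) = 1 := by rw [← map_mul, hsq, map_one]
  have himage_ne : θ (unipotent 1) ≠ 1 := (MulEquiv.map_ne_one_iff θ).2 hne
  exact exists_conj_eq_of_mul_self_eq_one himage_sq himage_ne hsq hne

/-- If the diagonal entries of `θ (torus a)` agree, then `θ (torus a)` is unipotent, so it commutes
with `unipotent 1`, and `torus a` would do so too. -/
lemma exists_unipotent_mul_apply_torus (h1 : θ (unipotent 1) = unipotent 1) {a : Fˣ}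
    (ha : a ≠ 1) : ∃ s t, unipotent s * θ (torus a) = torus t * unipotent s := by
  obtain ⟨y, hy⟩ := exists_apply_unipotent_eq h1 ((a : F) ^ 2 * 1)
  have hc : θ (torus a) 1 0 = 0 := eq_zero_of_mul_unipotent_one_eq (y := y) (by
    rw [← hy, ← h1, ← map_mul, ← map_mul, torus_mul_unipotent])
  refine exists_unipotent_mul_eq_torus_mul hc fun hdiag => ha ?_
  have hdet := entries_det (θ (torus a))
  rw [hc, hdiag, mul_zero, sub_zero, ← sq] at hdet
  have hd : θ (torus a) 1 1 = 1 := CharTwo.sq_injective (hdet.trans (one_pow 2).symm)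
  have hunipotent : θ (torus a) = unipotent (θ (torus a) 0 1) := by
    simp [entries_ext_iff, hc, hd, hdiag]
  have hcomm := commute_unipotent (θ (torus a) 0 1) 1
  rw [← hunipotent, ← h1, Commute, SemiconjBy, ← map_mul, ← map_mul, θ.injective.eq_iff,
    torus_mul_unipotent] at hcomm
  have hsq := unipotent_injective (mul_right_cancel hcomm)
  exact Units.ext (CharTwo.sq_injective (by simpa using hsq))

lemma exists_conj_mul_mem_standardAutomorphisms [Finite F] {a : Fˣ} (ha : a ≠ 1)
    (θ : MulAut SL(2, F)) : ∃ P, MulAut.conj P * θ ∈ standardAutomorphisms F := by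
  obtain ⟨P, hP⟩ := exists_conj_mul_apply_unipotent_one θ
  obtain ⟨g, hg⟩ := IsCyclic.exists_monoid_generator (α := Fˣ)
  have hg1 : g ≠ 1 := by
    rintro rfl
    exact ha (by simpa using hg a)
  obtain ⟨s, t, hst⟩ := exists_unipotent_mul_apply_torus hP hg1
  refine ⟨unipotent s * P, ?_, fun u => ?_⟩
  all_goals rw [map_mul, mul_assoc, MulAut.mul_apply, MulAut.conj_apply]
  · rw [hP, mul_inv_eq_iff_eq_mul, (commute_unipotent s 1).eq]
  · obtain ⟨i, rfl⟩ := hg u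
    refine ⟨t ^ i, ?_⟩
    change unipotent s * (MulAut.conj P * θ) (torus (g ^ i)) * (unipotent s)⁻¹ = torus (t ^ i)
    rw [map_pow, map_pow, map_pow, ← conj_pow, hst, mul_inv_cancel_right]

end Automorphisms

section CardAut

variable {F : Type*} [Field F] [Fintype F] {f : ℕ}

theorem card_mulAut_le (hf : Fintype.card F = 2 ^ f) (hq : 4 ≤ Fintype.card F) :
    Nat.card (MulAut SL(2, F)) ≤ Nat.card SL(2, F) * f := by
  have := charP_of_card_eq_prime_pow hf
  classical
  have : Nontrivial Fˣ := Fintype.one_lt_card_iff_nontrivial.1 (by rw [Fintype.card_units]; omega)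
  obtain ⟨a, ha⟩ := exists_ne (1 : Fˣ)
  have hsurj : Function.Surjective
      fun p : SL(2, F) × standardAutomorphisms F => MulAut.conj p.1 * p.2 := by
    intro θ
    obtain ⟨P, hP⟩ := exists_conj_mul_mem_standardAutomorphisms ha θ
    refine ⟨(P⁻¹, ⟨_, hP⟩), ?_⟩
    change MulAut.conj P⁻¹ * (MulAut.conj P * θ) = θ
    rw [map_inv, inv_mul_cancel_left]
  calc Nat.card (MulAut SL(2, F))
      ≤ Nat.card (SL(2, F) × standardAutomorphisms F) := Nat.card_le_card_of_surjective _ hsurj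
    _ = Nat.card SL(2, F) * (standardAutomorphisms F).ncard := Nat.card_prod _ _
    _ ≤ Nat.card SL(2, F) * f := Nat.mul_le_mul_left _ (ncard_standardAutomorphisms_le hf ha)

lemma card_le_card_mulAut_of_normal {S G : Type*} [Group S] [Group G] [Finite S] {π : S →* G}
    (hinj : Function.Injective π) (hnormal : π.range.Normal)
    (hcentralizer : Subgroup.centralizer (π.range : Set G) = ⊥) :
    Nat.card G ≤ Nat.card (MulAut S) := by
  let conj : G →* MulAut S :=
    (MulAut.congr (MonoidHom.ofInjective hinj).symm).toMonoidHom.comp MulAut.conjNormal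
  refine Nat.card_le_card_of_injective conj ((injective_iff_map_eq_one _).2 fun g hg => ?_)
  have hconj : MulAut.conjNormal g = (1 : MulAut π.range) :=
    (MulAut.congr (MonoidHom.ofInjective hinj).symm).injective (hg.trans (map_one _).symm)
  rw [← Subgroup.mem_bot, ← hcentralizer, Subgroup.mem_centralizer_iff]
  intro x hx
  have hgx := congrArg Subtype.val (DFunLike.congr_fun hconj ⟨x, hx⟩)
  rw [MulAut.conjNormal_apply] at hgx
  exact (mul_inv_eq_iff_eq_mul.1 hgx).symm

theorem IsPSL2Action.card_le {G Pt : Type*} [Group G] [MulAction G Pt] {π : SL(2, F) →* G} {n : ℕ}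
    (h : IsPSL2Action π Pt n) (hf : Fintype.card F = 2 ^ f) (h2 : (2 : F) = 0) :
    Nat.card G ≤ Nat.card π.range * f := by
  have hinj := h.injective h2
  rw [← Nat.card_congr (MonoidHom.ofInjective hinj).toEquiv]
  exact (card_le_card_mulAut_of_normal hinj h.normal h.centralizer_eq_bot).trans
    (card_mulAut_le hf h.four_le)

end CardAut

/-! ### The case `q` even -/

section FlagStabilizers

variable {G Pt : Type*} [Group G] [MulAction G Pt] {X K : Subgroup G} {𝓑 : Set (Set Pt)} {n : ℕ}

lemma smul_involutions (a : MulAut G) (X : Subgroup G) :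
    a • involutions X = involutions (a • X) := by
  ext x
  rw [Set.mem_smul_set_iff_inv_smul_mem]
  simp only [involutions, Set.mem_ofPred_eq, Subgroup.mem_pointwise_smul_iff_inv_smul_mem, ne_eq,
    MulAut.smul_def, ← map_mul, map_eq_one_iff _ (a⁻¹ : MulAut G).injective]

lemma conj_smul_stabIn (g : G) (X : Subgroup G) (β : Pt) :
    MulAut.conj g • stabIn X β = stabIn (MulAut.conj g • X) (g • β) := by
  rw [stabIn, stabIn, Subgroup.smul_inf, MulAction.stabilizer_smul_eq_stabilizer_map_conj]
  rfl

/-- The stabilizer in `X` of the flag `(α, B)`. -/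
abbrev flagStabIn (X : Subgroup G) (α : Pt) (B : Set Pt) : Subgroup G := stabIn (stabIn X α) B

/-- The blocks through `α` fixed by `x`. -/
def fixedBlocks (𝓑 : Set (Set Pt)) (x : G) (α : Pt) : Set (Set Pt) :=
  {C ∈ 𝓑 | α ∈ C ∧ x • C = C}

lemma ncard_fixedBlocks_conj (hacts : ActsOn G 𝓑) (g x : G) (α : Pt) :
    (fixedBlocks 𝓑 (g * x * g⁻¹) (g • α)).ncard = (fixedBlocks 𝓑 x α).ncard := by
  have hsmul : fixedBlocks 𝓑 (g * x * g⁻¹) (g • α) = g • fixedBlocks 𝓑 x α := by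
    ext C
    have hmem : g⁻¹ • C ∈ 𝓑 ↔ C ∈ 𝓑 :=
      ⟨fun hC => smul_inv_smul g C ▸ hacts g _ hC, hacts g⁻¹ C⟩
    rw [Set.mem_smul_set_iff_inv_smul_mem]
    simp only [fixedBlocks, Set.mem_ofPred_eq, hmem, mul_smul, Set.mem_inv_smul_set_iff,
      eq_inv_smul_iff]
  rw [hsmul, Set.ncard_smul_set]

lemma ncard_fixedBy_conj_inter_smul (g x : G) (B : Set Pt) :
    (MulAction.fixedBy Pt (g * x * g⁻¹) ∩ g • B).ncard = (MulAction.fixedBy Pt x ∩ B).ncard := by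
  rw [← MulAction.smul_fixedBy, ← Set.smul_set_inter, Set.ncard_smul_set]

section Normal

variable [X.Normal]

lemma conj_smul_flagStabIn (g : G) (α : Pt) (B : Set Pt) :
    MulAut.conj g • flagStabIn X α B = flagStabIn X (g • α) (g • B) := by
  rw [conj_smul_stabIn, conj_smul_stabIn, Subgroup.Normal.conj_smul_eq_self]

lemma ncard_involutions_flagStabIn_eq (hflag : FlagTransitive G 𝓑) {α β : Pt} {B C : Set Pt}
    (hB : B ∈ 𝓑) (hC : C ∈ 𝓑) (hα : α ∈ B) (hβ : β ∈ C) :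
    (involutions (flagStabIn X α B)).ncard = (involutions (flagStabIn X β C)).ncard := by
  obtain ⟨g, rfl, rfl⟩ := hflag B hB C hC α hα β hβ
  rw [← conj_smul_flagStabIn, ← smul_involutions, Set.ncard_smul_set]

end Normal

lemma exists_conj_eq_of_pow_mul_eq_one (hn : Odd n) {x y : G} (hxK : x ∈ K) (hyK : y ∈ K)
    (hx : x * x = 1) (hy : y * y = 1) (hxy : (x * y) ^ n = 1) : ∃ g ∈ K, g * x * g⁻¹ = y := by
  obtain ⟨m, rfl⟩ := hn
  refine ⟨(x * y) ^ m, pow_mem (mul_mem hxK hyK) m, ?_⟩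
  have hinv : x * (x * y) * x⁻¹ = (x * y)⁻¹ := by
    rw [_root_.mul_inv_rev, ← mul_assoc, hx, one_mul, inv_eq_of_mul_eq_one_left hy,
      inv_eq_of_mul_eq_one_left hx]
  have hcomm : x * ((x * y) ^ m)⁻¹ = (x * y) ^ m * x := by
    rw [← inv_pow, ← hinv, conj_pow, ← mul_assoc, ← mul_assoc, hx, one_mul,
      inv_eq_of_mul_eq_one_left hx]
  calc (x * y) ^ m * x * ((x * y) ^ m)⁻¹ = (x * y) ^ (2 * m) * x := by
        rw [mul_assoc, hcomm, ← mul_assoc, ← pow_add, two_mul]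
    _ = (x * y)⁻¹ * x := by rw [eq_inv_of_mul_eq_one_left ((pow_succ _ _).symm.trans hxy)]
    _ = y := by rw [_root_.mul_inv_rev, inv_mul_cancel_right, inv_eq_of_mul_eq_one_left hy]

namespace IsDihedralAction

lemma mul_pow_eq_one (h : IsDihedralAction X Pt n) (hn : Odd n) {β : Pt} {x y : G}
    (hx : x ∈ involutions (stabIn X β)) (hy : y ∈ involutions (stabIn X β)) :
    (x * y) ^ n = 1 := by
  obtain ⟨e, he, her⟩ := h.dihedral β
  obtain ⟨i, rfl⟩ := (mem_involutions_stabIn_iff hn he her x).1 hx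
  obtain ⟨j, rfl⟩ := (mem_involutions_stabIn_iff hn he her y).1 hy
  rw [← map_mul, ← map_pow, DihedralGroup.sr_mul_sr, DihedralGroup.r_pow, CharP.cast_eq_zero,
    mul_zero, DihedralGroup.r_zero, map_one]

lemma exists_conj_eq (h : IsDihedralAction X Pt n) (hn : Odd n) {β : Pt} (hK : K ≤ stabIn X β)
    {x y : G} (hx : x ∈ involutions K) (hy : y ∈ involutions K) : ∃ g ∈ K, g * x * g⁻¹ = y :=
  exists_conj_eq_of_pow_mul_eq_one hn hx.1 hy.1 hx.2.1 hy.2.1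
    (h.mul_pow_eq_one hn ⟨hK hx.1, hx.2⟩ ⟨hK hy.1, hy.2⟩)

lemma mul_mem_involutions_iff (h : IsDihedralAction X Pt n) (hn : Odd n) {β : Pt}
    (hK : K ≤ stabIn X β) {x y : G} (hx : x ∈ involutions K) (hy : y ∈ K) :
    x * y ∈ involutions K ↔ y ∉ involutions K := by
  obtain ⟨e, he, her⟩ := h.dihedral β
  have hinv (z : G) (hz : z ∈ K) : z ∈ involutions K ↔ ∃ i, e (.sr i) = z := by
    rw [← mem_involutions_stabIn_iff hn he her]
    exact ⟨fun hzK => ⟨hK hz, hzK.2⟩, fun hzX => ⟨hz, hzX.2⟩⟩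
  obtain ⟨d, rfl⟩ : y ∈ e.range := her ▸ hK hy
  obtain ⟨i, rfl⟩ := (hinv x hx.1).1 hx
  rw [hinv _ hy, hinv _ (mul_mem hx.1 hy), ← map_mul]
  simp only [he.eq_iff]
  cases d <;> simp [DihedralGroup.sr_mul_r, DihedralGroup.sr_mul_sr]

lemma card_eq_two_mul_ncard_involutions [Finite G] (h : IsDihedralAction X Pt n) (hn : Odd n)
    {β : Pt} (hK : K ≤ stabIn X β) (hne : (involutions K).Nonempty) :
    Nat.card K = 2 * (involutions K).ncard := by
  obtain ⟨x, hx⟩ := hne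
  have hcompl : (K : Set G) \ involutions K = x • involutions K := by
    ext y
    rw [Set.mem_smul_set_iff_inv_smul_mem, smul_eq_mul, inv_eq_self_of_mem_involutions hx]
    refine ⟨fun hy => (h.mul_mem_involutions_iff hn hK hx hy.1).2 hy.2, fun hy => ?_⟩
    have hyK : y ∈ K := (mul_mem_cancel_left hx.1).1 hy.1
    exact ⟨hyK, (h.mul_mem_involutions_iff hn hK hx hyK).1 hy⟩
  have hsub : involutions K ⊆ K := fun _ hy => hy.1
  rw [← SetLike.coe_sort_coe, Nat.card_coe_set_eq, ← Set.ncard_sdiff_add_ncard_of_subset hsub,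
    hcompl, Set.ncard_smul_set, two_mul]

lemma ncard_fixedBy_inter_eq [X.Normal] (h : IsDihedralAction X Pt n) (hn : Odd n)
    (hflag : FlagTransitive G 𝓑) {α β : Pt} {B C : Set Pt} {x y : G} (hB : B ∈ 𝓑) (hC : C ∈ 𝓑)
    (hα : α ∈ B) (hβ : β ∈ C) (hx : x ∈ involutions (flagStabIn X α B))
    (hy : y ∈ involutions (flagStabIn X β C)) :
    (MulAction.fixedBy Pt x ∩ B).ncard = (MulAction.fixedBy Pt y ∩ C).ncard := by
  obtain ⟨g, rfl, rfl⟩ := hflag B hB C hC α hα β hβ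
  have hgx : g * x * g⁻¹ ∈ involutions (flagStabIn X (g • α) (g • B)) := by
    rw [← conj_smul_flagStabIn, ← smul_involutions]
    exact Set.smul_mem_smul_set hx
  obtain ⟨a, ha, rfl⟩ := h.exists_conj_eq hn inf_le_left hgx hy
  rw [← ncard_fixedBy_conj_inter_smul g x, ← ncard_fixedBy_conj_inter_smul a (g * x * g⁻¹),
    (mem_stabIn.1 ha).2]

lemma ncard_fixedBlocks_eq [X.Normal] (h : IsDihedralAction X Pt n) (hn : Odd n)
    (hacts : ActsOn G 𝓑) {α β : Pt} {x y : G} (hx : x ∈ involutions (stabIn X α))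
    (hy : y ∈ involutions (stabIn X β)) :
    (fixedBlocks 𝓑 x α).ncard = (fixedBlocks 𝓑 y β).ncard := by
  obtain ⟨g, -, rfl⟩ := h.transitive α β
  have hgx : g * x * g⁻¹ ∈ involutions (stabIn X (g • α)) := by
    rw [← Subgroup.Normal.conj_smul_eq_self g X, ← conj_smul_stabIn, ← smul_involutions]
    exact Set.smul_mem_smul_set hx
  obtain ⟨a, ha, rfl⟩ := h.exists_conj_eq hn le_rfl hgx hy
  rw [← ncard_fixedBlocks_conj hacts g, ← ncard_fixedBlocks_conj hacts a,
    (mem_stabIn.1 ha).2]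

end IsDihedralAction

end FlagStabilizers

lemma eq_of_sum_eq_ncard_mul {α β : Type*} (R : α → β → Prop) {s : Set α} {t : Set β} {a b : ℕ}
    (hs : s.Finite) (ht : t.Finite) (ha : ∀ x ∈ s, {y ∈ t | R x y}.ncard = a)
    (hb : ∀ y ∈ t, {x ∈ s | R x y}.ncard ≤ b) (heq : s.ncard * a = t.ncard * b) {y : β}
    (hy : y ∈ t) : {x ∈ s | R x y}.ncard = b := by
  classical
  lift s to Finset α using hs
  lift t to Finset β using ht
  simp only [Finset.mem_coe, ← Finset.coe_filter, Set.ncard_coe_finset] at ha hb heq hy ⊢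
  refine (Finset.sum_eq_sum_iff_of_le hb).1 ?_ y hy
  rw [Finset.sum_const, smul_eq_mul, ← heq, ← smul_eq_mul, ← Finset.sum_const,
    ← Finset.sum_congr rfl ha]
  exact (Finset.sum_card_bipartiteAbove_eq_sum_card_bipartiteBelow R).symm

lemma card_dvd_ncard_mul {G Y : Type*} [Group G] [MulAction G Y] [Finite G] {K : Subgroup G}
    {S : Set Y} (hfin : S.Finite) (hS : ∀ g ∈ K, ∀ y ∈ S, g • y ∈ S) {m : ℕ}
    (hm : ∀ y ∈ S, Nat.card (stabIn K y) = m) : Nat.card K ∣ S.ncard * m := by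
  let T : SubMulAction K Y := ⟨S, fun g y hy => hS g.1 g.2 y hy⟩
  have : Fintype T := hfin.fintype
  have e : (Σ g : K, MulAction.fixedBy T g) ≃ Σ y : T, stabIn K y.1 :=
    ⟨fun p => ⟨p.2.1, p.1, p.1.2, congrArg Subtype.val p.2.2⟩,
      fun p => ⟨⟨p.2.1, p.2.2.1⟩, p.1, Subtype.ext p.2.2.2⟩, fun _ => rfl, fun _ => rfl⟩
  have hburnside := Nat.card_congr (e.symm.trans (MulAction.sigmaFixedByEquivOrbitsProdGroup K T))
  rw [Nat.card_prod, Nat.card_sigma, Finset.sum_congr rfl fun y _ => hm y.1 y.2, Finset.sum_const,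
    smul_eq_mul, Finset.card_univ, ← Nat.card_eq_fintype_card] at hburnside
  exact Dvd.intro_left _ hburnside.symm

section FixedBlocks

variable {G Pt : Type*} [Group G] [MulAction G Pt] {𝓑 : Set (Set Pt)} {k lam r w : ℕ} {x : G}
  {α : Pt}

lemma ncard_fixedBy_sdiff_mem (hxα : x • α = α) {C : Set Pt} (hαC : α ∈ C) :
    {β ∈ MulAction.fixedBy Pt x \ {α} | β ∈ C}.ncard = (MulAction.fixedBy Pt x ∩ C).ncard - 1 := by
  rw [Set.sep_mem_eq, ← Set.inter_sdiff_right_comm,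
    Set.ncard_sdiff_singleton_of_mem (show α ∈ MulAction.fixedBy Pt x ∩ C from ⟨hxα, hαC⟩)]

variable [Finite Pt]

namespace IsFlagTransitiveDesign

lemma ncard_fixedBlocks_mem_le (d : IsFlagTransitiveDesign G 𝓑 k lam r) {β : Pt} (hne : α ≠ β) :
    {C ∈ fixedBlocks 𝓑 x α | β ∈ C}.ncard ≤ lam := by
  rw [← d.ncard_blocks_mem_mem hne]
  exact Set.ncard_le_ncard (fun C hC => ⟨hC.1.1, hC.1.2.1, hC.2⟩) (Set.toFinite _)

lemma ncard_fixedBy_sub_one_le (d : IsFlagTransitiveDesign G 𝓑 k lam r) (hlam : Odd lam)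
    (hx : x * x = 1) (hxα : x • α = α)
    (hw : ∀ C ∈ fixedBlocks 𝓑 x α, (MulAction.fixedBy Pt x ∩ C).ncard = w) :
    (MulAction.fixedBy Pt x).ncard - 1 ≤ (fixedBlocks 𝓑 x α).ncard * (w - 1) := by
  rw [← Set.ncard_sdiff_singleton_of_mem (show α ∈ MulAction.fixedBy Pt x from hxα),
    ← mul_one (Set.ncard _)]
  refine ncard_mul_le_ncard_mul (fun β C => β ∈ C) (Set.toFinite _) (Set.toFinite _) ?_
    fun C hC => ((ncard_fixedBy_sdiff_mem hxα hC.2.1).trans (by rw [hw C hC])).le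
  rintro β ⟨hβ, hβα⟩
  obtain ⟨C, hC, hαC, hβC, hxC⟩ := d.exists_fixed_block_of_odd hlam hx (Ne.symm hβα) hxα hβ
  exact (Set.ncard_pos (Set.toFinite _)).2 ⟨C, ⟨hC, hαC, hxC⟩, hβC⟩

lemma ncard_fixedBlocks_mem_eq (d : IsFlagTransitiveDesign G 𝓑 k lam r) (hxα : x • α = α)
    (hw : ∀ C ∈ fixedBlocks 𝓑 x α, (MulAction.fixedBy Pt x ∩ C).ncard = w)
    (heq : (fixedBlocks 𝓑 x α).ncard * (w - 1) = lam * ((MulAction.fixedBy Pt x).ncard - 1))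
    {β : Pt} (hβ : x • β = β) (hne : α ≠ β) : {C ∈ fixedBlocks 𝓑 x α | β ∈ C}.ncard = lam := by
  refine eq_of_sum_eq_ncard_mul (fun C γ => γ ∈ C) (t := MulAction.fixedBy Pt x \ {α})
    (Set.toFinite _) (Set.toFinite _)
    (fun C hC => by rw [ncard_fixedBy_sdiff_mem hxα hC.2.1, hw C hC])
    (fun γ hγ => d.ncard_fixedBlocks_mem_le (Ne.symm hγ.2)) ?_ ⟨hβ, hne.symm⟩
  rw [heq, Set.ncard_sdiff_singleton_of_mem (show α ∈ MulAction.fixedBy Pt x from hxα), mul_comm]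

/-- The fixed blocks through the fixed points of `x` induce a design on them, to which Fisher's
inequality applies. -/
lemma le_ncard_fixedBlocks (d : IsFlagTransitiveDesign G 𝓑 k lam r) {c : ℕ}
    (hc : ∀ β ∈ MulAction.fixedBy Pt x, (fixedBlocks 𝓑 x β).ncard = c)
    (hw : ∀ β ∈ MulAction.fixedBy Pt x, ∀ C ∈ fixedBlocks 𝓑 x β,
      (MulAction.fixedBy Pt x ∩ C).ncard = w)
    (heq : c * (w - 1) = lam * ((MulAction.fixedBy Pt x).ncard - 1))
    (hlt : w < (MulAction.fixedBy Pt x).ncard) : w ≤ c := by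
  have hfixed {β : Pt} (hβ : x • β = β) : {C ∈ {C ∈ 𝓑 | x • C = C ∧
      (MulAction.fixedBy Pt x ∩ C).Nonempty} | β ∈ C} = fixedBlocks 𝓑 x β := by
    ext C
    exact ⟨fun hC => ⟨hC.1.1, hC.2, hC.1.2.1⟩, fun hC => ⟨⟨hC.1, hC.2.2, β, hβ, hC.2.1⟩, hC.2.1⟩⟩
  obtain rfl | hw0 := Nat.eq_zero_or_pos w
  · exact Nat.zero_le c
  have hlam : lam < c := lt_of_not_ge fun hle => heq.not_lt <|
    (Nat.mul_le_mul_right _ hle).trans_lt (Nat.mul_lt_mul_of_pos_left (by omega) d.lam_pos)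
  refine le_of_pairwise_eq (R := fun β C => β ∈ C) (lam := lam) (s := MulAction.fixedBy Pt x)
    (t := {C ∈ 𝓑 | x • C = C ∧ (MulAction.fixedBy Pt x ∩ C).Nonempty})
    (Set.toFinite _) (Set.toFinite _) (Set.nonempty_of_ncard_ne_zero (by omega)) ?_ ?_ ?_ hlam
  · rintro C ⟨hC, hxC, β, hβ, hβC⟩
    exact hw β hβ C ⟨hC, hβC, hxC⟩
  · exact fun β hβ => (congrArg Set.ncard (hfixed hβ)).trans (hc β hβ)
  · intro β hβ γ hγ hne
    rw [← d.ncard_fixedBlocks_mem_eq hβ (hw β hβ) (by rw [hc β hβ, heq]) hγ hne, ← hfixed hβ]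
    simp only [Set.mem_ofPred_eq, and_assoc]

lemma ncard_fixedBlocks_le_one (d : IsFlagTransitiveDesign G 𝓑 k lam r)
    (hw : ∀ C ∈ fixedBlocks 𝓑 x α, (MulAction.fixedBy Pt x ∩ C).ncard = k)
    (hk : (MulAction.fixedBy Pt x).ncard = k) : (fixedBlocks 𝓑 x α).ncard ≤ 1 := by
  have hfix (C : Set Pt) (hC : C ∈ fixedBlocks 𝓑 x α) : C = MulAction.fixedBy Pt x := by
    have hinter : (MulAction.fixedBy Pt x ∩ C) = C :=
      Set.eq_of_subset_of_ncard_le Set.inter_subset_right (by rw [hw C hC, d.ncard_block hC.1])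
    exact Set.eq_of_subset_of_ncard_le (Set.inter_eq_right.1 hinter)
      (by rw [hk, d.ncard_block hC.1])
  exact (Set.ncard_le_one (Set.toFinite _)).2 fun C hC D hD => (hfix C hC).trans (hfix D hD).symm

end IsFlagTransitiveDesign

end FixedBlocks

section FieldAutomorphisms

variable {G Pt F : Type*} [Group G] [MulAction G Pt] [Field F] [Fintype F] {X : Subgroup G}
  {π : SL(2, F) →* G} {𝓑 : Set (Set Pt)} {n k lam r f : ℕ} {α : Pt} {B : Set Pt} {x : G}

namespace IsPSL2Action

lemma odd_of_even (h : IsPSL2Action π Pt n) (hq : Fintype.card F % 2 = 0) : Odd n := by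
  rw [h.n_eq_of_even hq]
  exact (Nat.even_iff.2 hq).add_one

lemma two_mul_ncard_fixedBy [Finite Pt] [Nonempty Pt] (h : IsPSL2Action π Pt n)
    (hq : Fintype.card F % 2 = 0) (hx : x ∈ involutions π.range) :
    2 * (MulAction.fixedBy Pt x).ncard = Fintype.card F := by
  have hcount := h.ncard_involutions_mul_ncard_fixedBy (h.odd_of_even hq) hx
  have hinv := h.ncard_involutions_add_one (two_eq_zero_iff_card_mod_two.2 hq)
  have hPt := h.two_mul_card_points
  have hn := h.n_eq_of_even hq
  obtain ⟨s, hs⟩ := Nat.exists_eq_add_of_lt (zero_lt_four.trans_le h.four_le)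
  rw [zero_add] at hs
  rw [hs, Nat.add_sub_cancel] at hPt
  rw [hs] at hinv hn ⊢
  have hinv' : (involutions π.range).ncard = s * n := by rw [hn]; linarith
  have hpos : 0 < s * n := by
    have := h.four_le
    have := h.three_le
    exact Nat.mul_pos (by omega) (by omega)
  refine Nat.eq_of_mul_eq_mul_left hpos ?_
  calc s * n * (2 * (MulAction.fixedBy Pt x).ncard)
      = 2 * ((involutions π.range).ncard * (MulAction.fixedBy Pt x).ncard) := by rw [hinv']; ring
    _ = 2 * Nat.card Pt * n := by rw [hcount, mul_assoc]
    _ = s * n * (s + 1) := by rw [hPt]; ring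

end IsPSL2Action

lemma IsFlagTransitiveDesign.card_group_eq (d : IsFlagTransitiveDesign G 𝓑 k lam r)
    (htrans : ∀ β : Pt, ∃ g : G, g • α = β) (hB : B ∈ 𝓑) (hα : α ∈ B) :
    Nat.card G = Nat.card Pt * (r * Nat.card (flagStabIn (⊤ : Subgroup G) α B)) := by
  have hpoints : MulAction.orbit (⊤ : Subgroup G) α = Set.univ := Set.eq_univ_of_forall fun β => by
    obtain ⟨g, hg⟩ := htrans β
    exact ⟨⟨g, trivial⟩, hg⟩
  have hblocks : MulAction.orbit (stabIn (⊤ : Subgroup G) α) B = {C ∈ 𝓑 | α ∈ C} := by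
    ext C
    constructor
    · rintro ⟨⟨g, -, hg⟩, rfl⟩
      refine ⟨d.actsOn g B hB, ?_⟩
      have hmem := Set.smul_mem_smul_set (a := g) hα
      rwa [show g • α = α from hg] at hmem
    · rintro ⟨hC, hαC⟩
      obtain ⟨g, hgB, hgα⟩ := d.flagTransitive B hB C hC α hα α hαC
      exact ⟨⟨g, trivial, hgα⟩, hgB⟩
  rw [← d.ncard_blocks_mem α, ← hblocks, card_orbit_mul_card_stabIn, ← Subgroup.card_top (G := G),
    ← card_orbit_mul_card_stabIn ⊤ α, hpoints, Set.ncard_univ]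

variable [Finite G] [Finite Pt]

section

variable [X.Normal]

namespace IsFlagTransitiveDesign

lemma rep_mul_ncard_involutions (d : IsFlagTransitiveDesign G 𝓑 k lam r)
    (h : IsDihedralAction X Pt n) (hn : Odd n) (hB : B ∈ 𝓑) (hα : α ∈ B)
    (hx : x ∈ involutions (stabIn X α)) :
    r * (involutions (flagStabIn X α B)).ncard = n * (fixedBlocks 𝓑 x α).ncard := by
  rw [← d.ncard_blocks_mem α, ← h.ncard_involutions_stabIn hn α]
  refine ncard_mul_eq_ncard_mul (fun C y => y • C = C) (Set.toFinite _) (Set.toFinite _) ?_ ?_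
  · rintro C ⟨hC, hαC⟩
    rw [ncard_involutions_flagStabIn_eq d.flagTransitive hB hC hα hαC]
    exact congrArg Set.ncard (Set.ext fun y => mem_involutions_stabIn.symm)
  · intro y hy
    rw [h.ncard_fixedBlocks_eq hn d.actsOn hx hy]
    simp only [fixedBlocks, Set.mem_ofPred_eq, and_assoc]

/-- The points of `B` are counted with the involutions of their stabilizers in `X_B`. -/
lemma dvd_mul_ncard_involutions (d : IsFlagTransitiveDesign G 𝓑 k lam r) (hB : B ∈ 𝓑) (hα : α ∈ B)
    {w : ℕ} (hw : ∀ β ∈ B, ∀ x ∈ involutions (flagStabIn X β B),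
      (MulAction.fixedBy Pt x ∩ B).ncard = w) :
    w ∣ k * (involutions (flagStabIn X α B)).ncard := by
  have hmem {x : G} {β : Pt} : x ∈ involutions (flagStabIn X β B) ↔
      x ∈ involutions (stabIn X B) ∧ x • β = β := by
    simp only [mem_involutions_stabIn, and_right_comm]
  refine Dvd.intro_left
    {x ∈ involutions (stabIn X B) | (MulAction.fixedBy Pt x ∩ B).Nonempty}.ncard (Eq.symm ?_)
  rw [← d.ncard_block hB]
  refine ncard_mul_eq_ncard_mul (fun β x => x • β = β) (Set.toFinite _) (Set.toFinite _) ?_ ?_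
  · intro β hβ
    rw [ncard_involutions_flagStabIn_eq d.flagTransitive hB hB hα hβ]
    refine congrArg Set.ncard (Set.ext fun x => ?_)
    rw [hmem]
    exact ⟨fun hx => ⟨hx.1.1, hx.2⟩, fun hx => ⟨⟨hx.1, β, hx.2, hβ⟩, hx.2⟩⟩
  · rintro x ⟨hx, β, hxβ, hβ⟩
    rw [← hw β hβ x (hmem.2 ⟨hx, hxβ⟩), Set.inter_comm]
    rfl

lemma card_dvd_ncard_blocks_mul (d : IsFlagTransitiveDesign G 𝓑 k lam r) (hB : B ∈ 𝓑) :
    Nat.card X ∣ 𝓑.ncard * Nat.card (stabIn X B) := by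
  have hne (C : Set Pt) (hC : C ∈ 𝓑) : C.Nonempty :=
    Set.nonempty_of_ncard_ne_zero (by have := d.ncard_block hC; have := d.two_lt; omega)
  refine card_dvd_ncard_mul (Set.toFinite 𝓑) (fun g _ C hC => d.actsOn g C hC) fun C hC => ?_
  obtain ⟨β, hβ⟩ := hne B hB
  obtain ⟨γ, hγ⟩ := hne C hC
  obtain ⟨g, rfl, -⟩ := d.flagTransitive B hB C hC β hβ γ hγ
  rw [← Subgroup.Normal.conj_smul_eq_self g X, ← conj_smul_stabIn,
    Subgroup.Normal.conj_smul_eq_self g X]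
  exact (Nat.card_congr (Subgroup.equivSMul (MulAut.conj g) (stabIn X B)).toEquiv).symm

end IsFlagTransitiveDesign

namespace IsDihedralAction

lemma mul_ncard_fixedBlocks_le (h : IsDihedralAction X Pt n) (hn : Odd n)
    (d : IsFlagTransitiveDesign G 𝓑 k lam r) (hB : B ∈ 𝓑) (hα : α ∈ B)
    (hx : x ∈ involutions (flagStabIn X α B)) :
    Nat.card X * (fixedBlocks 𝓑 x α).ncard ≤ Nat.card G := by
  have := Nonempty.intro α
  have hle : 2 * (involutions (flagStabIn X α B)).ncard ≤
      Nat.card (flagStabIn (⊤ : Subgroup G) α B) := by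
    rw [← h.card_eq_two_mul_ncard_involutions (K := flagStabIn X α B) hn inf_le_left
      ⟨x, hx⟩]
    exact Subgroup.card_le_of_le (inf_le_inf_right _ (inf_le_inf_right _ le_top))
  have hcount := d.rep_mul_ncard_involutions h hn hB hα (mem_involutions_stabIn.1 hx).1
  calc Nat.card X * (fixedBlocks 𝓑 x α).ncard
      = Nat.card Pt * (2 * (n * (fixedBlocks 𝓑 x α).ncard)) := by rw [← h.card_points_mul]; ring
    _ = Nat.card Pt * (r * (2 * (involutions (flagStabIn X α B)).ncard)) := by rw [← hcount]; ring
    _ ≤ Nat.card Pt * (r * Nat.card (flagStabIn (⊤ : Subgroup G) α B)) := by gcongr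
    _ = Nat.card G :=
      (d.card_group_eq (fun β => (h.transitive α β).imp fun _ => And.right) hB hα).symm

end IsDihedralAction

end

lemma IsPSL2Action.ncard_fixedBlocks_le (h : IsPSL2Action π Pt n) (hf : Fintype.card F = 2 ^ f)
    (h2 : (2 : F) = 0) (d : IsFlagTransitiveDesign G 𝓑 k lam r) (hB : B ∈ 𝓑) (hα : α ∈ B)
    (hx : x ∈ involutions (flagStabIn π.range α B)) : (fixedBlocks 𝓑 x α).ncard ≤ f := by
  have := h.normal
  exact Nat.le_of_mul_le_mul_left ((h.mul_ncard_fixedBlocks_le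
    (h.odd_of_even (two_eq_zero_iff_card_mod_two.1 h2)) d hB hα hx).trans (h.card_le hf h2))
      Nat.card_pos

end FieldAutomorphisms

section TwoSubgroups

variable {G Pt : Type*} [Group G] [MulAction G Pt] {X E : Subgroup G} {n : ℕ} {τ : G}

lemma smul_mem_of_le_stabIn {B : Set Pt} (hE : E ≤ stabIn X B) {g : G} (hg : g ∈ E) {β : Pt}
    (hβ : β ∈ B) : g • β ∈ B := by
  rw [← show g • B = B from (hE hg).2]
  exact Set.smul_mem_smul_set hβ

variable [Finite G]

lemma exists_ne_one_smul_eq_of_not_dvd {S : Set Pt} (hfin : S.Finite)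
    (hS : ∀ g ∈ E, ∀ y ∈ S, g • y ∈ S) (hdvd : ¬Nat.card E ∣ S.ncard) :
    ∃ y ∈ S, ∃ g ∈ E, g ≠ 1 ∧ g • y = y := by
  by_contra! hfree
  refine hdvd ?_
  rw [← mul_one S.ncard]
  refine card_dvd_ncard_mul hfin hS fun y hy => ?_
  rw [Subgroup.card_eq_one, Subgroup.eq_bot_iff_forall]
  exact fun g hg => by_contra fun hg1 => hfree y hy g hg.1 hg1 hg.2

namespace IsDihedralAction

lemma card_stabIn_eq_two (h : IsDihedralAction X Pt n) (hn : Odd n) (hE : E ≤ X)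
    (hp : IsPGroup 2 E) {β : Pt} (hτ : τ ∈ stabIn E β) (hτ1 : τ ≠ 1) :
    Nat.card (stabIn E β) = 2 := by
  have hcop : Nat.Coprime (Nat.card (stabIn E β)) n := by
    obtain ⟨j, hj⟩ : ∃ j, Nat.card (stabIn E β) = 2 ^ j := IsPGroup.iff_card.1 hp.to_inf_left
    rw [hj]
    exact (Nat.coprime_two_left.2 hn).pow_left j
  have hdvd : Nat.card (stabIn E β) ∣ 2 * n := by
    rw [← h.card_stabIn β]
    exact Subgroup.card_dvd_of_le (inf_le_inf_right _ hE)
  refine ((Nat.dvd_prime Nat.prime_two).1 (hcop.dvd_of_dvd_mul_right hdvd)).resolve_left ?_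
  rw [Subgroup.card_eq_one, Subgroup.eq_bot_iff_forall]
  exact fun hbot => hτ1 (hbot τ hτ)

lemma card_dvd_ncard_fixedBy_inter_mul_two (h : IsDihedralAction X Pt n) [Finite Pt] (hn : Odd n)
    {B : Set Pt} (hE : E ≤ stabIn X B) (hp : IsPGroup 2 E)
    (hcomm : ∀ a ∈ E, ∀ b ∈ E, Commute a b) (hτ : τ ∈ E) (hτ1 : τ ≠ 1) :
    Nat.card E ∣ (MulAction.fixedBy Pt τ ∩ B).ncard * 2 := by
  refine card_dvd_ncard_mul (Set.toFinite _) ?_ fun β hβ =>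
    h.card_stabIn_eq_two hn (hE.trans inf_le_left) hp ⟨hτ, hβ.1⟩ hτ1
  rintro g hg β ⟨hβ, hβB⟩
  refine ⟨?_, smul_mem_of_le_stabIn hE hg hβB⟩
  rw [MulAction.mem_fixedBy, smul_smul, hcomm τ hτ g hg, mul_smul, MulAction.mem_fixedBy.1 hβ]

end IsDihedralAction

namespace IsPSL2Action

variable {F : Type*} [Field F] [Fintype F] {π : SL(2, F) →* G}

lemma commute_of_isPGroup (h : IsPSL2Action π Pt n) (h2 : (2 : F) = 0) (hE : E ≤ π.range) {p : ℕ}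
    [Fact p.Prime] (hp : IsPGroup p E) {a b : G} (ha : a ∈ E) (hb : b ∈ E) : Commute a b := by
  obtain rfl | ha1 := eq_or_ne a 1
  · exact Commute.one_left b
  have : Nontrivial E := ⟨⟨a, ha⟩, 1, fun heq => ha1 (congrArg Subtype.val heq)⟩
  have := hp.center_nontrivial
  obtain ⟨⟨⟨z, hzE⟩, hz⟩, hz1⟩ := exists_ne (1 : Subgroup.center E)
  have hzcomm {g : G} (hg : g ∈ E) : Commute z g :=
    (congrArg Subtype.val (Subgroup.mem_center_iff.1 hz ⟨g, hg⟩)).symm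
  exact h.commute_trans (hE hzE) (hE ha) (hE hb)
    (.inl ⟨h2, fun heq => hz1 (Subtype.ext (Subtype.ext heq))⟩) (hzcomm ha) (hzcomm hb)

lemma two_pow_dvd (h : IsPSL2Action π Pt n) [Finite Pt] (hq : Fintype.card F % 2 = 0) {B : Set Pt}
    {w : ℕ} (hw : ∀ β ∈ B, ∀ x ∈ involutions (flagStabIn π.range β B),
      (MulAction.fixedBy Pt x ∩ B).ncard = w) {j : ℕ} (hB : ¬2 ^ (j + 1) ∣ B.ncard)
    (hdvd : 2 ^ (j + 1) ∣ Nat.card (stabIn π.range B)) : 2 ^ j ∣ w := by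
  have := Fact.mk Nat.prime_two
  obtain ⟨E₀, hE₀⟩ := Sylow.exists_subgroup_card_pow_prime 2 hdvd
  set E : Subgroup G := E₀.map (Subgroup.subtype _)
  have hcard : Nat.card E = 2 ^ (j + 1) := by
    rw [← hE₀]
    exact (Nat.card_congr (E₀.equivMapOfInjective _ (Subgroup.subtype_injective _)).toEquiv).symm
  have hE : E ≤ stabIn π.range B := Subgroup.map_subtype_le E₀
  have hEX : E ≤ π.range := hE.trans inf_le_left
  have hp : IsPGroup 2 E := IsPGroup.of_card hcard
  obtain ⟨β, hβ, τ, hτ, hτ1, hτβ⟩ := exists_ne_one_smul_eq_of_not_dvd (Set.toFinite B)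
    (fun g hg y hy => smul_mem_of_le_stabIn hE hg hy) (hcard ▸ hB)
  have hτsq : τ * τ = 1 := by
    rw [← pow_two, ← h.card_stabIn_eq_two (h.odd_of_even hq) hEX hp ⟨hτ, hτβ⟩ hτ1]
    exact congrArg Subtype.val (pow_card_eq_one' (x := (⟨τ, hτ, hτβ⟩ : stabIn E β)))
  have hdvd := h.card_dvd_ncard_fixedBy_inter_mul_two (h.odd_of_even hq) hE hp
    (fun a ha b hb => h.commute_of_isPGroup (two_eq_zero_iff_card_mod_two.2 hq) hEX hp ha hb)
    hτ hτ1
  rw [hcard, hw β hβ τ ⟨⟨⟨hEX hτ, hτβ⟩, (hE hτ).2⟩, hτsq, hτ1⟩, pow_succ] at hdvd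
  exact Nat.dvd_of_mul_dvd_mul_right two_pos hdvd

end IsPSL2Action

end TwoSubgroups

/-- The arithmetic restrictions on a `2-(v, k, 3)` design with replication number `r` for
`q = 2 ^ f`, when the stabilizer of a flag `(α, B)` contains `t > 0` involutions and each of them
fixes `c` of the blocks through `α`. The last field is `b * k = v * r`. -/
structure EvenParameters (f c t k r : ℕ) : Prop where
  two_le : 2 ≤ f
  pos : 0 < c
  le_exponent : c ≤ f
  odd : Odd t
  mul_pred_eq : c * (k - 1) = 3 * (2 ^ (f - 1) - 1) * t
  rep_mul_eq : r * t = (2 ^ f + 1) * c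
  three_dvd_rep : 3 ∣ r
  two_lt : 2 < k
  lt_rep : k < r
  dvd_mul_rep : k ∣ 2 ^ (f - 1) * (2 ^ f - 1) * r

namespace EvenParameters

variable {f c t k r : ℕ}

lemma two_pow_eq (h : EvenParameters f c t k r) : 2 ^ f = 2 * 2 ^ (f - 1) :=
  (mul_pow_sub_one (by have := h.two_le; omega) 2).symm

lemma odd_left (h : EvenParameters f c t k r) : Odd c := by
  have hpow : 2 ^ (f - 1) = 2 * 2 ^ (f - 2) := (mul_pow_sub_one (by have := h.two_le; omega) 2).symm
  have hpred : Odd (2 ^ (f - 1) - 1) :=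
    Nat.odd_iff.2 (by have := Nat.one_le_two_pow (n := f - 2); omega)
  have hmul : Odd (c * (k - 1)) := h.mul_pred_eq ▸ ((by decide : Odd 3).mul hpred).mul h.odd
  exact (Nat.odd_mul.1 hmul).1

lemma le_of_ne (h : EvenParameters f c t k r) (hct : c ≠ 3 * t) : t ≤ c := by
  obtain ⟨-, hc, hcf, hodd, hck, hrt, -, -, hkr, -⟩ := id h
  have hlt : 3 * (2 ^ (f - 1) - 1) * t ^ 2 < (2 ^ f + 1) * c ^ 2 := by
    calc 3 * (2 ^ (f - 1) - 1) * t ^ 2 = c * t * (k - 1) := by rw [mul_right_comm c, hck]; ring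
      _ < c * t * r := Nat.mul_lt_mul_of_pos_left (by omega) (Nat.mul_pos hc hodd.pos)
      _ = (2 ^ f + 1) * c ^ 2 := by linear_combination c * hrt
  by_contra! hcon
  obtain hf | hf := h.two_le.eq_or_lt
  · subst hf
    have hsq : (c + 1) ^ 2 ≤ t ^ 2 := Nat.pow_le_pow_left hcon 2
    interval_cases c <;> omega
  · have hpow : 2 ^ 2 ≤ 2 ^ (f - 1) := Nat.pow_le_pow_right two_pos (by omega)
    have hq : 2 ^ f + 1 ≤ 3 * (2 ^ (f - 1) - 1) := by rw [h.two_pow_eq]; omega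
    exact hlt.not_ge (Nat.mul_le_mul hq (Nat.pow_le_pow_left hcon.le 2))

/-- Eliminates `q` from `k ∣ v * r`, using `6 * t * 2 ^ (f - 1) = 6 * t - 2 * c + 2 * c * k`. -/
lemma dvd_cubic (h : EvenParameters f c t k r) :
    (k : ℤ) ∣ c * ((6 * t - 2 * c) * (3 * t - 2 * c) * (9 * t - 2 * c)) := by
  have hq := h.two_pow_eq
  obtain ⟨-, -, -, -, hck, hrt, -, hk, -, u, hu⟩ := h
  generalize 2 ^ f = q at *
  subst hq
  obtain ⟨N, hN⟩ : ∃ N, 2 ^ (f - 1) = N + 1 := Nat.exists_eq_succ_of_ne_zero (by positivity)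
  obtain ⟨s, rfl⟩ : ∃ s, k = s + 1 := Nat.exists_eq_succ_of_ne_zero (by omega)
  rw [hN, show 2 * (N + 1) - 1 = 2 * N + 1 by omega] at hu
  rw [hN, Nat.add_sub_cancel, Nat.add_sub_cancel] at hck
  rw [hN] at hrt
  zify at hu hck hrt
  have hmod : 6 * t - 2 * c ≡ 6 * t * (N + 1) [ZMOD ((s + 1 : ℕ) : ℤ)] :=
    Int.modEq_iff_dvd.2 ⟨2 * c, by push_cast; linear_combination -2 * hck⟩
  have hprod := ((hmod.mul (hmod.sub_right (3 * t))).mul (hmod.add_right (3 * t))).mul_left c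
  rw [← Int.modEq_zero_iff_dvd]
  convert hprod.trans (Int.modEq_zero_iff_dvd.2 ⟨54 * t ^ 4 * u, ?_⟩) using 1
  · ring
  · push_cast
    linear_combination 54 * (t : ℤ) ^ 4 * hu -
      54 * (t : ℤ) ^ 3 * (N + 1) * (2 * N + 1) * hrt

lemma block_size_le (h : EvenParameters f c t k r) (hct : c ≠ 3 * t) : k ≤ 56 * c ^ 4 := by
  have htc := h.le_of_ne hct
  have ht := h.odd.pos
  have hodd := h.odd
  have hne : (c : ℤ) * ((6 * t - 2 * c) * (3 * t - 2 * c) * (9 * t - 2 * c)) ≠ 0 := by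
    have := h.pos
    obtain ⟨s, rfl⟩ := hodd
    refine mul_ne_zero ?_ (mul_ne_zero (mul_ne_zero ?_ ?_) ?_) <;> omega
  have hle := Int.le_of_dvd (abs_pos.2 hne) ((dvd_abs _ _).2 h.dvd_cubic)
  have h₁ : |(6 * t - 2 * c : ℤ)| ≤ 4 * c := abs_le.2 (by omega)
  have h₂ : |(3 * t - 2 * c : ℤ)| ≤ 2 * c := abs_le.2 (by omega)
  have h₃ : |(9 * t - 2 * c : ℤ)| ≤ 7 * c := abs_le.2 (by omega)
  zify
  calc (k : ℤ) ≤ |(c * ((6 * t - 2 * c) * (3 * t - 2 * c) * (9 * t - 2 * c)) : ℤ)| := hle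
    _ = c * (|(6 * t - 2 * c : ℤ)| * |(3 * t - 2 * c : ℤ)| * |(9 * t - 2 * c : ℤ)|) := by
      rw [abs_mul, abs_mul, abs_mul, Nat.abs_cast]
    _ ≤ c * (4 * c * (2 * c) * (7 * c)) := by gcongr
    _ = 56 * c ^ 4 := by ring

end EvenParameters

lemma fifth_power_lt_two_pow {f : ℕ} (hf : 30 ≤ f) : 56 * f ^ 5 + 3 ≤ 3 * 2 ^ (f - 1) := by
  induction f, hf using Nat.le_induction with
  | base => norm_num
  | succ m hm ih =>
    have hgrowth : (30 * (m + 1)) ^ 5 ≤ (31 * m) ^ 5 := Nat.pow_le_pow_left (by omega) 5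
    rw [mul_pow, mul_pow] at hgrowth
    norm_num only at hgrowth
    have hdouble : 2 ^ m = 2 * 2 ^ (m - 1) := (mul_pow_sub_one (by omega) 2).symm
    have := Nat.pow_le_pow_left hm 5
    rw [Nat.add_sub_cancel, hdouble]
    omega

namespace EvenParameters

variable {f c t k r : ℕ}

lemma exponent_lt (h : EvenParameters f c t k r) (hct : c ≠ 3 * t) : f < 30 := by
  by_contra! hf
  have hpow := fifth_power_lt_two_pow hf
  have hle : 3 * (2 ^ (f - 1) - 1) ≤ c * (k - 1) :=
    h.mul_pred_eq ▸ Nat.le_mul_of_pos_right _ h.odd.pos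
  have hlt : c * (k - 1) < c * k :=
    Nat.mul_lt_mul_of_pos_left (by have := h.two_lt; omega) h.pos
  have hck : c * k ≤ 56 * f ^ 5 :=
    calc c * k ≤ f * (56 * f ^ 4) := Nat.mul_le_mul h.le_exponent
          ((h.block_size_le hct).trans (by gcongr; exact h.le_exponent))
      _ = 56 * f ^ 5 := by ring
  omega

lemma eq_five_or_eq_seven_of_dvd : ∀ f ∈ Finset.Ico 2 30, ∀ c ∈ Finset.Icc 1 f,
    ∀ t ∈ Finset.Icc 1 c, c ≠ 3 * t → c ∣ 3 * (2 ^ (f - 1) - 1) * t → 3 ∣ (2 ^ f + 1) * c / t →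
    3 * (2 ^ (f - 1) - 1) * t / c + 1 ∣ 2 ^ (f - 1) * (2 ^ f - 1) * ((2 ^ f + 1) * c / t) →
    f = 5 ∧ c = 5 ∧ t = 1 ∨ f = 7 ∧ c = 7 ∧ t = 1 := by
  decide +kernel

lemma eq_five_or_eq_seven (h : EvenParameters f c t k r) (hct : c ≠ 3 * t) :
    f = 5 ∧ c = 5 ∧ t = 1 ∧ k = 10 ∨ f = 7 ∧ c = 7 ∧ t = 1 ∧ k = 28 := by
  have hf := h.exponent_lt hct
  have htc := h.le_of_ne hct
  obtain ⟨hf2, hc, hcf, hodd, hck, hrt, h3, hk, -, hdvd⟩ := h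
  have hk' : k = 3 * (2 ^ (f - 1) - 1) * t / c + 1 := by
    rw [← hck, Nat.mul_div_cancel_left _ hc]
    omega
  have hr' : r = (2 ^ f + 1) * c / t := by rw [← hrt, Nat.mul_div_cancel _ hodd.pos]
  rw [hk', hr'] at hdvd
  obtain ⟨rfl, rfl, rfl⟩ | ⟨rfl, rfl, rfl⟩ := eq_five_or_eq_seven_of_dvd f
    (Finset.mem_Ico.2 ⟨hf2, hf⟩) c (Finset.mem_Icc.2 ⟨hc, hcf⟩) t
    (Finset.mem_Icc.2 ⟨hodd.pos, htc⟩) hct (hck ▸ Dvd.intro _ rfl) (hr' ▸ h3) hdvd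
  · exact .inl ⟨rfl, rfl, rfl, hk'⟩
  · exact .inr ⟨rfl, rfl, rfl, hk'⟩

lemma eq_two_pow (h : EvenParameters f (3 * t) t k r) : k = 2 ^ (f - 1) := by
  obtain ⟨-, hc, -, -, hck, -, -, hk, -, -⟩ := h
  have hpred : k - 1 = 2 ^ (f - 1) - 1 :=
    Nat.eq_of_mul_eq_mul_left hc (by linear_combination hck)
  have := Nat.one_le_two_pow (n := f - 1)
  omega

/-- Here `w` is the number of points of `B` fixed by an involution of the stabilizer of `(α, B)`.
In each remaining case the divisibilities force `w = k`. -/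
lemma false_of_fixed_points (h : EvenParameters f c t k r) {w : ℕ}
    (hle : 2 ^ (f - 1) - 1 ≤ c * (w - 1)) (hw : w ≤ 2 ^ (f - 1)) (hdvd : w ∣ k * t)
    (htwo : ∀ j, 2 ^ j ∣ k → ¬2 ^ (j + 1) ∣ k → 2 ^ j ∣ w)
    (hone : w = k → k = 2 ^ (f - 1) → c ≤ 1)
    (hfisher : c * (w - 1) = 3 * (2 ^ (f - 1) - 1) → w < 2 ^ (f - 1) → w ≤ c) : False := by
  by_cases hct : c = 3 * t
  · subst hct
    have hk := h.eq_two_pow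
    have hodd := h.odd.pos
    have hwpos : 0 < w := Nat.pos_of_ne_zero fun h0 => by
      have := h.two_lt
      rw [h0] at hle
      omega
    have hkw : k ∣ w := hk ▸ htwo (f - 1) hk.symm.dvd fun hdvd => by
      have := Nat.le_of_dvd (by have := h.two_lt; omega) hdvd
      rw [hk, pow_succ] at this
      omega
    have := hone (le_antisymm (hk ▸ hw) (Nat.le_of_dvd hwpos hkw)) hk
    omega
  · obtain ⟨rfl, rfl, rfl, rfl⟩ | ⟨rfl, rfl, rfl, rfl⟩ := h.eq_five_or_eq_seven hct
    · have h2w : 2 ∣ w := htwo 1 (by norm_num) (by norm_num)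
      have hw10 : w ≤ 10 := Nat.le_of_dvd (by norm_num) hdvd
      obtain rfl : w = 10 := by interval_cases w <;> omega
      have := hfisher (by norm_num) (by norm_num)
      omega
    · have h4w : 4 ∣ w := htwo 2 (by norm_num) (by norm_num)
      have hw28 : w ≤ 28 := Nat.le_of_dvd (by norm_num) hdvd
      obtain rfl : w = 28 := by interval_cases w <;> omega
      have := hfisher (by norm_num) (by norm_num)
      omega

end EvenParameters

section Parameters

variable {F G Pt : Type*} [Field F] [Fintype F] [Group G] [MulAction G Pt] {π : SL(2, F) →* G}
  {n f : ℕ}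

namespace IsPSL2Action

lemma card_mod_two_of_eq_two_pow (h : IsPSL2Action π Pt n) (hf : Fintype.card F = 2 ^ f) :
    Fintype.card F % 2 = 0 := by
  have hq4 := h.four_le
  obtain rfl | hf0 := Nat.eq_zero_or_pos f
  · rw [hf, pow_zero] at hq4
    omega
  · rw [hf]
    exact Nat.mod_eq_zero_of_dvd (dvd_pow_self 2 hf0.ne')

lemma two_mul_two_pow_pred (h : IsPSL2Action π Pt n) (hf : Fintype.card F = 2 ^ f) :
    2 * 2 ^ (f - 1) = Fintype.card F := by
  rw [hf, mul_pow_sub_one]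
  rintro rfl
  have := h.four_le
  omega

variable [Nonempty Pt]

lemma card_points_eq (h : IsPSL2Action π Pt n) (hf : Fintype.card F = 2 ^ f) :
    Nat.card Pt = 2 ^ (f - 1) * (2 ^ f - 1) := by
  refine Nat.eq_of_mul_eq_mul_left two_pos ?_
  rw [h.two_mul_card_points, ← mul_assoc, h.two_mul_two_pow_pred hf, ← hf]

variable [Finite Pt]

lemma card_points_sub_one (h : IsPSL2Action π Pt n) (hf : Fintype.card F = 2 ^ f) :
    Nat.card Pt - 1 = n * (2 ^ (f - 1) - 1) := by
  obtain ⟨N, hN⟩ : ∃ N, 2 ^ (f - 1) = N + 1 := Nat.exists_eq_succ_of_ne_zero (by positivity)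
  have hq := h.two_mul_two_pow_pred hf
  have hPt := h.card_points_eq hf
  rw [← hf, ← hq, hN, show 2 * (N + 1) - 1 = 2 * N + 1 by omega] at hPt
  rw [Nat.sub_eq_iff_eq_add Nat.card_pos, h.n_eq_of_even (h.card_mod_two_of_eq_two_pow hf), ← hq,
    hN, hPt, Nat.add_sub_cancel]
  ring

lemma ncard_fixedBy_eq_two_pow (h : IsPSL2Action π Pt n) (hf : Fintype.card F = 2 ^ f) {x : G}
    (hx : x ∈ involutions π.range) : (MulAction.fixedBy Pt x).ncard = 2 ^ (f - 1) := by
  refine Nat.eq_of_mul_eq_mul_left two_pos ?_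
  rw [h.two_mul_ncard_fixedBy (h.card_mod_two_of_eq_two_pow hf) hx, h.two_mul_two_pow_pred hf]

end IsPSL2Action
end Parameters

lemma exists_card_eq_two_pow {F : Type*} [Field F] [Fintype F] (h2 : (2 : F) = 0) :
    ∃ f, Fintype.card F = 2 ^ f := by
  have := CharTwo.of_one_ne_zero_of_two_eq_zero (one_ne_zero (α := F)) h2
  obtain ⟨f, -, hf⟩ := FiniteField.card F 2
  exact ⟨f, hf⟩

section EvenOrder

variable {F G Pt : Type*} [Field F] [Fintype F] [Group G] [MulAction G Pt]
  {π : SL(2, F) →* G} {X : Subgroup G} {𝓑 : Set (Set Pt)} {n k lam r f : ℕ} {α : Pt} {B : Set Pt}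
  {x : G}

lemma mem_involutions_flagStabIn :
    x ∈ involutions (flagStabIn X α B) ↔ x ∈ involutions X ∧ x • α = α ∧ x • B = B := by
  rw [mem_involutions_stabIn, mem_involutions_stabIn, and_assoc]

lemma IsDihedralAction.odd_ncard_involutions_flagStabIn [Finite G]
    (h : IsDihedralAction X Pt n) (hn : Odd n)
    (hne : (involutions (flagStabIn X α B)).Nonempty) :
    Odd (involutions (flagStabIn X α B)).ncard := by
  refine hn.of_dvd_nat (Nat.dvd_of_mul_dvd_mul_left two_pos ?_)
  rw [← h.card_eq_two_mul_ncard_involutions (K := flagStabIn X α B) hn inf_le_left hne,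
    ← h.card_stabIn α]
  exact Subgroup.card_dvd_of_le inf_le_left

variable [Finite Pt]

lemma IsPSL2Action.exists_involution_flagStabIn (h : IsPSL2Action π Pt n)
    (d : IsFlagTransitiveDesign G 𝓑 k lam r) (hlam : Odd lam) (hq : Fintype.card F % 2 = 0)
    (α : Pt) : ∃ B ∈ 𝓑, α ∈ B ∧ (involutions (flagStabIn π.range α B)).Nonempty := by
  have := Nonempty.intro α
  have hinv : (involutions (stabIn π.range α)).Nonempty := Set.nonempty_of_ncard_ne_zero <| by
    have := h.three_le
    rw [h.ncard_involutions_stabIn (h.odd_of_even hq)]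
    omega
  obtain ⟨x, hx⟩ := hinv
  obtain ⟨hxX, hxα⟩ := mem_involutions_stabIn.1 hx
  have hfix := h.two_mul_ncard_fixedBy hq hxX
  have hq4 := h.four_le
  obtain ⟨β, hβ, hne⟩ := Set.exists_ne_of_one_lt_ncard (s := MulAction.fixedBy Pt x) (by omega) α
  obtain ⟨B, hB, hαB, -, hxB⟩ := d.exists_fixed_block_of_odd hlam hxX.2.1 hne.symm hxα hβ
  exact ⟨B, hB, hαB, x, mem_involutions_stabIn.2 ⟨hx, hxB⟩⟩

variable [Finite G]

namespace IsDihedralAction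

lemma two_mul_dvd_mul_card_stabIn [X.Normal] (h : IsDihedralAction X Pt n) (hn : Odd n)
    (d : IsFlagTransitiveDesign G 𝓑 k lam r) (hB : B ∈ 𝓑) (hα : α ∈ B)
    (hx : x ∈ involutions (flagStabIn X α B)) :
    2 * (k * (involutions (flagStabIn X α B)).ncard) ∣
      (fixedBlocks 𝓑 x α).ncard * Nat.card (stabIn X B) := by
  have := Nonempty.intro α
  obtain ⟨u, hu⟩ := d.card_dvd_ncard_blocks_mul (X := X) hB
  have hcount := d.rep_mul_ncard_involutions h hn hB hα (mem_involutions_stabIn.1 hx).1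
  have hpos : 0 < Nat.card Pt * n := Nat.mul_pos Nat.card_pos (by have := h.three_le; omega)
  set t := (involutions (flagStabIn X α B)).ncard
  set c := (fixedBlocks 𝓑 x α).ncard
  refine ⟨u, Nat.eq_of_mul_eq_mul_left hpos ?_⟩
  calc Nat.card Pt * n * (c * Nat.card (stabIn X B))
      = Nat.card Pt * (n * c) * Nat.card (stabIn X B) := by ring
    _ = Nat.card Pt * r * t * Nat.card (stabIn X B) := by rw [← hcount, mul_assoc _ r]
    _ = 𝓑.ncard * Nat.card (stabIn X B) * (k * t) := by rw [← d.ncard_blocks_mul]; ring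
    _ = Nat.card Pt * n * (2 * (k * t) * u) := by rw [hu, ← h.card_points_mul]; ring

end IsDihedralAction

namespace IsPSL2Action

lemma mul_pred_eq (h : IsPSL2Action π Pt n) (d : IsFlagTransitiveDesign G 𝓑 k lam r)
    (hf : Fintype.card F = 2 ^ f) (hB : B ∈ 𝓑) (hα : α ∈ B)
    (hx : x ∈ involutions (flagStabIn π.range α B)) :
    (fixedBlocks 𝓑 x α).ncard * (k - 1) =
      lam * (2 ^ (f - 1) - 1) * (involutions (flagStabIn π.range α B)).ncard := by
  have := h.normal
  have := Nonempty.intro α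
  have hcount := d.rep_mul_ncard_involutions h.toIsDihedralAction
    (h.odd_of_even (h.card_mod_two_of_eq_two_pow hf)) hB hα (mem_involutions_stabIn.1 hx).1
  refine Nat.eq_of_mul_eq_mul_left (zero_lt_three.trans_le h.three_le) ?_
  rw [← mul_assoc, ← hcount, mul_right_comm, d.rep_mul_pred, h.card_points_sub_one hf]
  ring

lemma evenParameters (h : IsPSL2Action π Pt n) (d : IsFlagTransitiveDesign G 𝓑 k 3 (3 * r))
    (hf : Fintype.card F = 2 ^ f) (hB : B ∈ 𝓑) (hα : α ∈ B)
    (hx : x ∈ involutions (flagStabIn π.range α B)) :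
    EvenParameters f (fixedBlocks 𝓑 x α).ncard (involutions (flagStabIn π.range α B)).ncard k
      (3 * r) where
  two_le := (Nat.pow_le_pow_iff_right (le_refl 2)).1 (hf ▸ h.four_le)
  pos := (Set.ncard_pos (Set.toFinite _)).2 ⟨B, hB, hα, hx.1.2⟩
  le_exponent := h.ncard_fixedBlocks_le hf
    (two_eq_zero_iff_card_mod_two.2 (h.card_mod_two_of_eq_two_pow hf)) d hB hα hx
  odd := h.odd_ncard_involutions_flagStabIn (h.odd_of_even (h.card_mod_two_of_eq_two_pow hf))
    ⟨x, hx⟩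
  mul_pred_eq := h.mul_pred_eq d hf hB hα hx
  rep_mul_eq := by
    have := h.normal
    have hq := h.card_mod_two_of_eq_two_pow hf
    rw [d.rep_mul_ncard_involutions h.toIsDihedralAction (h.odd_of_even hq) hB hα
      (mem_involutions_stabIn.1 hx).1, h.n_eq_of_even hq, hf]
  three_dvd_rep := Nat.dvd_mul_right 3 r
  two_lt := d.two_lt
  lt_rep := by
    have := Nonempty.intro α
    exact d.block_size_lt_rep
  dvd_mul_rep := by
    have := Nonempty.intro α
    rw [← h.card_points_eq hf, ← d.ncard_blocks_mul]
    exact Nat.dvd_mul_left _ _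

lemma two_pow_dvd_card_stabIn (h : IsPSL2Action π Pt n) (d : IsFlagTransitiveDesign G 𝓑 k 3 (3 * r))
    (hf : Fintype.card F = 2 ^ f) (hB : B ∈ 𝓑) (hα : α ∈ B)
    (hx : x ∈ involutions (flagStabIn π.range α B)) {j : ℕ} (hj : 2 ^ j ∣ k) :
    2 ^ (j + 1) ∣ Nat.card (stabIn π.range B) := by
  have := h.normal
  have hodd := (h.evenParameters d hf hB hα hx).odd_left
  refine ((Nat.coprime_two_left.2 hodd).pow_left (j + 1)).dvd_of_dvd_mul_left ?_
  refine Dvd.dvd.trans ?_ (h.two_mul_dvd_mul_card_stabIn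
    (h.odd_of_even (h.card_mod_two_of_eq_two_pow hf)) d hB hα hx)
  rw [pow_succ']
  exact mul_dvd_mul_left 2 (hj.mul_right _)

lemma false_of_even [Nonempty Pt] (h : IsPSL2Action π Pt n)
    (d : IsFlagTransitiveDesign G 𝓑 k 3 (3 * r)) (hq : Fintype.card F % 2 = 0) : False := by
  have := h.normal
  have hn := h.odd_of_even hq
  obtain ⟨f, hf⟩ := exists_card_eq_two_pow (two_eq_zero_iff_card_mod_two.2 hq)
  obtain ⟨α⟩ := ‹Nonempty Pt›
  obtain ⟨B, hB, hα, x, hx⟩ := h.exists_involution_flagStabIn d (by decide) hq α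
  obtain ⟨hxX, hxα, -⟩ := mem_involutions_flagStabIn.1 hx
  have hpar := h.evenParameters d hf hB hα hx
  have hfix := h.ncard_fixedBy_eq_two_pow hf hxX
  have hw {β : Pt} {C : Set Pt} {y : G} (hC : C ∈ 𝓑) (hβ : β ∈ C)
      (hy : y ∈ involutions (flagStabIn π.range β C)) :
      (MulAction.fixedBy Pt y ∩ C).ncard = (MulAction.fixedBy Pt x ∩ B).ncard :=
    h.ncard_fixedBy_inter_eq hn d.flagTransitive hC hB hβ hα hy hx
  have hwx (β : Pt) (hβ : x • β = β) (C : Set Pt) (hC : C ∈ fixedBlocks 𝓑 x β) :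
      (MulAction.fixedBy Pt x ∩ C).ncard = (MulAction.fixedBy Pt x ∩ B).ncard :=
    hw hC.1 hC.2.1 (mem_involutions_flagStabIn.2 ⟨hxX, hβ, hC.2.2⟩)
  refine hpar.false_of_fixed_points (w := (MulAction.fixedBy Pt x ∩ B).ncard) ?_ ?_ ?_ ?_ ?_ ?_
  · rw [← hfix]
    exact d.ncard_fixedBy_sub_one_le (by decide) hxX.2.1 hxα (hwx α hxα)
  · rw [← hfix]
    exact Set.ncard_le_ncard Set.inter_subset_left (Set.toFinite _)
  · exact d.dvd_mul_ncard_involutions hB hα fun β hβ y hy => hw hB hβ hy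
  · intro j hjk hjk'
    refine h.two_pow_dvd hq (fun β hβ y hy => hw hB hβ hy) (d.ncard_block hB ▸ hjk')
      (h.two_pow_dvd_card_stabIn d hf hB hα hx hjk)
  · intro hwk hk
    exact d.ncard_fixedBlocks_le_one (fun C hC => (hwx α hxα C hC).trans hwk) (hfix.trans hk.symm)
  · rw [← hfix]
    refine d.le_ncard_fixedBlocks (fun β hβ => ?_) hwx
    exact h.ncard_fixedBlocks_eq hn d.actsOn (mem_involutions_stabIn.2 ⟨hxX, hβ⟩)
      (mem_involutions_stabIn.2 ⟨hxX, hxα⟩)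

end IsPSL2Action

end EvenOrder

/-! ### Almost simple groups with dihedral point stabilizers -/

lemma mem_center_SL2_iff {F : Type*} [Field F] {A : SL(2, F)} :
    A ∈ Subgroup.center SL(2, F) ↔ A = 1 ∨ A = -1 := by
  constructor
  · intro h
    obtain ⟨a, ha, hA⟩ := Matrix.SpecialLinearGroup.mem_center_iff.1 h
    rw [Fintype.card_fin, sq_eq_one_iff] at ha
    obtain rfl | rfl := ha
    · exact .inl (Subtype.ext (hA.symm.trans (map_one _)))
    · exact .inr (Subtype.ext (hA.symm.trans (by rw [map_neg, map_one]; rfl)))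
  · rintro (rfl | rfl)
    · exact one_mem _
    · exact Subgroup.mem_center_iff.2 fun B => by rw [mul_neg, neg_mul, mul_one, one_mul]

section Stabilizers

variable {G Pt : Type*} [Group G] [MulAction G Pt] {X : Subgroup G} {n : ℕ}

lemma stabIn_eq_map_stabilizer (β : Pt) :
    stabIn X β = (MulAction.stabilizer X β).map X.subtype := by
  ext g
  refine ⟨fun hg => ⟨⟨g, hg.1⟩, hg.2, rfl⟩, ?_⟩
  rintro ⟨x, hx, rfl⟩
  exact ⟨x.2, hx⟩

lemma stabIn_covBy_of_isCoatom {β : Pt} (hβ : IsCoatom (MulAction.stabilizer X β)) :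
    stabIn X β ⋖ X := by
  rw [stabIn_eq_map_stabilizer]
  let e : Subgroup X ≃o Set.Iic X := Subgroup.MapSubtype.orderIso X
  exact Set.Iic.isCoatom_iff.1 ((e.isCoatom_iff _).2 hβ)

lemma eq_bot_or_eq_of_isSimpleGroup [IsSimpleGroup X] {H : Subgroup G} (hH : H ≤ X)
    (hX : X ≤ Subgroup.normalizer (H : Set G)) : H = ⊥ ∨ H = X := by
  have hnormal : (H.subgroupOf X).Normal := (Subgroup.normal_subgroupOf_iff_le_normalizer hH).2 hX
  refine hnormal.eq_bot_or_eq_top.imp (fun h => ?_) fun h => ?_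
  · rwa [Subgroup.subgroupOf_eq_bot, disjoint_iff, inf_eq_left.2 hH] at h
  · exact hH.antisymm (Subgroup.subgroupOf_eq_top.1 h)

lemma isDihedralAction_of_isCoatom [IsSimpleGroup X] [MulAction.IsPretransitive X Pt]
    (hn : 3 ≤ n) {α : Pt} (hα : IsCoatom (MulAction.stabilizer X α))
    (e : MulAction.stabilizer X α ≃* DihedralGroup n) : IsDihedralAction X Pt n where
  three_le := hn
  transitive β γ := by
    obtain ⟨x, hx⟩ := MulAction.exists_smul_eq X β γ
    exact ⟨x, x.2, hx⟩
  dihedral β := by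
    obtain ⟨x, hx⟩ := MulAction.exists_smul_eq X α β
    let e' := (MulAction.stabilizerEquivStabilizer hx.symm).symm.trans e
    refine ⟨X.subtype.comp ((MulAction.stabilizer X β).subtype.comp e'.symm.toMonoidHom),
      X.subtype_injective.comp ((Subgroup.subtype_injective _).comp e'.symm.injective), ?_⟩
    rw [stabIn_eq_map_stabilizer, MonoidHom.range_comp, MonoidHom.range_comp,
      (MonoidHom.range_eq_top (f := e'.symm.toMonoidHom)).2 e'.symm.surjective,
      ← MonoidHom.range_eq_map, Subgroup.range_subtype]
  covBy β := by
    obtain ⟨x, rfl⟩ := MulAction.exists_smul_eq X α β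
    refine stabIn_covBy_of_isCoatom ?_
    rw [MulAction.stabilizer_smul_eq_stabilizer_map_conj]
    exact ((MulAut.conj x).mapSubgroup.isCoatom_iff _).2 hα
  simple _ hH hX := eq_bot_or_eq_of_isSimpleGroup hH hX

end Stabilizers

section Projection

variable {F : Type*} [Field F] {G Pt : Type*} [Group G] [MulAction G Pt] {X : Subgroup G}

/-- The homomorphism `SL(2, F) → G` with image `X` that comes from an isomorphism
`X ≃* PSL(2, F)`. -/
def projection (φ : X ≃* PSL2 F) : SL(2, F) →* G :=
  X.subtype.comp (φ.symm.toMonoidHom.comp (QuotientGroup.mk' (Subgroup.center SL(2, F))))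

lemma range_projection (φ : X ≃* PSL2 F) : (projection φ).range = X := by
  rw [projection, MonoidHom.range_comp, MonoidHom.range_eq_top.2
    (φ.symm.surjective.comp (QuotientGroup.mk'_surjective _)), ← MonoidHom.range_eq_map,
    Subgroup.range_subtype]

lemma projection_eq_iff (φ : X ≃* PSL2 F) {A B : SL(2, F)} :
    projection φ A = projection φ B ↔ A = B ∨ A = -B := by
  have hcenter : projection φ A = projection φ B ↔ A⁻¹ * B ∈ Subgroup.center SL(2, F) := by
    rw [← QuotientGroup.eq]
    exact (X.subtype_injective.comp φ.symm.injective).eq_iff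
  rw [hcenter, mem_center_SL2_iff, inv_mul_eq_iff_eq_mul, inv_mul_eq_iff_eq_mul, mul_one, mul_neg,
    mul_one, eq_comm, eq_comm (a := B), neg_eq_iff_eq_neg]

lemma isPSL2Action_projection [Fintype F] [MulAction.IsPretransitive X Pt]
    (hq : 4 ≤ Fintype.card F) (hX : X.Normal) (φ : X ≃* PSL2 F)
    (hcent : Subgroup.centralizer (X : Set G) = ⊥) {α : Pt}
    (hα : IsCoatom (MulAction.stabilizer X α))
    (e : MulAction.stabilizer X α ≃*
      DihedralGroup ((Fintype.card F + 1) / Nat.gcd 2 (Fintype.card F - 1))) :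
    IsPSL2Action (projection φ) Pt ((Fintype.card F + 1) / Nat.gcd 2 (Fintype.card F - 1)) := by
  have : IsSimpleGroup (PSL2 F) :=
    Matrix.ProjectiveSpecialLinearGroup.rank_two_simple (by rwa [Nat.card_eq_fintype_card])
  have : IsSimpleGroup X := φ.isSimpleGroup
  have hn : 3 ≤ (Fintype.card F + 1) / Nat.gcd 2 (Fintype.card F - 1) := by
    rw [Nat.le_div_iff_mul_le (Nat.gcd_pos_of_pos_left _ two_pos)]
    have hgcd_two := Nat.le_of_dvd two_pos (Nat.gcd_dvd_left 2 (Fintype.card F - 1))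
    obtain hq4 | hq5 := hq.eq_or_lt
    · simp [← hq4]
    · omega
  exact { toIsDihedralAction := by
            rw [range_projection]; exact isDihedralAction_of_isCoatom hn hα e
          four_le := hq
          n_eq := rfl
          eq_iff := fun _ _ => projection_eq_iff φ
          normal := by rwa [range_projection]
          centralizer_eq_bot := by rwa [range_projection] }

end Projection

end PSL2Design

/-- In the setting of a non-trivial, non-symmetric flag-transitive,
point-primitive `2-(v,k,3)` design with `3 ∣ r`, almost simple automorphism group `G` with
socle `X ≅ PSL(2,q)` acting point-primitively with maximal point stabilizer `X_α`:
the stabilizer `X_α` is not a dihedral group of order `2(q+1)/gcd(2,q−1)` (the normalizer of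
a maximal nonsplit torus); that is, the case `v = q(q−1)/2` does not occur.
(Recall `DihedralGroup n` has order `2n`.) -/
theorem stmt_16
    (q : ℕ) (hq4 : 4 ≤ q)
    (F : Type) [Field F] [Fintype F] (hF : Fintype.card F = q)
    {Pt : Type*} [Fintype Pt] {G : Type*} [Group G] [MulAction G Pt] [FaithfulSMul G Pt]
    -- `D = (Pt, 𝓑)` is a non-trivial, non-symmetric `2-(v,k,3)` design …
    (𝓑 : Set (Set Pt)) (v k : ℕ) (hv : Nat.card Pt = v)
    (hD : IsDesign 𝓑 k 3) (hnt : 2 < k ∧ k < v - 1)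
    (hnonsym : Nat.card 𝓑 ≠ v)
    -- … whose replication number `r` is divisible by 3, …
    (r : ℕ) (hr : ∀ x : Pt, repNum 𝓑 x = r) (h3r : 3 ∣ r)
    -- … admitting the flag-transitive, point-primitive automorphism group `G`, …
    (hacts : ActsOn G 𝓑) (hflag : FlagTransitive G 𝓑)
    (hprim : PointPrimitive G Pt)
    -- … where `G` is almost simple with socle `X ≅ PSL(2,q)` (so `PSL(2,q) ⊴ G ≤ PΓL(2,q)`):
    (X : Subgroup G) (hXnormal : X.Normal)
    (hXiso : Nonempty (X ≃* PSL2 F))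
    (hXcent : Subgroup.centralizer (X : Set G) = ⊥)
    -- `X` acts point-primitively on `D`, with maximal point stabilizer `X_α`:
    (hXprim : PointPrimitive X Pt)
    (α : Pt) (hmax : IsCoatom (MulAction.stabilizer X α))
    :
    IsEmpty ((MulAction.stabilizer X α) ≃*
      DihedralGroup ((q + 1) / Nat.gcd 2 (q - 1))) := by
  refine ⟨fun e => ?_⟩
  obtain ⟨φ⟩ := hXiso
  obtain ⟨r', rfl⟩ := h3r
  subst hF
  have : MulAction.IsPretransitive X Pt := hXprim.1
  have : Finite G := .of_injective (MulAction.toPermHom G Pt) MulAction.toPerm_injective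
  have : Nonempty Pt := ⟨α⟩
  have h := PSL2Design.isPSL2Action_projection hq4 hXnormal φ hXcent hmax e
  have d : PSL2Design.IsFlagTransitiveDesign G 𝓑 k 3 (3 * r') :=
    { hD with
      repNum_eq := hr
      actsOn := hacts
      flagTransitive := hflag
      two_lt := hnt.1
      lt_card := by omega
      ncard_ne := hv ▸ hnonsym
      lam_pos := three_pos }
  have hcases : Fintype.card F % 2 = 0 ∨ Fintype.card F % 4 = 1 ∨ Fintype.card F % 4 = 3 := by omega
  obtain hq | hq | hq := hcases
  · exact h.false_of_even d hq
  · exact h.false_of_one_mod_four d hq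
  · exact h.false_of_three_mod_four d hq
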